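/- arXiv:2211.15602 — 3 statements merged into one kernel-verified Lean document; each statement's English description precedes it below -/
import Mathlib

section
/- Let G be a simple digraph (no self-loops, no multi-edges) on n ≥ 4 vertices in which every vertex has indegree 2 and outdegree 2, and suppose G contains no subgraph isomorphic to H_1 and no subgraph isomorphic to H_2. Then G has at most n edges that are not in-contractible. Moreover, G has exactly n edges that are not in-contractible if and only if every connected component of G is isomorphic to G_m for some m ≥ 4. -/
open scoped Classical
open Finset

/-- Number of directed cycles in a finite directed multigraph on `Fin n`
specified by the edge-multiplicity function `G`: self-loops are cycles of
length 1, cycles of length `≥ 2` correspond to cyclic permutations, parallel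
edges give distinct cycles, and cycles are counted up to cyclic rotation. -/
noncomputable def cycleCount (n : ℕ) (G : Fin n → Fin n → ℕ) : ℕ :=
  (∑ v, G v v) +
  ∑ σ : Equiv.Perm (Fin n), if σ.IsCycle then ∏ v ∈ σ.support, G v (σ v) else 0

/-- Number of path-cycle subgraphs of a finite directed multigraph with
multiplicity function `G`: a path-cycle subgraph is given by a nonempty
vertex set `s` together with a successor map `f` on `s` (extended by the
identity off `s`) whose functional digraph on `s` is weakly connected and
has at most one source (vertex of indegree zero); parallel edges give
distinct path-cycles. -/
noncomputable def pathCycleCount {V : Type*} [Fintype V] [DecidableEq V]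
    (G : V → V → ℕ) : ℕ :=
  ∑ s : Finset V, ∑ f : V → V,
    if s.Nonempty ∧ (∀ v, v ∉ s → f v = v) ∧ (∀ v ∈ s, f v ∈ s) ∧
        (∀ u ∈ s, ∀ v ∈ s,
          Relation.ReflTransGen (fun a b => (a ∈ s ∧ f a = b) ∨ (b ∈ s ∧ f b = a)) u v) ∧
        (s.filter fun v => ∀ u ∈ s, f u ≠ v).card ≤ 1
    then ∏ v ∈ s, G v (f v) else 0

/-- `α(k) = (k - 1 + √((k-1)² + 4)) / 2`. -/
noncomputable def alphaK (k : ℕ) : ℝ :=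
  ((k : ℝ) - 1 + Real.sqrt (((k : ℝ) - 1) ^ 2 + 4)) / 2

/-- Multiplicity function of the digraph `G_{n,k}`: on vertices `Fin n`,
edges `(i, i+1 mod n)` have multiplicity `k - 1` and edges `(i, i+2 mod n)`
have multiplicity `1`. -/
def GnkMult (n k : ℕ) : Fin n → Fin n → ℕ := fun i j =>
  if (j.val + n - i.val) % n = 1 then k - 1
  else if (j.val + n - i.val) % n = 2 then 1
  else 0

/-- Multiplicity function of the digraph `G'_{n,k}`: on vertices `Fin n`,
edges `(i, i+1 mod n)` have multiplicity `1` and edges `(i, i+2 mod n)`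
have multiplicity `k - 1`. -/
def Gnk'Mult (n k : ℕ) : Fin n → Fin n → ℕ := fun i j =>
  if (j.val + n - i.val) % n = 1 then 1
  else if (j.val + n - i.val) % n = 2 then k - 1
  else 0

/-- Edge relation of the simple digraph `G_m`: `(i, j)` is an edge whenever
`j - i ≡ 1 (mod m)` or `j - i ≡ 2 (mod m)`. -/
def GmRel (m : ℕ) : Fin m → Fin m → Prop := fun i j =>
  (j.val + m - i.val) % m = 1 ∨ (j.val + m - i.val) % m = 2

/-- The sequence `S_m` with `S_0 = 1`, `S_1 = k - 1`,
`S_m = (k-1) S_{m-1} + S_{m-2}`. -/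
def Sseq (k : ℕ) : ℕ → ℕ
  | 0 => 1
  | 1 => k - 1
  | (m + 2) => (k - 1) * Sseq k (m + 1) + Sseq k m

/-- `F_k(n)`: the maximum number of directed cycles over all digraphs on `n`
vertices with every outdegree exactly `k` in which every multi-edge between
distinct vertices has multiplicity at most `k - 1`. -/
noncomputable def Fk (k n : ℕ) : ℕ :=
  sSup {c : ℕ | ∃ G : Fin n → Fin n → ℕ,
    (∀ v, (∑ u, G v u) = k) ∧ (∀ u v : Fin n, u ≠ v → G u v ≤ k - 1) ∧
    c = cycleCount n G}

/-- Weak connectivity (same connected component) in a directed multigraph. -/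
def MConn {n : ℕ} (G : Fin n → Fin n → ℕ) : Fin n → Fin n → Prop :=
  Relation.ReflTransGen (fun a b => 0 < G a b ∨ 0 < G b a)

/-- A deterministic Markov decision problem with state space `S`, action
space `A` (all actions available at every state), deterministic transition
function `T`, reward function `R` and discount factor `gamma ∈ [0, 1)`. -/
structure DMDP (S A : Type*) where
  T : S → A → S
  R : S → A → ℝ
  gamma : ℝ
  gamma_nonneg : 0 ≤ gamma
  gamma_lt_one : gamma < 1

namespace DMDP

variable {S A : Type*}

/-- The trajectory of states obtained by following policy `π` from `s`. -/
def traj (M : DMDP S A) (π : S → A) (s : S) (t : ℕ) : S :=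
  (fun x => M.T x (π x))^[t] s

/-- The value function `V^π(s) = Σ_t γ^t R(s_t, π(s_t))`. -/
noncomputable def V (M : DMDP S A) (π : S → A) (s : S) : ℝ :=
  ∑' t : ℕ, M.gamma ^ t * M.R (M.traj π s t) (π (M.traj π s t))

/-- The action value function `Q^π(s, a) = R(s, a) + γ V^π(T(s, a))`. -/
noncomputable def Q (M : DMDP S A) (π : S → A) (s : S) (a : A) : ℝ :=
  M.R s a + M.gamma * M.V π (M.T s a)

/-- `π ≺ π'`: pointwise `V^π ≤ V^{π'}` with strict inequality somewhere. -/
def PLt (M : DMDP S A) (π π' : S → A) : Prop :=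
  (∀ s, M.V π s ≤ M.V π' s) ∧ ∃ s, M.V π s < M.V π' s

/-- `π'` is obtained from `π` by policy improvement with arbitrary action
selection. -/
def ImpStep (M : DMDP S A) (π π' : S → A) : Prop :=
  π' ≠ π ∧ ∀ s, π' s ≠ π s → M.V π s < M.Q π s (π' s)

/-- `π'` is obtained from `π` by policy improvement with max-gain action
selection. -/
def MaxGainStep (M : DMDP S A) (π π' : S → A) : Prop :=
  π' ≠ π ∧ ∀ s, π' s ≠ π s →
    M.V π s < M.Q π s (π' s) ∧
    ∀ a, M.V π s < M.Q π s a → M.Q π s a ≤ M.Q π s (π' s)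

/-- The first time step at which a previously visited state recurs on the
trajectory of `π` from `s`. -/
noncomputable def pcLen (M : DMDP S A) (π : S → A) (s : S) : ℕ :=
  sInf {t : ℕ | ∃ t' < t, M.traj π s t' = M.traj π s t}

/-- The path-cycle `P^π_s`: the sequence of state–action–state triples
`(s_t, π(s_t), s_{t+1})` for `t` up to (but excluding) the first recurrence
of a previously visited state. -/
noncomputable def pathCycle (M : DMDP S A) (π : S → A) (s : S) : List (S × A × S) :=
  (List.range (M.pcLen π s)).map fun t =>
    (M.traj π s t, π (M.traj π s t), M.traj π s (t + 1))

/-- The multiplicity function of the DMDP digraph `G_M`: one edge from `s`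
to `T(s, a)` for every action `a`. -/
noncomputable def digraph (M : DMDP S A) [Fintype A] : S → S → ℕ :=
  fun s s' => (Finset.univ.filter fun a => M.T s a = s').card

/-- A state is non-branching if all actions lead to the same next state. -/
def NonBranching (M : DMDP S A) (s : S) : Prop := ∃ s', ∀ a, M.T s a = s'

/-- The relation `∼` on path-cycles: same sequence of states, and wherever
the actions differ the state is non-branching. -/
def PCSim (M : DMDP S A) (P₁ P₂ : List (S × A × S)) : Prop :=
  P₁.length = P₂.length ∧
  ∀ (t : ℕ) (h₁ : t < P₁.length) (h₂ : t < P₂.length),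
    (P₁.get ⟨t, h₁⟩).1 = (P₂.get ⟨t, h₂⟩).1 ∧
    (P₁.get ⟨t, h₁⟩).2.2 = (P₂.get ⟨t, h₂⟩).2.2 ∧
    ((P₁.get ⟨t, h₁⟩).2.1 ≠ (P₂.get ⟨t, h₂⟩).2.1 → M.NonBranching (P₁.get ⟨t, h₁⟩).1)

/-- The relation `≈` on path-cycles: they differ only in equivalent edges,
i.e. have the same sequences of source and target states. -/
def PCApprox (_M : DMDP S A) (P₁ P₂ : List (S × A × S)) : Prop :=
  P₁.length = P₂.length ∧
  ∀ (t : ℕ) (h₁ : t < P₁.length) (h₂ : t < P₂.length),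
    (P₁.get ⟨t, h₁⟩).1 = (P₂.get ⟨t, h₂⟩).1 ∧
    (P₁.get ⟨t, h₁⟩).2.2 = (P₂.get ⟨t, h₂⟩).2.2

end DMDP

/-!
Call a vertex an apex if its two out-neighbours are joined by an edge. An edge that is not
in-contractible is the base of a transitive triangle with such an apex. Indegree and outdegree at
most two, together with `H₂`-freeness, make the passage from base to apex a bijection, whence the
bound.

In the case of equality every vertex `x` is an apex, with out-neighbours `f x → g x`, and counting
edges shows that all indegrees equal two. The in-neighbours of `g x` are `x` and `f x`, so `g` can
fail to be injective only at a pair `x ⇄ y` with a common out-neighbour `b`. But the second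
in-neighbour `u` of `x` is an apex, and the edge joining its out-neighbours would have to end or
start at `x`, which forces `u → y` (a copy of `H₂`) or a third in-neighbour of `b`. Since `g x` is
an out-neighbour of `f x`, injectivity of `g` leaves only `g x = f (f x)`. So `f` is a permutation,
and each of its cycles, of length `m`, spans a component isomorphic to `G_m`.
-/

section SquaredCycle

variable {V : Type*} {E : V → V → Prop}

/-- The transitive triangle with apex `x` and base `a → b`. -/
structure TransTriangle (E : V → V → Prop) (x a b : V) : Prop where
  left : E x a
  right : E x b
  base : E a b

/-- `x` is the apex of a transitive triangle. -/
def IsApex (E : V → V → Prop) (x : V) : Prop :=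
  ∃ a b, TransTriangle E x a b

/-- The edges of `E` that are not in-contractible: their endpoints have a common in-neighbour
distinct from both. -/
noncomputable def nonInContractibleEdges [Fintype V] (E : V → V → Prop) : Finset (V × V) :=
  {p | E p.1 p.2 ∧ ∃ x, x ≠ p.1 ∧ x ≠ p.2 ∧ E x p.1 ∧ E x p.2}

/-- The vertices of the connected component of `v`, edge directions being ignored. -/
abbrev WeakComponent (E : V → V → Prop) (v : V) : Type _ :=
  {u : V // Relation.ReflTransGen (fun a b => E a b ∨ E b a) v u}

theorem iff_eq_or_eq_of_card_filter_le_two [Fintype V] {p : V → Prop} (hp : #{u | p u} ≤ 2)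
    {a b : V} (ha : p a) (hb : p b) (hab : a ≠ b) (u : V) : p u ↔ u = a ∨ u = b := by
  have hpair : {a, b} = univ.filter p := by
    apply eq_of_subset_of_card_le
    · simp [insert_subset_iff, ha, hb]
    · rwa [card_pair hab]
  simpa using (Finset.ext_iff.1 hpair u).symm

theorem card_filter_in_eq_of_le_card_filter_out [Fintype V] {k : ℕ}
    (hout : ∀ v, k ≤ #{u | E v u}) (hin : ∀ v, #{u | E u v} ≤ k) (v : V) :
    #{u | E u v} = k := by
  have hsum : ∑ v, #{u | E v u} = ∑ v, #{u | E u v} :=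
    sum_card_bipartiteAbove_eq_sum_card_bipartiteBelow E
  have hsum_in : ∑ v, #{u | E u v} = ∑ _v : V, k :=
    (sum_le_sum fun v _ => hin v).antisymm (hsum ▸ sum_le_sum fun v _ => hout v)
  exact (sum_eq_sum_iff_of_le fun v _ => hin v).1 hsum_in v (mem_univ v)

namespace TransTriangle

variable [Std.Irrefl E] {x y a b c d : V}

theorem out_iff [Fintype V] (hout : ∀ v, #{u | E v u} ≤ 2) (t : TransTriangle E x a b) (u : V) :
    E x u ↔ u = a ∨ u = b :=
  iff_eq_or_eq_of_card_filter_le_two (hout x) t.left t.right (ne_of_irrefl t.base) u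

theorem in_iff [Fintype V] (hin : ∀ v, #{u | E u v} ≤ 2) (t : TransTriangle E x a b) (u : V) :
    E u b ↔ u = x ∨ u = a :=
  iff_eq_or_eq_of_card_filter_le_two (p := (E · b)) (hin b) t.right t.base (ne_of_irrefl t.left) u

theorem not_base_reverse
    (hH2 : ¬ ∃ a b c, a ≠ b ∧ a ≠ c ∧ b ≠ c ∧ E a b ∧ E a c ∧ E b c ∧ E c b)
    (t : TransTriangle E x a b) : ¬ E b a := fun hba =>
  hH2 ⟨x, a, b, ne_of_irrefl t.left, ne_of_irrefl t.right, ne_of_irrefl t.base,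
    t.left, t.right, t.base, hba⟩

theorem base_unique [Fintype V] (hout : ∀ v, #{u | E v u} ≤ 2)
    (hH2 : ∀ x a b, TransTriangle E x a b → ¬ E b a)
    (t : TransTriangle E x a b) (t' : TransTriangle E x c d) : a = c ∧ b = d := by
  have hab : a ≠ b := ne_of_irrefl t.base
  rcases (t'.out_iff hout a).1 t.left with rfl | rfl <;>
    rcases (t'.out_iff hout b).1 t.right with rfl | rfl
  · exact absurd rfl hab
  · exact ⟨rfl, rfl⟩
  · exact absurd t.base (hH2 _ _ _ t')
  · exact absurd rfl hab

theorem apex_unique [Fintype V] (hin : ∀ v, #{u | E u v} ≤ 2)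
    (t : TransTriangle E x a b) (t' : TransTriangle E y a b) : x = y :=
  ((t'.in_iff hin x).1 t.right).resolve_right (ne_of_irrefl t.left)

end TransTriangle

section Counting

variable [Fintype V] [Std.Irrefl E]

theorem mem_nonInContractibleEdges_iff {p : V × V} :
    p ∈ nonInContractibleEdges E ↔ ∃ x, TransTriangle E x p.1 p.2 := by
  simp only [nonInContractibleEdges, mem_filter_univ]
  exact ⟨fun ⟨hp, x, _, _, h1, h2⟩ => ⟨x, h1, h2, hp⟩,
    fun ⟨x, t⟩ => ⟨t.base, x, ne_of_irrefl t.left, ne_of_irrefl t.right, t.left, t.right⟩⟩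

theorem card_nonInContractibleEdges_eq_card_isApex (hout : ∀ v, #{u | E v u} ≤ 2)
    (hin : ∀ v, #{u | E u v} ≤ 2) (hH2 : ∀ x a b, TransTriangle E x a b → ¬ E b a) :
    #(nonInContractibleEdges E) = #{x | IsApex E x} := by
  let r : V → V × V → Prop := fun x p => TransTriangle E x p.1 p.2
  refine le_antisymm (card_le_card_of_forall_subsingleton' r ?_ ?_)
    (card_le_card_of_forall_subsingleton r ?_ ?_)
  · intro p hp
    obtain ⟨x, t⟩ := mem_nonInContractibleEdges_iff.1 hp
    exact ⟨x, (mem_filter_univ x).2 ⟨p.1, p.2, t⟩, t⟩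
  · exact fun x _ p hp q hq => Prod.ext_iff.2 (hp.2.base_unique hout hH2 hq.2)
  · intro x hx
    obtain ⟨a, b, t⟩ := (mem_filter_univ x).1 hx
    exact ⟨(a, b), mem_nonInContractibleEdges_iff.2 ⟨x, t⟩, t⟩
  · exact fun p _ x hx y hy => hx.2.apex_unique hin hy.2

theorem card_filter_in_eq_two_of_forall_isApex (hin : ∀ v, #{u | E u v} ≤ 2)
    (hapex : ∀ x, IsApex E x) (v : V) : #{u | E u v} = 2 := by
  refine card_filter_in_eq_of_le_card_filter_out (fun x => ?_) hin v
  obtain ⟨a, b, t⟩ := hapex x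
  exact one_lt_card.2 ⟨a, by simpa using t.left, b, by simpa using t.right, ne_of_irrefl t.base⟩

theorem exists_ne_in_neighbor_of_forall_isApex (hin : ∀ v, #{u | E u v} ≤ 2)
    (hapex : ∀ x, IsApex E x) (x y : V) : ∃ u, u ≠ y ∧ E u x := by
  have hcard : 1 < #{u | E u x} := by
    rw [card_filter_in_eq_two_of_forall_isApex hin hapex x]
    exact one_lt_two
  obtain ⟨u, hu, huy⟩ := exists_mem_ne hcard y
  exact ⟨u, huy, (mem_filter_univ u).1 hu⟩

theorem TransTriangle.not_swap (hout : ∀ v, #{u | E v u} ≤ 2) (hin : ∀ v, #{u | E u v} ≤ 2)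
    (hH2 : ∀ x a b, TransTriangle E x a b → ¬ E b a) (hapex : ∀ x, IsApex E x)
    {x y b : V} (t : TransTriangle E x y b) : ¬ TransTriangle E y x b := by
  intro t'
  obtain ⟨u, huy, hux⟩ := exists_ne_in_neighbor_of_forall_isApex hin hapex x y
  have hux_ne : u ≠ x := ne_of_irrefl hux
  have hu_to_y : ¬ E u y := fun h => hH2 u x y ⟨hux, h, t.left⟩ t'.left
  have hu_to_b : ¬ E u b := fun h => ((t.in_iff hin u).1 h).elim hux_ne huy
  have hin_x : ∀ w, E w x ↔ w = y ∨ w = u :=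
    iff_eq_or_eq_of_card_filter_le_two (p := (E · x)) (hin x) t'.left hux huy.symm
  obtain ⟨c, d, s⟩ := hapex u
  rcases (s.out_iff hout x).1 hux with rfl | rfl
  · rcases (t.out_iff hout d).1 s.base with rfl | rfl
    exacts [hu_to_y s.right, hu_to_b s.right]
  · rcases (hin_x c).1 s.base with rfl | rfl
    exacts [hu_to_y s.left, irrefl c s.left]

theorem TransTriangle.eq_of_eq_right (hout : ∀ v, #{u | E v u} ≤ 2)
    (hin : ∀ v, #{u | E u v} ≤ 2) (hH2 : ∀ x a b, TransTriangle E x a b → ¬ E b a)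
    (hapex : ∀ x, IsApex E x) {x y a c b : V} (t : TransTriangle E x a b)
    (t' : TransTriangle E y c b) : x = y := by
  rcases (t'.in_iff hin x).1 t.right with rfl | rfl
  · rfl
  rcases (t.in_iff hin y).1 t'.right with rfl | rfl
  · rfl
  exact absurd t' (t.not_swap hout hin hH2 hapex)

theorem exists_perm_of_forall_isApex (hout : ∀ v, #{u | E v u} ≤ 2)
    (hin : ∀ v, #{u | E u v} ≤ 2) (hH2 : ∀ x a b, TransTriangle E x a b → ¬ E b a)
    (hapex : ∀ x, IsApex E x) :
    ∃ σ : Equiv.Perm V, ∀ u v, E u v ↔ v = σ u ∨ v = σ (σ u) := by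
  choose f g t using hapex
  have hg : Function.Injective g := fun x y hxy =>
    (t x).eq_of_eq_right hout hin hH2 (fun z => ⟨f z, g z, t z⟩) (hxy ▸ t y)
  have hgf : ∀ x, g x = f (f x) := fun x =>
    (((t (f x)).out_iff hout (g x)).1 (t x).base).resolve_right fun h =>
      ne_of_irrefl (t x).left (hg h)
  have hf : Function.Injective f := fun x y hxy => hg (by rw [hgf, hgf, hxy])
  refine ⟨Equiv.ofBijective f (Finite.injective_iff_bijective.1 hf), fun u v => ?_⟩
  rw [(t u).out_iff hout v, hgf]
  rfl

end Counting

section Components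

variable {σ : Equiv.Perm V}

theorem reflTransGen_iff_sameCycle [Finite V] (hE : ∀ u v, E u v ↔ v = σ u ∨ v = σ (σ u))
    {v u : V} : Relation.ReflTransGen (fun a b => E a b ∨ E b a) v u ↔ σ.SameCycle v u := by
  have sameCycle_of_edge : ∀ {a b}, E a b → σ.SameCycle a b := fun {a b} hab => by
    rcases (hE a b).1 hab with rfl | rfl <;> simp [Equiv.Perm.SameCycle.refl]
  constructor
  · intro h
    induction h with
    | refl => exact .refl σ v
    | tail _ hbc ih =>
      exact ih.trans (hbc.elim sameCycle_of_edge fun hcb => (sameCycle_of_edge hcb).symm)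
  · intro h
    obtain ⟨k, rfl⟩ := h.exists_nat_pow_eq
    clear h
    induction k with
    | zero => exact .refl
    | succ k ih =>
      refine ih.tail (.inl ((hE _ _).2 (.inl ?_)))
      rw [pow_succ', Equiv.Perm.mul_apply]

theorem exists_sameCycle_equiv_fin [Finite V] (σ : Equiv.Perm V) (v : V) :
    ∃ e : {u // σ.SameCycle v u} ≃ Fin (Function.minimalPeriod σ v), ∀ u w (k : ℕ),
      w.1 = (σ ^ k) u.1 ↔ (e w).val = ((e u).val + k) % Function.minimalPeriod σ v := by
  set m := Function.minimalPeriod σ v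
  have hpos : 0 < m :=
    Function.minimalPeriod_pos_of_mem_periodicPts (σ.injective.mem_periodicPts v)
  have hmod : ∀ k, (σ ^ (k % m)) v = (σ ^ k) v := fun k => by
    simpa only [Equiv.Perm.coe_pow] using Function.iterate_mod_minimalPeriod_eq
  have hinj : ∀ {i j}, i < m → j < m → ((σ ^ i) v = (σ ^ j) v ↔ i = j) := fun hi hj => by
    simpa only [Equiv.Perm.coe_pow] using Function.iterate_eq_iterate_iff_of_lt_minimalPeriod hi hj
  let orbit : Fin m → {u // σ.SameCycle v u} := fun i =>
    ⟨(σ ^ i.val) v, Equiv.Perm.sameCycle_pow_right.2 (.refl σ v)⟩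
  have horbit : orbit.Bijective := by
    refine ⟨fun i j hij => Fin.ext ((hinj i.2 j.2).1 (congrArg Subtype.val hij)), ?_⟩
    rintro ⟨u, hu⟩
    obtain ⟨k, rfl⟩ := hu.exists_nat_pow_eq
    exact ⟨⟨k % m, Nat.mod_lt k hpos⟩, Subtype.ext (hmod k)⟩
  refine ⟨(Equiv.ofBijective orbit horbit).symm, fun u w k => ?_⟩
  obtain ⟨i, rfl⟩ := horbit.2 u
  obtain ⟨j, rfl⟩ := horbit.2 w
  rw [Equiv.ofBijective_symm_apply_apply, Equiv.ofBijective_symm_apply_apply,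
    ← hinj j.2 (Nat.mod_lt _ hpos), hmod, add_comm, pow_add, Equiv.Perm.mul_apply]

theorem add_sub_mod_eq_iff {m k : ℕ} (hk : k < m) (i j : Fin m) :
    (j.val + m - i.val) % m = k ↔ j.val = (i.val + k) % m := by
  have hcancel : j.val + m - i.val + i.val = j.val + m := by omega
  calc (j.val + m - i.val) % m = k
      ↔ j.val + m - i.val ≡ k [MOD m] := by rw [Nat.ModEq, Nat.mod_eq_of_lt hk]
    _ ↔ j.val + m - i.val + i.val ≡ k + i.val [MOD m] := ⟨.add_right _, .add_right_cancel' _⟩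
    _ ↔ j.val = (i.val + k) % m := by
      rw [hcancel, Nat.ModEq, Nat.add_mod_right, Nat.mod_eq_of_lt j.2, add_comm k]

theorem gmRel_iff {m : ℕ} (hm : 3 ≤ m) (i j : Fin m) :
    GmRel m i j ↔ j.val = (i.val + 1) % m ∨ j.val = (i.val + 2) % m :=
  or_congr (add_sub_mod_eq_iff (by omega) i j) (add_sub_mod_eq_iff (by omega) i j)

theorem four_le_minimalPeriod [Finite V] [Std.Irrefl E]
    (hH2 : ∀ x a b, TransTriangle E x a b → ¬ E b a)
    (hE : ∀ u v, E u v ↔ v = σ u ∨ v = σ (σ u)) (v : V) : 4 ≤ Function.minimalPeriod σ v := by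
  have hE1 : ∀ u, E u (σ u) := fun u => (hE _ _).2 (.inl rfl)
  have hE2 : ∀ u, E u (σ (σ u)) := fun u => (hE _ _).2 (.inr rfl)
  have hpos : 0 < Function.minimalPeriod σ v :=
    Function.minimalPeriod_pos_of_mem_periodicPts (σ.injective.mem_periodicPts v)
  have hper : σ^[Function.minimalPeriod σ v] v = v := Function.iterate_minimalPeriod
  by_contra! hlt
  interval_cases Function.minimalPeriod σ v
  · exact ne_of_irrefl' (hE1 v) hper
  · exact ne_of_irrefl' (hE2 v) hper
  · have hback : E (σ (σ v)) (σ v) := (hE _ _).2 (.inr (congrArg σ hper.symm))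
    exact hH2 v (σ v) (σ (σ v)) ⟨hE1 v, hE2 v, hE1 (σ v)⟩ hback

theorem exists_weakComponent_equiv_gmRel [Finite V] [Std.Irrefl E]
    (hH2 : ∀ x a b, TransTriangle E x a b → ¬ E b a)
    (hE : ∀ u v, E u v ↔ v = σ u ∨ v = σ (σ u)) (v : V) :
    ∃ m, 4 ≤ m ∧ ∃ e : WeakComponent E v ≃ Fin m, ∀ u w, E u.1 w.1 ↔ GmRel m (e u) (e w) := by
  have hm := four_le_minimalPeriod hH2 hE v
  obtain ⟨e, he⟩ := exists_sameCycle_equiv_fin σ v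
  refine ⟨_, hm, (Equiv.subtypeEquivRight fun u => reflTransGen_iff_sameCycle hE).trans e,
    fun u w => ?_⟩
  rw [gmRel_iff (by omega), hE]
  exact or_congr (he ⟨u.1, _⟩ ⟨w.1, _⟩ 1) (he ⟨u.1, _⟩ ⟨w.1, _⟩ 2)

theorem isApex_of_weakComponent_equiv_gmRel {v : V} {m : ℕ} (hm : 3 ≤ m)
    (e : WeakComponent E v ≃ Fin m) (he : ∀ u w, E u.1 w.1 ↔ GmRel m (e u) (e w)) : IsApex E v := by
  let i := e ⟨v, .refl⟩
  let a := e.symm ⟨(i.val + 1) % m, Nat.mod_lt _ (by omega)⟩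
  let b := e.symm ⟨(i.val + 2) % m, Nat.mod_lt _ (by omega)⟩
  refine ⟨a, b, (he ⟨v, .refl⟩ a).2 ?_, (he ⟨v, .refl⟩ b).2 ?_, (he a b).2 ?_⟩ <;>
    simp [gmRel_iff hm, a, b, i, add_assoc]

end Components

theorem stmt_3_general [Fintype V] (E : V → V → Prop) (hloop : ∀ v, ¬ E v v)
    (hout : ∀ v, #{u | E v u} ≤ 2) (hin : ∀ v, #{u | E u v} ≤ 2)
    (hH2 : ¬ ∃ a b c, a ≠ b ∧ a ≠ c ∧ b ≠ c ∧ E a b ∧ E a c ∧ E b c ∧ E c b) :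
    #(nonInContractibleEdges E) ≤ Fintype.card V ∧
    (#(nonInContractibleEdges E) = Fintype.card V ↔
      ∀ v, ∃ m, 4 ≤ m ∧ ∃ e : WeakComponent E v ≃ Fin m,
        ∀ u w, E u.1 w.1 ↔ GmRel m (e u) (e w)) := by
  have : Std.Irrefl E := ⟨hloop⟩
  have hH2' : ∀ x a b, TransTriangle E x a b → ¬ E b a := fun _ _ _ t => t.not_base_reverse hH2
  rw [card_nonInContractibleEdges_eq_card_isApex hout hin hH2']
  refine ⟨card_le_univ _, fun hcard => ?_, fun hcomp => ?_⟩
  · have hapex : ∀ x, IsApex E x := fun x => card_filter_eq_iff.1 hcard x (mem_univ x)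
    obtain ⟨σ, hσ⟩ := exists_perm_of_forall_isApex hout hin hH2' hapex
    exact exists_weakComponent_equiv_gmRel hH2' hσ
  · refine card_filter_eq_iff.2 fun v _ => ?_
    obtain ⟨m, hm, e, he⟩ := hcomp v
    exact isApex_of_weakComponent_equiv_gmRel (by omega) e he

end SquaredCycle

theorem stmt_3 (n : ℕ) (hn : 4 ≤ n) (E : Fin n → Fin n → Prop)
    (hloop : ∀ v, ¬ E v v)
    (hout : ∀ v : Fin n, (Finset.univ.filter fun u => E v u).card = 2)
    (hin : ∀ v : Fin n, (Finset.univ.filter fun u => E u v).card = 2)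
    (hH1 : ¬ ∃ a b c : Fin n, a ≠ b ∧ a ≠ c ∧ b ≠ c ∧
      E b a ∧ E c a ∧ E b c ∧ E c b)
    (hH2 : ¬ ∃ a b c : Fin n, a ≠ b ∧ a ≠ c ∧ b ≠ c ∧
      E a b ∧ E a c ∧ E b c ∧ E c b) :
    (Finset.univ.filter fun p : Fin n × Fin n =>
        E p.1 p.2 ∧ ∃ x, x ≠ p.1 ∧ x ≠ p.2 ∧ E x p.1 ∧ E x p.2).card ≤ n ∧
    ((Finset.univ.filter fun p : Fin n × Fin n =>
        E p.1 p.2 ∧ ∃ x, x ≠ p.1 ∧ x ≠ p.2 ∧ E x p.1 ∧ E x p.2).card = n ↔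
      ∀ v : Fin n, ∃ m, 4 ≤ m ∧
        ∃ e : {u : Fin n // Relation.ReflTransGen (fun a b => E a b ∨ E b a) v u} ≃ Fin m,
          ∀ u w : {u : Fin n // Relation.ReflTransGen (fun a b => E a b ∨ E b a) v u},
            E u.1 w.1 ↔ GmRel m (e u) (e w)) := by
  convert stmt_3_general E hloop (fun v => (hout v).le) (fun v => (hin v).le) hH2 <;>
    simp [nonInContractibleEdges]
end

section
/- Let k ≥ 2 and let G be a digraph with n ≥ 4 vertices each of whose connected components is isomorphic to G_{m,k} or to G'_{m,k} for some m ≥ 4. Then C(G) ≤ (k−1)·F_k(n−1) + F_k(n−2). -/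
open scoped Classical
open Finset

/-!
A cycle of the circulant multigraph with `a`-fold steps `+1` and `b`-fold steps `+2` is either a
single tour around the circle, given by the set of visited vertices, or the rotation by two, which
is a cycle exactly when the number `n` of vertices is odd. Counting tours by a transfer matrix gives
exactly `L n + [n odd] * b ^ n` cycles, where `L = lucasSeq a b`.

With `(a, b)` equal to `(k - 1, 1)` or `(1, k - 1)` this is at most `L m + 1` on `m` vertices, where
from now on `L = lucasSeq (k - 1) 1`. Since `L + 1` is superadditive on `m ≥ 2`, a digraph with
such components has at most `L n + 1` cycles. On the other hand `F_k(n) ≥ L n + [n odd]`. Exactly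
one of `n - 1` and `n - 2` is odd, so the recursion for `L` leaves at least `1` to spare in
`L n ≤ (k - 1) * F_k(n - 1) + F_k(n - 2)`.
-/

section NumCycles

lemma isCycle_permCongr_iff {V W : Type*} (e : V ≃ W) {σ : Equiv.Perm V} :
    (e.permCongr σ).IsCycle ↔ σ.IsCycle := by
  have hzpow (i : ℤ) : e.permCongr σ ^ i = e.permCongr (σ ^ i) :=
    (map_zpow e.permCongrHom σ i).symm
  simp only [Equiv.Perm.IsCycle, Equiv.Perm.SameCycle, hzpow, Equiv.permCongr_apply,
    e.exists_congr_left, e.forall_congr_left, ne_eq, ← Equiv.eq_symm_apply]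

lemma isCycle_ofSubtype_iff {V : Type*} {p : V → Prop} [DecidablePred p]
    {τ : Equiv.Perm (Subtype p)} : (Equiv.Perm.ofSubtype τ).IsCycle ↔ τ.IsCycle := by
  refine ⟨fun ⟨x, hx, hxy⟩ => ?_, fun h => h.extendDomain (Equiv.refl _)⟩
  have hp : p x := not_imp_comm.1 (Equiv.Perm.ofSubtype_apply_of_not_mem τ) hx
  lift x to Subtype p using hp
  have hcoe (y : Subtype p) : Equiv.Perm.ofSubtype τ y ≠ y ↔ τ y ≠ y := by
    rw [Equiv.Perm.ofSubtype_apply_coe, Ne, Subtype.coe_inj]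
  exact ⟨x, (hcoe x).1 hx, fun y hy =>
    Equiv.Perm.sameCycle_extendDomain (f := Equiv.refl _).1 (hxy ((hcoe y).2 hy))⟩

variable {V W : Type*} [Fintype V] [DecidableEq V] [Fintype W] [DecidableEq W]

/-- The number of ways to realise the nontrivial cycles of the permutation `σ` by edges of the
multigraph with multiplicity function `G`. -/
def permWeight (G : V → V → ℕ) (σ : Equiv.Perm V) : ℕ :=
  ∏ v ∈ σ.support, G v (σ v)

/-- The number of directed cycles of a multigraph on an arbitrary finite vertex type; on `Fin n`
this is `cycleCount`. -/
noncomputable def numCycles (G : V → V → ℕ) : ℕ :=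
  ∑ v, G v v + ∑ σ : Equiv.Perm V with σ.IsCycle, permWeight G σ

lemma cycleCount_eq_numCycles {n : ℕ} (G : Fin n → Fin n → ℕ) : cycleCount n G = numCycles G := by
  rw [numCycles, Finset.sum_filter]
  rfl

lemma permWeight_ne_zero_iff {G : V → V → ℕ} {σ : Equiv.Perm V} :
    permWeight G σ ≠ 0 ↔ ∀ v, σ v ≠ v → G v (σ v) ≠ 0 := by
  simp only [permWeight, Finset.prod_ne_zero_iff, Equiv.Perm.mem_support]

lemma permWeight_permCongr (e : V ≃ W) {G : V → V → ℕ} {H : W → W → ℕ}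
    (h : ∀ u v, G u v = H (e u) (e v)) (σ : Equiv.Perm V) :
    permWeight H (e.permCongr σ) = permWeight G σ := by
  refine (Finset.prod_equiv e (fun v => ?_) fun v _ => ?_).symm <;> simp [h]

lemma numCycles_congr (e : V ≃ W) {G : V → V → ℕ} {H : W → W → ℕ}
    (h : ∀ u v, G u v = H (e u) (e v)) : numCycles G = numCycles H := by
  refine congrArg₂ (· + ·) (Fintype.sum_equiv e _ _ fun v => h v v) ?_
  refine Finset.sum_equiv e.permCongr (fun σ => ?_) fun σ _ => (permWeight_permCongr e h σ).symm
  simp only [Finset.mem_filter_univ, isCycle_permCongr_iff]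

lemma permWeight_ofSubtype (G : V → V → ℕ) {p : V → Prop} [DecidablePred p]
    (τ : Equiv.Perm (Subtype p)) :
    permWeight G (Equiv.Perm.ofSubtype τ) = permWeight (fun u v : Subtype p => G u v) τ := by
  rw [permWeight, Equiv.Perm.support_ofSubtype, Finset.prod_map]
  simp [permWeight]

lemma sum_permWeight_subtype (G : V → V → ℕ) (p : V → Prop) [DecidablePred p] :
    ∑ τ : Equiv.Perm (Subtype p) with τ.IsCycle, permWeight (fun u v : Subtype p => G u v) τ =
      ∑ σ : Equiv.Perm V with σ.IsCycle ∧ ∀ v, σ v ≠ v → p v, permWeight G σ := by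
  refine Finset.sum_nbij Equiv.Perm.ofSubtype (fun τ hτ => ?_)
    Equiv.Perm.ofSubtype_injective.injOn (fun σ hσ => ?_) fun τ _ => (permWeight_ofSubtype G τ).symm
  · refine Finset.mem_filter_univ _ |>.2
      ⟨isCycle_ofSubtype_iff.2 (Finset.mem_filter_univ _ |>.1 hτ), fun v hv => ?_⟩
    by_contra hp
    exact hv (Equiv.Perm.ofSubtype_apply_of_not_mem τ hp)
  · obtain ⟨hcycle, hp⟩ := Finset.mem_filter_univ _ |>.1 hσ
    obtain ⟨τ, rfl⟩ := Equiv.Perm.mem_range_ofSubtype_iff (p := p) (g := σ) |>.2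
      fun v hv => hp v (Equiv.Perm.mem_support.1 hv)
    exact ⟨τ, by simpa [isCycle_ofSubtype_iff] using hcycle, rfl⟩

section Fibers

variable {ι : Type*} {G : V → V → ℕ} {c : V → ι}

lemma apply_eq_of_sameCycle {σ : Equiv.Perm V} (hc : ∀ u v, G u v ≠ 0 → c u = c v)
    (hσ : permWeight G σ ≠ 0) {u v : V} (huv : σ.SameCycle u v) : c u = c v := by
  have hstep (w : V) : c w = c (σ w) := by
    by_cases hw : σ w = w
    · rw [hw]
    · exact hc _ _ (permWeight_ne_zero_iff.1 hσ w hw)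
  obtain ⟨i, -, -, rfl⟩ := huv.exists_pow_eq
  clear huv
  induction i with
  | zero => rfl
  | succ i ih => rw [pow_succ', Equiv.Perm.mul_apply, ← hstep, ih]

variable [Fintype ι] [DecidableEq ι]

lemma sum_isCycle_eq_sum_fiber (hc : ∀ u v, G u v ≠ 0 → c u = c v) :
    ∑ σ : Equiv.Perm V with σ.IsCycle, permWeight G σ =
      ∑ i, ∑ σ : Equiv.Perm V with σ.IsCycle ∧ ∀ v, σ v ≠ v → c v = i, permWeight G σ := by
  simp only [← Finset.filter_filter]
  rw [Finset.sum_comm' (t' := {σ | σ.IsCycle}) (s' := fun σ => {i | ∀ v, σ v ≠ v → c v = i})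
    (by simp [and_comm])]
  refine Finset.sum_congr rfl fun σ hσ => ?_
  by_cases hw : permWeight G σ = 0
  · simp [hw]
  obtain ⟨x, hx, hxy⟩ := (Finset.mem_filter_univ σ).1 hσ
  have hfiber : ({i | ∀ v, σ v ≠ v → c v = i} : Finset ι) = {c x} := by
    ext i
    simp only [Finset.mem_filter_univ, Finset.mem_singleton]
    refine ⟨fun h => (h x hx).symm, ?_⟩
    rintro rfl v hv
    exact (apply_eq_of_sameCycle hc hw (hxy hv)).symm
  rw [hfiber, Finset.sum_singleton]

theorem numCycles_eq_sum_fiber (hc : ∀ u v, G u v ≠ 0 → c u = c v) :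
    numCycles G = ∑ i, numCycles fun u v : {w // c w = i} => G u v := by
  simp only [numCycles, Finset.sum_add_distrib, sum_permWeight_subtype]
  rw [sum_isCycle_eq_sum_fiber hc, ← Fintype.sum_fiberwise c]

end Fibers

end NumCycles

section TransferMatrix

variable {ι R : Type*} [Fintype ι] [DecidableEq ι] [CommSemiring R]

lemma matrix_pow_succ_apply_eq_sum_prod (M : Matrix ι ι R) (n : ℕ) (i j : ι) :
    (M ^ (n + 1)) i j = ∑ f : Fin n → ι,
      (∏ v : Fin n, M (Fin.cons (α := fun _ => ι) i f v.castSucc) (f v)) *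
        M (Fin.cons (α := fun _ => ι) i f (Fin.last n)) j := by
  induction n generalizing i with
  | zero => simp [Fin.last]
  | succ n ih =>
    rw [pow_succ', Matrix.mul_apply, ← (Fin.consEquiv fun _ => ι).sum_comp,
      Fintype.sum_prod_type]
    refine Finset.sum_congr rfl fun i' _ => ?_
    rw [ih, Finset.mul_sum]
    refine Finset.sum_congr rfl fun f _ => ?_
    simp only [Fin.consEquiv_apply, Fin.prod_univ_succ, ← Fin.succ_last, ← Fin.succ_castSucc,
      Fin.cons_succ, Fin.castSucc_zero, Fin.cons_zero, mul_assoc]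

lemma trace_pow_eq_sum_prod {n : ℕ} [NeZero n] (M : Matrix ι ι R) :
    (M ^ n).trace = ∑ f : Fin n → ι, ∏ v, M (f v) (f (v + 1)) := by
  obtain ⟨n, rfl⟩ := Nat.exists_eq_succ_of_ne_zero (NeZero.ne n)
  rw [Matrix.trace, ← (Fin.consEquiv fun _ => ι).sum_comp, Fintype.sum_prod_type]
  refine Finset.sum_congr rfl fun i _ => ?_
  rw [Matrix.diag_apply, matrix_pow_succ_apply_eq_sum_prod]
  refine Finset.sum_congr rfl fun f _ => ?_
  rw [Fin.prod_univ_castSucc]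
  simp [Fin.consEquiv]

end TransferMatrix

section Lucas

/-- The Lucas sequence `L` with `L 0 = 2`, `L 1 = a` and `L (n + 2) = a * L (n + 1) + b * L n`. -/
def lucasSeq (a b : ℕ) : ℕ → ℕ
  | 0 => 2
  | 1 => a
  | n + 2 => a * lucasSeq a b (n + 1) + b * lucasSeq a b n

/-- The transfer matrix for closed tours with steps `+1` (`a` parallel edges) and `+2` (`b` parallel
edges): the trace of its `n`-th power counts the tours on a circle of `n` vertices. A vertex has
state `true` if it is visited and `false` if it is jumped over; the weight of an edge is charged to
its source. -/
def stepMatrix (a b : ℕ) : Matrix Bool Bool ℕ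
  | true, true => a
  | true, false => b
  | false, true => 1
  | false, false => 0

lemma stepMatrix_sq (a b : ℕ) :
    stepMatrix a b ^ 2 = a • stepMatrix a b + b • (1 : Matrix Bool Bool ℕ) := by
  ext p q
  rw [pow_two, Matrix.mul_apply, Matrix.add_apply, Matrix.smul_apply, Matrix.smul_apply]
  cases p <;> cases q <;> simp [stepMatrix]

lemma trace_stepMatrix_pow (a b n : ℕ) : (stepMatrix a b ^ n).trace = lucasSeq a b n := by
  induction n using Nat.twoStepInduction with
  | zero => simp [lucasSeq]
  | one => simp [lucasSeq, Matrix.trace, stepMatrix]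
  | more n ih₀ ih₁ =>
    rw [pow_add, stepMatrix_sq, mul_add, mul_smul_comm, mul_smul_comm, ← pow_succ, mul_one,
      Matrix.trace_add, Matrix.trace_smul, Matrix.trace_smul, ih₀, ih₁]
    rfl

variable {a : ℕ}

lemma lucasSeq_pos (ha : 0 < a) (n : ℕ) : 0 < lucasSeq a 1 n := by
  induction n using Nat.twoStepInduction with
  | zero => exact two_pos
  | one => exact ha
  | more n ih₀ _ => exact Nat.add_pos_right _ (by rwa [one_mul])

lemma lucasSeq_add_lucasSeq_succ_le (ha : 0 < a) (n : ℕ) :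
    lucasSeq a 1 n + lucasSeq a 1 (n + 1) ≤ lucasSeq a 1 (n + 2) := by
  have := Nat.le_mul_of_pos_left (lucasSeq a 1 (n + 1)) ha
  simp only [lucasSeq]
  lia

lemma lucasSeq_succ_mono (ha : 0 < a) : Monotone fun n => lucasSeq a 1 (n + 1) :=
  monotone_nat_of_le_succ fun n => (Nat.le_add_left _ _).trans (lucasSeq_add_lucasSeq_succ_le ha n)

lemma lucasSeq_superadditive (ha : 0 < a) {m n : ℕ} (hm : 2 ≤ m) (hn : 2 ≤ n) :
    lucasSeq a 1 m + lucasSeq a 1 n + 1 ≤ lucasSeq a 1 (m + n) := by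
  wlog hnm : n ≤ m generalizing m n
  · rw [add_comm m, add_comm (lucasSeq a 1 m)]
    exact this hn hm (by lia)
  obtain ⟨m, rfl⟩ := Nat.exists_eq_add_of_le' (show 1 ≤ m by lia)
  obtain ⟨n, rfl⟩ := Nat.exists_eq_add_of_le' hn
  calc lucasSeq a 1 (m + 1) + lucasSeq a 1 (n + 2) + 1
      ≤ lucasSeq a 1 (m + 1) + lucasSeq a 1 (m + 1) + lucasSeq a 1 m := by
        gcongr
        · exact lucasSeq_succ_mono ha (show n + 1 ≤ m by lia)
        · exact lucasSeq_pos ha m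
    _ ≤ lucasSeq a 1 (m + 1) + lucasSeq a 1 (m + 2) := by
        have := lucasSeq_add_lucasSeq_succ_le ha m
        lia
    _ ≤ lucasSeq a 1 (m + 3) := lucasSeq_add_lucasSeq_succ_le ha (m + 1)
    _ ≤ lucasSeq a 1 (m + 1 + (n + 2)) :=
        lucasSeq_succ_mono ha (show m + 2 ≤ m + 1 + (n + 1) by lia)

lemma sum_lucasSeq_add_one_le {ι : Type*} (ha : 0 < a) {s : Finset ι} (hs : s.Nonempty)
    {g : ι → ℕ} (hg : ∀ i ∈ s, 2 ≤ g i) :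
    ∑ i ∈ s, (lucasSeq a 1 (g i) + 1) ≤ lucasSeq a 1 (∑ i ∈ s, g i) + 1 :=
  Finset.le_sum_nonempty_of_subadditive_on_pred (N := ℕᵒᵈ)
    (fun n => OrderDual.toDual (lucasSeq a 1 n + 1)) (2 ≤ ·)
    (fun m n hm hn => show lucasSeq a 1 m + 1 + (lucasSeq a 1 n + 1) ≤ lucasSeq a 1 (m + n) + 1 by
      have := lucasSeq_superadditive ha hm hn
      lia)
    (fun m n hm _ => Nat.le_add_right_of_le hm) g s hs hg

lemma pow_succ_le_lucasSeq (a n : ℕ) : a ^ (n + 1) ≤ lucasSeq a 1 (n + 1) := by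
  induction n with
  | zero => simp [lucasSeq]
  | succ n ih =>
    calc a ^ (n + 2) = a * a ^ (n + 1) := pow_succ' a (n + 1)
      _ ≤ a * lucasSeq a 1 (n + 1) := Nat.mul_le_mul_left a ih
      _ ≤ lucasSeq a 1 (n + 2) := Nat.le_add_right _ _

lemma lucasSeq_add_pow_le (a n : ℕ) :
    lucasSeq (a + 1) 1 (n + 1) + (a + 1) ^ (n + 2) ≤
      lucasSeq (a + 1) 1 (n + 2) + (a + 1) ^ (n + 1) := by
  have hpow := Nat.mul_le_mul_left a (pow_succ_le_lucasSeq (a + 1) n)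
  simp only [lucasSeq, pow_succ] at hpow ⊢
  lia

lemma lucasSeq_one_add_pow_le (a n : ℕ) :
    lucasSeq 1 (a + 1) (n + 3) + (a + 1) ^ (n + 3) ≤ lucasSeq (a + 1) 1 (n + 3) + 1 := by
  induction n using Nat.twoStepInduction with
  | zero => simp only [lucasSeq]; lia
  | one => simp only [lucasSeq]; ring_nf; lia
  | more n ih₀ ih₁ =>
    set A := a + 1 with hA
    refine le_of_add_le_add_right (a := A ^ (n + 4)) ?_
    calc lucasSeq 1 A (n + 5) + A ^ (n + 5) + A ^ (n + 4)
        = (lucasSeq 1 A (n + 4) + A ^ (n + 4)) + A * (lucasSeq 1 A (n + 3) + A ^ (n + 3)) +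
            a * A ^ (n + 4) := by rw [lucasSeq, hA]; ring
      _ ≤ (lucasSeq A 1 (n + 4) + 1) + A * (lucasSeq A 1 (n + 3) + 1) + a * A ^ (n + 4) := by
        gcongr
      _ = lucasSeq A 1 (n + 4) + lucasSeq A 1 (n + 3) + 1 + A +
            a * (lucasSeq A 1 (n + 3) + A ^ (n + 4)) := by rw [hA]; ring
      _ ≤ lucasSeq A 1 (n + 4) + lucasSeq A 1 (n + 3) + 1 + A +
            a * (lucasSeq A 1 (n + 4) + A ^ (n + 3)) := by
        gcongr _ + a * ?_
        exact lucasSeq_add_pow_le a (n + 2)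
      _ = lucasSeq A 1 (n + 5) + 1 + (a * A ^ (n + 3) + A) := by
        rw [show lucasSeq A 1 (n + 5) = A * lucasSeq A 1 (n + 4) + 1 * lucasSeq A 1 (n + 3) from
          rfl, hA]
        ring
      _ ≤ lucasSeq A 1 (n + 5) + 1 + (a * A ^ (n + 3) + A ^ (n + 3)) := by
        gcongr
        exact Nat.le_self_pow (by lia) A
      _ = lucasSeq A 1 (n + 5) + 1 + A ^ (n + 4) := by rw [hA]; ring

end Lucas

section Circulant

variable {n : ℕ} [NeZero n]

/-- The circulant multigraph on `Fin n` with `a` parallel edges from `v` to `v + 1` and `b` parallel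
edges from `v` to `v + 2`. Multiplicities are added when the two heads coincide modulo `n`, so that
every outdegree is `a + b`. -/
def circulantMult (n a b : ℕ) [NeZero n] (u v : Fin n) : ℕ :=
  (if v = u + 1 then a else 0) + if v = u + 1 + 1 then b else 0

lemma fin_forall_of_add_one {P : Fin n → Prop} (h : ∀ v, P v → P (v + 1)) {v : Fin n} (hv : P v)
    (w : Fin n) : P w := by
  obtain ⟨n, rfl⟩ := Nat.exists_eq_succ_of_ne_zero (NeZero.ne n)
  suffices hadd : ∀ d : Fin (n + 1), P (v + d) by simpa using hadd (w - v)
  intro d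
  induction d using Fin.induction with
  | zero => rwa [add_zero]
  | succ i ih =>
    rw [← Fin.coeSucc_eq_succ, ← add_assoc]
    exact h _ ih

lemma fin_add_one_ne_self (hn : 2 ≤ n) (v : Fin n) : v + 1 ≠ v := by
  rw [Ne, add_eq_left, Fin.ext_iff, Fin.val_one', Fin.val_zero, Nat.mod_eq_of_lt hn]
  exact one_ne_zero

lemma fin_one_add_one_val (hn : 3 ≤ n) : (1 + 1 : Fin n).val = 2 := by
  rw [Fin.val_add, Fin.val_one', Nat.mod_eq_of_lt (a := 1) (by lia), Nat.mod_eq_of_lt hn]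

lemma fin_add_one_add_one_ne_self (hn : 3 ≤ n) (v : Fin n) : v + 1 + 1 ≠ v := by
  rw [add_assoc, Ne, add_eq_left, Fin.ext_iff, fin_one_add_one_val hn, Fin.val_zero]
  exact two_ne_zero

/-- A set of vertices of the circulant multigraph, given by its indicator function, is a tour if it
misses no two consecutive vertices, so that it can be traversed cyclically by steps `+1` and
`+2`. -/
def IsTour (f : Fin n → Bool) : Prop :=
  ∀ v, f v = false → f (v + 1) = true

/-- The vertex visited after `v` on the tour `f`; vertices outside the tour are left in place. -/
def nextVisited (f : Fin n → Bool) (v : Fin n) : Fin n :=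
  if f v then (if f (v + 1) then v + 1 else v + 1 + 1) else v

section Tour

variable {f : Fin n → Bool}

lemma nextVisited_eq_self_iff (hn : 3 ≤ n) {v : Fin n} : nextVisited f v = v ↔ f v = false := by
  have h₁ := fin_add_one_ne_self (by lia) v
  have h₂ := fin_add_one_add_one_ne_self hn v
  unfold nextVisited
  split_ifs <;> simp_all

lemma IsTour.apply_nextVisited (hf : IsTour f) {v : Fin n} :
    f (nextVisited f v) = f v := by
  unfold nextVisited
  split_ifs with hv hv'
  · rw [hv, hv']
  · rw [hv, hf _ (by simpa using hv')]
  · rfl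

lemma IsTour.nextVisited_injective (hf : IsTour f) : Function.Injective (nextVisited f) := by
  have hcross {u v : Fin n} (hu : f u = true) (hv : f (v + 1) = false) : u + 1 ≠ v + 1 + 1 := by
    intro h
    rw [add_left_inj] at h
    simp_all
  intro u v h
  have hfuv : f u = f v := by rw [← hf.apply_nextVisited, h, hf.apply_nextVisited]
  cases hu : f u
  · simpa [nextVisited, hu, ← hfuv] using h
  have hv : f v = true := hfuv ▸ hu
  cases hu' : f (u + 1) <;> cases hv' : f (v + 1) <;>
    simp only [nextVisited, hu, hv, hu', hv', if_true, Bool.false_eq_true, if_false] at h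
  · simpa using h
  · exact absurd h.symm (hcross hv hu')
  · exact absurd h (hcross hu hv')
  · simpa using h

/-- The cyclic permutation that runs through a tour. -/
noncomputable def tourPerm (f : {f : Fin n → Bool // IsTour f}) : Equiv.Perm (Fin n) :=
  Equiv.ofBijective (nextVisited f) (Finite.injective_iff_bijective.1 f.2.nextVisited_injective)

lemma tourPerm_apply (f : {f : Fin n → Bool // IsTour f}) (v : Fin n) :
    tourPerm f v = nextVisited f v := rfl

lemma tourPerm_injective (hn : 3 ≤ n) : Function.Injective (tourPerm (n := n)) := by
  intro f g h
  refine Subtype.ext (funext fun v => ?_)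
  rw [Bool.eq_iff_iff, ← not_iff_not, Bool.not_eq_true, Bool.not_eq_true,
    ← nextVisited_eq_self_iff hn, ← nextVisited_eq_self_iff hn, ← tourPerm_apply, h,
    tourPerm_apply]

lemma isCycle_tourPerm (hn : 3 ≤ n) (f : {f : Fin n → Bool // IsTour f}) :
    (tourPerm f).IsCycle := by
  obtain ⟨f, hf⟩ := f
  set σ := tourPerm ⟨f, hf⟩
  have hmoved {v : Fin n} : σ v ≠ v ↔ f v = true := by
    rw [tourPerm_apply, Ne, nextVisited_eq_self_iff hn, Bool.not_eq_false]
  obtain ⟨x, hx⟩ : ∃ x, f x = true := by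
    cases h₀ : f 0
    · exact ⟨_, hf 0 h₀⟩
    · exact ⟨0, h₀⟩
  refine ⟨x, hmoved.2 hx, fun y hy => ?_⟩
  have hsame {v : Fin n} (hv : σ.SameCycle x v) : σ.SameCycle x (nextVisited f v) :=
    Equiv.Perm.sameCycle_apply_right.2 hv
  suffices hall : (f y = true → σ.SameCycle x y) ∧ (f (y + 1) = true → σ.SameCycle x (y + 1)) from
    hall.1 (hmoved.1 hy)
  have hone {v : Fin n} (hv : f v = true) (hxv : σ.SameCycle x v) (hv' : f (v + 1) = true) :
      σ.SameCycle x (v + 1) := by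
    simpa [nextVisited, hv, hv'] using hsame hxv
  refine fin_forall_of_add_one
    (P := fun v => (f v = true → σ.SameCycle x v) ∧ (f (v + 1) = true → σ.SameCycle x (v + 1)))
    (fun v ⟨h₁, h₂⟩ => ⟨h₂, fun h => ?_⟩) ⟨fun _ => .refl σ x, hone hx (.refl σ x)⟩ y
  cases hv' : f (v + 1)
  · have hv : f v = true := by
      by_contra hc
      simp [hf v (by simpa using hc)] at hv'
    simpa [nextVisited, hv, hv'] using hsame (h₁ hv)
  · exact hone hv' (h₂ hv') h

lemma permWeight_tourPerm (hn : 3 ≤ n) (a b : ℕ) (f : {f : Fin n → Bool // IsTour f}) :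
    permWeight (circulantMult n a b) (tourPerm f) =
      ∏ v, stepMatrix a b (f.1 v) (f.1 (v + 1)) := by
  obtain ⟨f, hf⟩ := f
  have hsupport : (tourPerm ⟨f, hf⟩).support = ({v | f v = true} : Finset (Fin n)) := by
    ext v
    simp [tourPerm_apply, nextVisited_eq_self_iff hn]
  rw [permWeight, hsupport, Finset.prod_filter]
  refine Finset.prod_congr rfl fun v _ => ?_
  have hne := fin_add_one_ne_self (by lia) (v + 1)
  cases hv : f v
  · rw [if_neg Bool.false_ne_true]
    simp only [hv, hf v hv]
    rfl
  · cases hv' : f (v + 1) <;>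
      simp [stepMatrix, circulantMult, tourPerm_apply, nextVisited, hv, hv', hne, hne.symm]

lemma prod_stepMatrix_eq_zero (a b : ℕ) (hf : ¬IsTour f) :
    ∏ v, stepMatrix a b (f v) (f (v + 1)) = 0 := by
  obtain ⟨v, hv, hv'⟩ : ∃ v, f v = false ∧ f (v + 1) = false := by simpa [IsTour] using hf
  exact Finset.prod_eq_zero (Finset.mem_univ v) (by rw [hv, hv']; rfl)

lemma sum_permWeight_tourPerm (hn : 3 ≤ n) (a b : ℕ) :
    ∑ f : {f : Fin n → Bool // IsTour f}, permWeight (circulantMult n a b) (tourPerm f) =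
      lucasSeq a b n := by
  simp only [permWeight_tourPerm hn]
  rw [← trace_stepMatrix_pow, trace_pow_eq_sum_prod]
  refine Fintype.sum_of_injective Subtype.val Subtype.val_injective _ _ (fun f hf => ?_)
    fun _ => rfl
  exact prod_stepMatrix_eq_zero a b fun htour => hf ⟨⟨f, htour⟩, rfl⟩

end Tour

section RotationByTwo

lemma finRotate_sq_apply (v : Fin n) : (finRotate n ^ 2) v = v + 1 + 1 := by
  rw [pow_two, Equiv.Perm.mul_apply, finRotate_apply, finRotate_apply]

lemma isCycle_finRotate_sq_iff {m : ℕ} (hm : 2 ≤ m) : (finRotate m ^ 2).IsCycle ↔ Odd m := by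
  have hcycle := isCycle_finRotate_of_le hm
  rw [hcycle.pow_iff, hcycle.orderOf, support_finRotate_of_le hm, Finset.card_fin,
    Nat.coprime_two_left]

lemma permWeight_finRotate_sq (hn : 3 ≤ n) (a b : ℕ) :
    permWeight (circulantMult n a b) (finRotate n ^ 2) = b ^ n := by
  have hsupport : (finRotate n ^ 2).support = Finset.univ :=
    Finset.eq_univ_of_forall fun v => Equiv.Perm.mem_support.2
      (finRotate_sq_apply v ▸ fin_add_one_add_one_ne_self hn v)
  simp only [permWeight, hsupport, finRotate_sq_apply, circulantMult,
    fin_add_one_ne_self (show 2 ≤ n by lia), if_false, if_true, zero_add, Finset.prod_const,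
    Finset.card_fin]

lemma tourPerm_ne_finRotate_sq (hn : 3 ≤ n) (f : {f : Fin n → Bool // IsTour f}) :
    tourPerm f ≠ finRotate n ^ 2 := by
  intro h
  have hnext (v : Fin n) : nextVisited f.1 v = v + 1 + 1 := by
    rw [← tourPerm_apply, h, finRotate_sq_apply]
  have hvisited (v : Fin n) : f.1 v = true := by
    rw [← Bool.not_eq_false, ← nextVisited_eq_self_iff hn, hnext]
    exact fin_add_one_add_one_ne_self hn v
  refine fin_add_one_ne_self (by lia) (0 + 1 : Fin n) ?_
  rw [← hnext, nextVisited, if_pos (hvisited _), if_pos (hvisited _)]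

end RotationByTwo

section Classification

variable {σ : Equiv.Perm (Fin n)}

lemma apply_eq_of_permWeight_circulantMult_ne_zero {a b : ℕ}
    (hσ : permWeight (circulantMult n a b) σ ≠ 0) (v : Fin n) :
    σ v = v ∨ σ v = v + 1 ∨ σ v = v + 1 + 1 := by
  by_contra! h
  obtain ⟨h₀, h₁, h₂⟩ := h
  exact permWeight_ne_zero_iff.1 hσ v h₀ (by simp [circulantMult, h₁, h₂])

lemma eq_one_of_fixes_consecutive (hσ : ∀ v, σ v = v ∨ σ v = v + 1 ∨ σ v = v + 1 + 1) {v : Fin n}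
    (hv : σ v = v) (hv' : σ (v + 1) = v + 1) : σ = 1 := by
  ext w : 1
  refine (fin_forall_of_add_one (P := fun u => σ u = u ∧ σ (u + 1) = u + 1)
    (fun u ⟨hu, hu'⟩ => ⟨hu', ?_⟩) ⟨hv, hv'⟩ w).1
  obtain ⟨t, ht⟩ := σ.surjective (u + 1 + 1)
  rcases hσ t with h | h | h
  · rwa [← h.symm.trans ht]
  · obtain rfl : t = u + 1 := add_right_cancel (h.symm.trans ht)
    rw [← ht, hu', hu']
  · obtain rfl : t = u := add_right_cancel (add_right_cancel (h.symm.trans ht))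
    rw [← ht, hu, hu]

lemma eq_finRotate_sq_of_skips_moved (hn : 3 ≤ n)
    (hσ : ∀ v, σ v = v ∨ σ v = v + 1 ∨ σ v = v + 1 + 1) {v : Fin n}
    (hv : σ v = v + 1 + 1) (hv' : σ (v + 1) ≠ v + 1) : σ = finRotate n ^ 2 := by
  ext w : 1
  rw [finRotate_sq_apply]
  refine (fin_forall_of_add_one (P := fun u => σ u = u + 1 + 1 ∧ σ (u + 1) ≠ u + 1)
    (fun u ⟨hu, hu'⟩ => ⟨?_, fun hfix => ?_⟩) ⟨hv, hv'⟩ w).1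
  · refine ((hσ _).resolve_left hu').resolve_left fun h => ?_
    exact fin_add_one_ne_self (by lia) u (σ.injective (h.trans hu.symm))
  · exact fin_add_one_add_one_ne_self hn u (σ.injective (hfix.trans hu.symm))

lemma eq_nextVisited_of_ne_finRotate_sq (hn : 3 ≤ n)
    (hσ : ∀ v, σ v = v ∨ σ v = v + 1 ∨ σ v = v + 1 + 1) (hrot : σ ≠ finRotate n ^ 2) (v : Fin n) :
    σ v = nextVisited (fun u => decide (σ u ≠ u)) v := by
  simp only [nextVisited, decide_eq_true_eq]
  split_ifs with hv hv'
  · exact ((hσ v).resolve_left hv).resolve_right fun h =>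
      hrot (eq_finRotate_sq_of_skips_moved hn hσ h hv')
  · refine ((hσ v).resolve_left hv).resolve_left fun h => ?_
    exact fin_add_one_ne_self (by lia) v (σ.injective ((not_not.1 hv').trans h.symm))
  · exact not_not.1 hv

lemma exists_tourPerm_eq (hn : 3 ≤ n) (hσ : ∀ v, σ v = v ∨ σ v = v + 1 ∨ σ v = v + 1 + 1)
    (hone : σ ≠ 1) (hrot : σ ≠ finRotate n ^ 2) : ∃ f, tourPerm f = σ := by
  refine ⟨⟨fun u => decide (σ u ≠ u), fun v hv => ?_⟩,
    Equiv.ext fun v => (eq_nextVisited_of_ne_finRotate_sq hn hσ hrot v).symm⟩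
  simp only [decide_eq_false_iff_not, not_not, decide_eq_true_eq] at hv ⊢
  exact fun hv' => hone (eq_one_of_fixes_consecutive hσ hv hv')

end Classification

lemma sum_isCycle_circulantMult (hn : 3 ≤ n) (a b : ℕ) :
    ∑ σ : Equiv.Perm (Fin n) with σ.IsCycle, permWeight (circulantMult n a b) σ =
      lucasSeq a b n + if Odd n then b ^ n else 0 := by
  rw [← Finset.sum_filter_not_add_sum_filter _ (· = finRotate n ^ 2)]
  congr 1
  · rw [← sum_permWeight_tourPerm hn]
    refine (Finset.sum_of_injOn tourPerm (tourPerm_injective hn).injOn (fun f _ => ?_)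
      (fun σ hσ hrange => ?_) fun _ _ => rfl).symm
    · simpa using ⟨isCycle_tourPerm hn f, tourPerm_ne_finRotate_sq hn f⟩
    · simp only [Finset.mem_filter, Finset.mem_univ, true_and] at hσ
      by_contra hw
      obtain ⟨f, rfl⟩ := exists_tourPerm_eq hn (apply_eq_of_permWeight_circulantMult_ne_zero hw)
        hσ.1.ne_one hσ.2
      exact hrange ⟨f, Finset.mem_coe.2 (Finset.mem_univ f), rfl⟩
  · simp only [Finset.sum_filter _ (permWeight _), Finset.sum_ite_eq', Finset.mem_filter_univ,
      isCycle_finRotate_sq_iff (show 2 ≤ n by lia), permWeight_finRotate_sq hn]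

lemma isCycle_fin_two_iff {σ : Equiv.Perm (Fin 2)} : σ.IsCycle ↔ σ = Equiv.swap 0 1 := by
  refine ⟨fun hσ => ?_, ?_⟩
  · have : ∀ τ : Equiv.Perm (Fin 2), τ ≠ 1 → τ = Equiv.swap 0 1 := by decide
    exact this σ hσ.ne_one
  · rintro rfl
    exact Equiv.Perm.isCycle_swap (by decide)

theorem numCycles_circulantMult (a b : ℕ) :
    numCycles (circulantMult n a b) = lucasSeq a b n + if Odd n then b ^ n else 0 := by
  rcases Nat.lt_or_ge n 3 with hn | hn
  · have := NeZero.pos n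
    interval_cases n
    · simp [numCycles, circulantMult, lucasSeq]
    · simp [numCycles, circulantMult, lucasSeq, isCycle_fin_two_iff, permWeight, Finset.filter_eq',
        Equiv.Perm.support_swap, Fin.isValue, show ¬Odd 2 by decide]
      ring
  · have hloop (v : Fin n) : circulantMult n a b v v = 0 := by
      simp only [circulantMult, if_neg (fin_add_one_ne_self (show 2 ≤ n by lia) v).symm,
        if_neg (fin_add_one_add_one_ne_self hn v).symm]
    simp only [numCycles, hloop, Finset.sum_const_zero, zero_add, sum_isCycle_circulantMult hn]

end Circulant

section MaxCycles

variable {n k : ℕ}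

lemma le_Fk {G : Fin n → Fin n → ℕ} (hdeg : ∀ v, ∑ u, G v u = k)
    (hmult : ∀ u v, u ≠ v → G u v ≤ k - 1) : numCycles G ≤ Fk k n := by
  rw [← cycleCount_eq_numCycles]
  refine le_csSup (Set.Finite.bddAbove ?_) ⟨G, hdeg, hmult, rfl⟩
  refine ((Set.finite_Icc (0 : Fin n → Fin n → ℕ) fun _ _ => k).image (cycleCount n)).subset ?_
  rintro _ ⟨H, hH, -, rfl⟩
  refine ⟨H, ⟨fun _ _ => Nat.zero_le _, fun v u => ?_⟩, rfl⟩
  exact (Finset.single_le_sum (fun _ _ => Nat.zero_le _) (Finset.mem_univ u)).trans_eq (hH v)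

lemma sum_circulantMult [NeZero n] (a b : ℕ) (u : Fin n) :
    ∑ v, circulantMult n a b u v = a + b := by
  simp only [circulantMult, Finset.sum_add_distrib, Finset.sum_ite_eq', Finset.mem_univ, if_true]

lemma circulantMult_le_max [NeZero n] (a b : ℕ) {u v : Fin n} (huv : u ≠ v) :
    circulantMult n a b u v ≤ max a b := by
  have hne := fin_add_one_ne_self (show 2 ≤ n by lia) (u + 1)
  unfold circulantMult
  split_ifs with h₁ h₂
  · exact absurd (h₂.symm.trans h₁) hne
  all_goals simp

lemma lucasSeq_add_le_Fk [NeZero n] (hk : 2 ≤ k) :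
    lucasSeq (k - 1) 1 n + (if Odd n then 1 else 0) ≤ Fk k n := by
  have hcount := numCycles_circulantMult (n := n) (k - 1) 1
  rw [one_pow] at hcount
  rw [← hcount]
  refine le_Fk (fun v => ?_) fun u v huv => (circulantMult_le_max _ _ huv).trans ?_
  · rw [sum_circulantMult, Nat.sub_add_cancel (by lia)]
  · exact max_le le_rfl (by lia)

lemma lucasSeq_add_one_le_Fk_add_Fk [NeZero n] (hk : 2 ≤ k) :
    lucasSeq (k - 1) 1 (n + 2) + 1 ≤ (k - 1) * Fk k (n + 1) + Fk k n := by
  have hn := lucasSeq_add_le_Fk (n := n) hk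
  have hn' := Nat.mul_le_mul_left (k - 1) (lucasSeq_add_le_Fk (n := n + 1) hk)
  rw [lucasSeq, one_mul]
  rcases Nat.even_or_odd n with heven | hodd
  · rw [if_pos heven.add_one, mul_add, mul_one] at hn'
    lia
  · rw [if_pos hodd] at hn
    rw [if_neg (Nat.not_odd_iff_even.2 hodd.add_one), add_zero] at hn'
    lia

end MaxCycles

section Components

section CyclicDistance

lemma fin_val_add_sub_mod {m : ℕ} (i j : Fin m) : (j.val + m - i.val) % m = (j - i).val := by
  rw [Fin.val_sub]
  congr 1
  lia

variable {m : ℕ} [NeZero m]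

lemma fin_sub_val_eq_one_iff (hm : 2 ≤ m) {i j : Fin m} : (j - i).val = 1 ↔ j = i + 1 := by
  rw [← sub_eq_iff_eq_add', Fin.ext_iff, Fin.val_one', Nat.mod_eq_of_lt hm]

lemma fin_sub_val_eq_two_iff (hm : 3 ≤ m) {i j : Fin m} : (j - i).val = 2 ↔ j = i + 1 + 1 := by
  rw [add_assoc, ← sub_eq_iff_eq_add', Fin.ext_iff, fin_one_add_one_val hm]

lemma circulantMult_eq_ite (hm : 3 ≤ m) (a b : ℕ) (i j : Fin m) :
    circulantMult m a b i j = if (j.val + m - i.val) % m = 1 then a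
      else if (j.val + m - i.val) % m = 2 then b else 0 := by
  simp only [fin_val_add_sub_mod, fin_sub_val_eq_one_iff (show 2 ≤ m by lia),
    fin_sub_val_eq_two_iff hm, circulantMult]
  have hne := fin_add_one_ne_self (by lia) (i + 1)
  split_ifs with h₁ h₂
  · exact absurd (h₂.symm.trans h₁) hne
  all_goals simp

end CyclicDistance

lemma numCycles_GnkMult_le {m k : ℕ} (hm : 3 ≤ m) :
    numCycles (GnkMult m k) ≤ lucasSeq (k - 1) 1 m + 1 := by
  have : NeZero m := ⟨by lia⟩
  have hG : GnkMult m k = circulantMult m (k - 1) 1 :=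
    funext₂ fun i j => (circulantMult_eq_ite hm _ _ i j).symm
  rw [hG, numCycles_circulantMult, one_pow]
  split_ifs <;> lia

lemma numCycles_Gnk'Mult_le {m k : ℕ} (hm : 3 ≤ m) (hk : 2 ≤ k) :
    numCycles (Gnk'Mult m k) ≤ lucasSeq (k - 1) 1 m + 1 := by
  have : NeZero m := ⟨by lia⟩
  have hG : Gnk'Mult m k = circulantMult m 1 (k - 1) :=
    funext₂ fun i j => (circulantMult_eq_ite hm _ _ i j).symm
  obtain ⟨m, rfl⟩ := Nat.exists_eq_add_of_le' hm
  obtain ⟨a, rfl⟩ := Nat.exists_eq_add_of_le' hk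
  have := lucasSeq_one_add_pow_le a m
  rw [hG, numCycles_circulantMult]
  split_ifs <;> lia

lemma numCycles_le_lucasSeq_of_fiber {V ι : Type*} [Fintype V] [DecidableEq V] [Finite ι]
    [DecidableEq ι] [Nonempty ι] {a : ℕ} (ha : 0 < a) {G : V → V → ℕ} {c : V → ι}
    (hc : ∀ u v, G u v ≠ 0 → c u = c v)
    (hfiber : ∀ i, 2 ≤ Fintype.card {w // c w = i} ∧
      numCycles (fun u v : {w // c w = i} => G u v) ≤
        lucasSeq a 1 (Fintype.card {w // c w = i}) + 1) :
    numCycles G ≤ lucasSeq a 1 (Fintype.card V) + 1 := by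
  cases nonempty_fintype ι
  calc numCycles G = ∑ i, numCycles fun u v : {w // c w = i} => G u v := numCycles_eq_sum_fiber hc
    _ ≤ ∑ i, (lucasSeq a 1 (Fintype.card {w // c w = i}) + 1) :=
      Finset.sum_le_sum fun i _ => (hfiber i).2
    _ ≤ lucasSeq a 1 (∑ i, Fintype.card {w // c w = i}) + 1 :=
      sum_lucasSeq_add_one_le ha Finset.univ_nonempty fun i _ => (hfiber i).1
    _ = lucasSeq a 1 (Fintype.card V) + 1 := by
      rw [← Fintype.card_sigma, Fintype.card_congr (Equiv.sigmaFiberEquiv c)]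

variable {n : ℕ}

/-- Weak connectivity as a setoid; its quotient is the set of connected components. -/
def mconnSetoid (G : Fin n → Fin n → ℕ) : Setoid (Fin n) where
  r := MConn G
  iseqv :=
    { refl := fun _ => .refl
      symm := fun h =>
        have : Std.Symm fun a b => 0 < G a b ∨ 0 < G b a := ⟨fun _ _ => Or.symm⟩
        Relation.ReflTransGen.stdSymm.symm _ _ h
      trans := .trans }

lemma numCycles_le_lucasSeq_of_components {G : Fin n → Fin n → ℕ} {a : ℕ} (hn : 0 < n) (ha : 0 < a)
    (hcomp : ∀ v : Fin n, ∃ m, 2 ≤ m ∧ ∃ H : Fin m → Fin m → ℕ, numCycles H ≤ lucasSeq a 1 m + 1 ∧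
      ∃ e : {u // MConn G v u} ≃ Fin m, ∀ u w : {u // MConn G v u}, G u w = H (e u) (e w)) :
    numCycles G ≤ lucasSeq a 1 n + 1 := by
  have : Nonempty (Quotient (mconnSetoid G)) := ⟨Quotient.mk _ ⟨0, hn⟩⟩
  suffices hcard : numCycles G ≤ lucasSeq a 1 (Fintype.card (Fin n)) + 1 by
    rwa [Fintype.card_fin] at hcard
  refine numCycles_le_lucasSeq_of_fiber (c := Quotient.mk (mconnSetoid G)) ha
    (fun u v huv => Quotient.sound (.single (Or.inl (Nat.pos_of_ne_zero huv)))) fun i => ?_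
  induction i using Quotient.inductionOn with | h v => ?_
  obtain ⟨m, hm, H, hH, e, he⟩ := hcomp v
  have hclass (u : Fin n) : Quotient.mk (mconnSetoid G) u = ⟦v⟧ ↔ MConn G v u :=
    eq_comm.trans Quotient.eq
  let e' := (Equiv.subtypeEquivRight hclass).trans e
  rw [Fintype.card_congr e', Fintype.card_fin]
  exact ⟨hm, (numCycles_congr e' fun _ _ => he _ _).trans_le hH⟩

end Components

theorem stmt_4_general (n k : ℕ) (hn : 0 < n) (hk : 2 ≤ k) (G : Fin n → Fin n → ℕ)
    (hcomp : ∀ v : Fin n, ∃ m, 3 ≤ m ∧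
      ∃ e : {u : Fin n // MConn G v u} ≃ Fin m,
        (∀ u w : {u : Fin n // MConn G v u}, G u.1 w.1 = GnkMult m k (e u) (e w)) ∨
        (∀ u w : {u : Fin n // MConn G v u}, G u.1 w.1 = Gnk'Mult m k (e u) (e w))) :
    cycleCount n G ≤ (k - 1) * Fk k (n - 1) + Fk k (n - 2) := by
  have hn : 3 ≤ n := by
    obtain ⟨m, hm, e, -⟩ := hcomp ⟨0, hn⟩
    calc 3 ≤ m := hm
      _ = Fintype.card {u // MConn G ⟨0, hn⟩ u} := by rw [Fintype.card_congr e, Fintype.card_fin]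
      _ ≤ n := (Fintype.card_subtype_le _).trans_eq (Fintype.card_fin n)
  obtain ⟨n, rfl⟩ := Nat.exists_eq_add_of_le' hn
  refine le_trans ?_ (lucasSeq_add_one_le_Fk_add_Fk (n := n + 1) hk)
  rw [cycleCount_eq_numCycles]
  refine numCycles_le_lucasSeq_of_components (by lia) (by lia) fun v => ?_
  obtain ⟨m, hm, e, he | he⟩ := hcomp v
  · exact ⟨m, by lia, _, numCycles_GnkMult_le hm, e, he⟩
  · exact ⟨m, by lia, _, numCycles_Gnk'Mult_le hm hk, e, he⟩

theorem stmt_4 (n k : ℕ) (hn : 4 ≤ n) (hk : 2 ≤ k) (G : Fin n → Fin n → ℕ)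
    (hcomp : ∀ v : Fin n, ∃ m, 4 ≤ m ∧
      ∃ e : {u : Fin n // MConn G v u} ≃ Fin m,
        (∀ u w : {u : Fin n // MConn G v u}, G u.1 w.1 = GnkMult m k (e u) (e w)) ∨
        (∀ u w : {u : Fin n // MConn G v u}, G u.1 w.1 = Gnk'Mult m k (e u) (e w))) :
    cycleCount n G ≤ (k - 1) * Fk k (n - 1) + Fk k (n - 2) :=
  stmt_4_general n k (by lia) hk G fun v =>
    (hcomp v).imp fun _ => And.imp_left (Nat.le_of_succ_le)
end

section
/- For all integers n ≥ 0 and k ≥ 2, F_k(n) ≤ 5·α(k)^n, where α(k) = (k − 1 + √((k−1)² + 4))/2. That is, every digraph with n vertices, every vertex of outdegree exactly k, and every multi-edge between distinct vertices of multiplicity at most k−1 has at most 5·α(k)^n directed cycles. -/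
open scoped Classical
open Finset

/-!
The multiplicities of the arcs between distinct vertices, after the loops are discarded, form a
weight matrix with row sums at most `k` and entries at most `K = k - 1`. The total weight of the
simple paths between two vertices is affine in each row, so it is largest for rows with one arc of
weight `K` and one of weight `1`, leading to different vertices.

For such rows the weight of the paths through a set `X` of interior vertices is bounded by a product
of local values: a vertex contributes a factor close to `α`, the positive root of `α² = Kα + 1`, if
both its targets are available, and a smaller factor if only one is. The proof is by induction on
`X`. The first arc of a path uses up its target `a`, hence lowers the values of all in-neighbours
of `a`. If that is not loss enough, `a` has few in-neighbours, and it is merged into them: a path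
through `a` is a path through an in-neighbour whose arc to `a` is replaced by an arc out of `a`.
Suitable values are `φ` and `2 / φ` for `k = 2`, and `α`, `(1 - u² + u⁴) α` and `α / (1 + u)` with
`u = α⁻¹` for `k ≥ 3`. Path weights are thus at most a constant times `α ^ (#X + 1)`.

Finally, each cycle is counted at its largest vertex `r`. Its first arc leads to one of the `r`
smaller vertices, and the rest is a path back to `r`, so there are at most a constant times `α ^ r`
of these cycles; the sum over `r` is geometric.
-/

namespace PathWeight

variable {V : Type*} [DecidableEq V]

section Semiring

variable {𝕜 : Type*} [CommSemiring 𝕜]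

/-- The total weight of the simple paths from `s` to `t` whose interior vertices lie in `X`, where
the weight of a path is the product of the weights `G u v` of its arcs. The recursion is on the
first interior vertex; it describes simple paths when `s ∉ X` and `t ∉ X`. -/
noncomputable def pathWeight (G : V → V → 𝕜) (t : V) (X : Finset V) (s : V) : 𝕜 :=
  G s t + ∑ y ∈ X.attach, G s y * pathWeight G t (X.erase y) y
termination_by #X
decreasing_by exact card_erase_lt_of_mem y.2

/-- The total weight of the simple paths to `t` with interior in `X` that an arc ending at `y`
can be continued by, including the empty path if `y = t`. -/
noncomputable def entryWeight (G : V → V → 𝕜) (t : V) (X : Finset V) (y : V) : 𝕜 :=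
  (if y = t then 1 else 0) + if y ∈ X then pathWeight G t (X.erase y) y else 0

theorem pathWeight_eq (G : V → V → 𝕜) (t : V) (X : Finset V) (s : V) :
    pathWeight G t X s = G s t + ∑ y ∈ X, G s y * pathWeight G t (X.erase y) y := by
  rw [pathWeight, sum_attach X fun y => G s y * pathWeight G t (X.erase y) y]

theorem pathWeight_eq_sum_entryWeight [Fintype V] (G : V → V → 𝕜) (t : V) (X : Finset V) (s : V) :
    pathWeight G t X s = ∑ y, G s y * entryWeight G t X y := by
  simp only [pathWeight_eq G t X s, entryWeight, mul_add, sum_add_distrib, mul_ite, mul_one,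
    mul_zero, sum_ite_eq', mem_univ, if_true, sum_ite_mem, univ_inter]

theorem pathWeight_congr {G H : V → V → 𝕜} (t : V) {X : Finset V} {s s' : V} (hs : G s = H s')
    (hX : ∀ v ∈ X, G v = H v) : pathWeight G t X s = pathWeight H t X s' := by
  induction X using Finset.strongInduction generalizing s s' with
  | H X ih =>
    rw [pathWeight_eq G, pathWeight_eq H, hs]
    congr 1
    refine sum_congr rfl fun y hy => ?_
    rw [ih _ (erase_ssubset hy) (hX y hy) fun v hv => hX v (mem_of_mem_erase hv)]

theorem pathWeight_update_of_notMem (G : V → V → 𝕜) (t : V) {X : Finset V} {x : V} (hx : x ∉ X)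
    (a : V) : pathWeight (Function.update G x (G a)) t X x = pathWeight G t X a :=
  pathWeight_congr t (by simp) fun _ hv => Function.update_of_ne (ne_of_mem_of_not_mem hv hx) _ _

theorem entryWeight_congr {G H : V → V → 𝕜} (t : V) {X : Finset V} (hX : ∀ v ∈ X, G v = H v)
    (y : V) : entryWeight G t X y = entryWeight H t X y := by
  unfold entryWeight
  congr 1
  split_ifs with hy
  · exact pathWeight_congr t (hX y hy) fun v hv => hX v (mem_of_mem_erase hv)
  · rfl

theorem entryWeight_of_ne {G : V → V → 𝕜} {t : V} {X : Finset V} {y : V} (hyt : y ≠ t)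
    (hy : y ∈ X) : entryWeight G t X y = pathWeight G t (X.erase y) y := by
  simp [entryWeight, hyt, hy]

theorem entryWeight_self (G : V → V → 𝕜) {t : V} {X : Finset V} (ht : t ∉ X) :
    entryWeight G t X t = 1 := by
  simp [entryWeight, ht]

theorem entryWeight_eq_zero (G : V → V → 𝕜) {t : V} {X : Finset V} {y : V}
    (hy : y ∉ insert t X) : entryWeight G t X y = 0 := by
  rw [mem_insert, not_or] at hy
  simp [entryWeight, hy]

end Semiring

theorem update_row_nonneg {𝕜 : Type*} [Zero 𝕜] [LE 𝕜] {G : V → V → 𝕜} (hG : ∀ u v, 0 ≤ G u v)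
    (x a u v : V) : 0 ≤ Function.update G x (G a) u v := by
  rcases eq_or_ne u x with rfl | h
  · simpa using hG a v
  · simpa [Function.update_of_ne h] using hG u v

section OrderedSemiring

variable {𝕜 : Type*} [CommSemiring 𝕜] [PartialOrder 𝕜] [IsOrderedRing 𝕜] {G : V → V → 𝕜}

theorem pathWeight_nonneg (hG : ∀ u v, 0 ≤ G u v) (t : V) (X : Finset V) (s : V) :
    0 ≤ pathWeight G t X s := by
  induction X using Finset.strongInduction generalizing s with
  | H X ih =>
    rw [pathWeight_eq]
    exact add_nonneg (hG _ _)
      (sum_nonneg fun y hy => mul_nonneg (hG _ _) (ih _ (erase_ssubset hy) y))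

theorem entryWeight_nonneg (hG : ∀ u v, 0 ≤ G u v) (t : V) (X : Finset V) (y : V) :
    0 ≤ entryWeight G t X y := by
  have := pathWeight_nonneg hG t (X.erase y) y
  unfold entryWeight
  exact add_nonneg (by split_ifs <;> simp) (by split_ifs <;> simp [this])

theorem exists_pathWeight_update_eq [Fintype V] (hG : ∀ u v, 0 ≤ G u v) (t v : V) {X : Finset V}
    {s : V} (hs : s ∉ X) :
    ∃ (A : 𝕜) (B : V → 𝕜), (∀ y, 0 ≤ B y) ∧
      ∀ r : V → 𝕜, pathWeight (Function.update G v r) t X s = A + ∑ y, r y * B y := by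
  induction X using Finset.strongInduction generalizing s with
  | H X ih =>
    rcases eq_or_ne s v with rfl | hsv
    · refine ⟨0, entryWeight G t X, entryWeight_nonneg hG t X, fun r => ?_⟩
      rw [pathWeight_eq_sum_entryWeight, Function.update_self, zero_add]
      refine sum_congr rfl fun y _ => ?_
      rw [entryWeight_congr t fun v hv => Function.update_of_ne (ne_of_mem_of_not_mem hv hs) _ _]
    · choose! A B hB h using fun y (hy : y ∈ X) => ih _ (erase_ssubset hy) (notMem_erase y X)
      refine ⟨G s t + ∑ y ∈ X, G s y * A y, fun z => ∑ y ∈ X, G s y * B y z,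
        fun z => sum_nonneg fun y hy => mul_nonneg (hG _ _) (hB y hy z), fun r => ?_⟩
      rw [pathWeight_eq, Function.update_of_ne hsv, add_assoc]
      congr 1
      simp only [mul_sum]
      rw [sum_comm, ← sum_add_distrib]
      refine sum_congr rfl fun y hy => ?_
      rw [h y hy, mul_add, mul_sum]
      congr 1
      exact sum_congr rfl fun z _ => by ring

theorem sum_mul_pathWeight_le {X : Finset V} (hG : ∀ u v, 0 ≤ G u v) (t s : V) :
    ∑ y ∈ X, G s y * pathWeight G t (X.erase y) y ≤ pathWeight G t X s := by
  rw [pathWeight_eq]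
  exact le_add_of_nonneg_left (hG s t)

/-- A path through `a` enters `a` from a unique vertex `x`, and skipping `a` gives a path in the
weights where `x` has been given the row of `a`. -/
theorem pathWeight_le_add_sum_update (hG : ∀ u v, 0 ≤ G u v) (t : V) {a : V} {X : Finset V}
    {s : V} (hs : s ∉ X) (ha : a ∈ X) :
    pathWeight G t X s ≤ pathWeight G t (X.erase a) s + ∑ x ∈ insert s (X.erase a),
      G x a * pathWeight (Function.update G x (G a)) t (X.erase a) s := by
  induction X using Finset.strongInduction generalizing s with
  | H X ih =>
    have hsa : s ∉ X.erase a := fun h => hs (mem_of_mem_erase h)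
    have later : ∀ y ∈ X.erase a, G s y * pathWeight G t (X.erase y) y ≤
        G s y * pathWeight G t ((X.erase a).erase y) y + ∑ x ∈ X.erase a, G x a *
          (G s y * pathWeight (Function.update G x (G a)) t ((X.erase a).erase y) y) := by
      intro y hy
      have bound := ih _ (erase_ssubset (mem_of_mem_erase hy)) (notMem_erase y X)
        (mem_erase.2 ⟨(ne_of_mem_erase hy).symm, ha⟩)
      rw [erase_right_comm, insert_erase hy] at bound
      refine (mul_le_mul_of_nonneg_left bound (hG s y)).trans_eq ?_
      rw [mul_add, mul_sum]
      simp only [mul_left_comm]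
    have merge : ∀ x ∈ X.erase a, G x a * ∑ y ∈ X.erase a, G s y *
          pathWeight (Function.update G x (G a)) t ((X.erase a).erase y) y ≤
        G x a * pathWeight (Function.update G x (G a)) t (X.erase a) s := fun x hx => by
      refine mul_le_mul_of_nonneg_left ?_ (hG x a)
      have := sum_mul_pathWeight_le (X := X.erase a) (update_row_nonneg hG x a) t s
      rwa [Function.update_of_ne (ne_of_mem_of_not_mem hx hsa).symm] at this
    rw [sum_insert hsa, pathWeight_update_of_notMem G t hsa a]
    calc pathWeight G t X s
        = G s t + (G s a * pathWeight G t (X.erase a) a +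
            ∑ y ∈ X.erase a, G s y * pathWeight G t (X.erase y) y) := by
          rw [pathWeight_eq, ← add_sum_erase X _ ha]
      _ ≤ G s t + (G s a * pathWeight G t (X.erase a) a +
            (∑ y ∈ X.erase a, G s y * pathWeight G t ((X.erase a).erase y) y +
              ∑ x ∈ X.erase a,
                G x a * pathWeight (Function.update G x (G a)) t (X.erase a) s)) := by
          gcongr
          refine (sum_le_sum later).trans ?_
          rw [sum_add_distrib, sum_comm]
          simp only [← mul_sum]
          exact add_le_add le_rfl (sum_le_sum merge)
      _ = _ := by rw [pathWeight_eq G t (X.erase a) s]; ring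

end OrderedSemiring

/-- The row of a weight matrix with an arc of weight `K` to `a` and an arc of weight `1` to `b`. -/
def arcRow {𝕜 : Type*} [Semiring 𝕜] (K : 𝕜) (a b y : V) : 𝕜 :=
  (if y = a then K else 0) + if y = b then 1 else 0

/-- A choice, at every vertex, of a heavy and a light out-arc with different targets. With weight
`K` on the heavy arcs and `1` on the light ones, these are the extreme points among the weights
with entries in `[0, K]` and row sums at most `K + 1`. -/
structure TwoArcs (V : Type*) where
  heavy : V → V
  light : V → V
  heavy_ne_light : ∀ v, heavy v ≠ light v

namespace TwoArcs

/-- The weight matrix with weight `K` on the heavy arcs and `1` on the light arcs. -/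
def arcWeight {𝕜 : Type*} [Semiring 𝕜] (D : TwoArcs V) (K : 𝕜) (v : V) : V → 𝕜 :=
  arcRow K (D.heavy v) (D.light v)

/-- There is an arc from `x` to `a`. -/
def Adj (D : TwoArcs V) (x a : V) : Prop :=
  D.heavy x = a ∨ D.light x = a

/-- The two arcs out of `v` are replaced by arcs to `a` and `b`. -/
def update (D : TwoArcs V) (v : V) {a b : V} (hab : a ≠ b) : TwoArcs V where
  heavy := Function.update D.heavy v a
  light := Function.update D.light v b
  heavy_ne_light u := by
    rcases eq_or_ne u v with rfl | h
    · simpa using hab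
    · simpa [h] using D.heavy_ne_light u

/-- The targets of the arcs out of `x` become those of the arcs out of `a`: the result of merging
`a` into its in-neighbour `x`. -/
def redirect (D : TwoArcs V) (x a : V) : TwoArcs V :=
  D.update x (D.heavy_ne_light a)

end TwoArcs

section Semiring

variable {𝕜 : Type*} [CommSemiring 𝕜] (K : 𝕜) (D : TwoArcs V)

theorem sum_arcRow_mul [Fintype V] (a b : V) (f : V → 𝕜) :
    ∑ y, arcRow K a b y * f y = K * f a + f b := by
  simp [arcRow, add_mul, sum_add_distrib, ite_mul]

theorem arcWeight_eq_zero {x a : V} (hxa : ¬ D.Adj x a) : D.arcWeight K x a = 0 := by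
  rw [TwoArcs.Adj, not_or] at hxa
  simp [TwoArcs.arcWeight, arcRow, Ne.symm hxa.1, Ne.symm hxa.2]

theorem arcWeight_update (v : V) {a b : V} (hab : a ≠ b) :
    (D.update v hab).arcWeight K = Function.update (D.arcWeight K) v (arcRow K a b) := by
  funext u
  rcases eq_or_ne u v with rfl | h
  · simp [TwoArcs.arcWeight, TwoArcs.update]
  · simp [TwoArcs.arcWeight, TwoArcs.update, h]

theorem arcWeight_redirect (x a : V) :
    (D.redirect x a).arcWeight K = Function.update (D.arcWeight K) x (D.arcWeight K a) :=
  arcWeight_update K D x _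

theorem pathWeight_arcWeight (t : V) (X : Finset V) (s : V) :
    pathWeight (D.arcWeight K) t X s = K * entryWeight (D.arcWeight K) t X (D.heavy s) +
      entryWeight (D.arcWeight K) t X (D.light s) := by
  simp only [pathWeight_eq _ t X s, TwoArcs.arcWeight, arcRow, entryWeight, add_mul, ite_mul,
    zero_mul, one_mul, sum_add_distrib, sum_ite_eq', eq_comm (a := t)]
  split_ifs <;> ring

theorem arcRow_nonneg [PartialOrder 𝕜] [IsOrderedRing 𝕜] {K : 𝕜} (hK : 0 ≤ K) (a b y : V) :
    0 ≤ arcRow K a b y :=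
  add_nonneg (by split_ifs <;> simp [hK]) (by split_ifs <;> simp)

theorem arcWeight_nonneg [PartialOrder 𝕜] [IsOrderedRing 𝕜] {K : 𝕜} (hK : 0 ≤ K) (u v : V) :
    0 ≤ D.arcWeight K u v :=
  arcRow_nonneg hK _ _ v

end Semiring

section LinearOrderedRing

variable {𝕜 : Type*} [CommRing 𝕜] [LinearOrder 𝕜] [IsStrictOrderedRing 𝕜] [Fintype V] [Nontrivial V]
  {K : 𝕜}

omit [DecidableEq V] in
theorem exists_sum_mul_le {r B : V → 𝕜} (hB : ∀ y, 0 ≤ B y) (hr : ∀ y, 0 ≤ r y)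
    (hrK : ∀ y, r y ≤ K) (hsum : ∑ y, r y ≤ K + 1) :
    ∃ a b : V, a ≠ b ∧ ∑ y, r y * B y ≤ K * B a + B b := by
  obtain ⟨a, -, ha⟩ := exists_max_image univ B univ_nonempty
  obtain ⟨b, hb, hb_max⟩ := exists_max_image (univ.erase a) B ((univ_nontrivial).erase_nonempty)
  refine ⟨a, b, (ne_of_mem_erase hb).symm, ?_⟩
  have hsplit := add_sum_erase univ r (mem_univ a)
  calc ∑ y, r y * B y = r a * B a + ∑ y ∈ univ.erase a, r y * B y :=
        (add_sum_erase univ _ (mem_univ a)).symm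
    _ ≤ r a * B a + (∑ y ∈ univ.erase a, r y) * B b := by
        rw [sum_mul]
        gcongr with y hy
        exacts [hr y, hb_max y hy]
    _ ≤ r a * B a + (K + 1 - r a) * B b := by
        gcongr
        exacts [hB b, by linarith]
    _ = r a * B a + (K - r a) * B b + B b := by ring
    _ ≤ r a * B a + (K - r a) * B a + B b := by
        gcongr
        exacts [sub_nonneg.2 (hrK a), ha b (mem_univ b)]
    _ = K * B a + B b := by ring

theorem exists_pathWeight_le_update {G : V → V → 𝕜} (hG : ∀ u v, 0 ≤ G u v) {v : V}
    (hGK : ∀ y, G v y ≤ K) (hsum : ∑ y, G v y ≤ K + 1) (t : V) {X : Finset V} {s : V}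
    (hs : s ∉ X) :
    ∃ a b : V, a ≠ b ∧
      pathWeight G t X s ≤ pathWeight (Function.update G v (arcRow K a b)) t X s := by
  obtain ⟨A, B, hB, hAB⟩ := exists_pathWeight_update_eq hG t v hs
  obtain ⟨a, b, hab, hle⟩ := exists_sum_mul_le hB (hG v) hGK hsum
  refine ⟨a, b, hab, ?_⟩
  calc pathWeight G t X s = A + ∑ y, G v y * B y := by rw [← hAB, Function.update_eq_self]
    _ ≤ A + (K * B a + B b) := by gcongr
    _ = _ := by rw [hAB, sum_arcRow_mul]

theorem exists_pathWeight_le_arcWeight (hK : 0 ≤ K) {G : V → V → 𝕜} (hG : ∀ u v, 0 ≤ G u v)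
    (hGK : ∀ u v, G u v ≤ K) (hsum : ∀ u, ∑ v, G u v ≤ K + 1) (t : V) {X : Finset V} {s : V}
    (hs : s ∉ X) :
    ∃ D : TwoArcs V, pathWeight G t X s ≤ pathWeight (D.arcWeight K) t X s := by
  suffices h : ∀ S : Finset V, ∃ D : TwoArcs V,
      pathWeight G t X s ≤ pathWeight (S.piecewise (D.arcWeight K) G) t X s by
    simpa using h univ
  intro S
  induction S using Finset.induction_on with
  | empty =>
    obtain ⟨a, b, hab⟩ := exists_pair_ne V
    exact ⟨⟨fun _ => a, fun _ => b, fun _ => hab⟩, by simp⟩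
  | insert v S hv ih =>
    obtain ⟨D, hD⟩ := ih
    have hH : ∀ u y, 0 ≤ S.piecewise (D.arcWeight K) G u y := fun u y => by
      by_cases hu : u ∈ S
      · simpa [hu] using arcWeight_nonneg D hK u y
      · simpa [hu] using hG u y
    obtain ⟨a, b, hab, hle⟩ := exists_pathWeight_le_update hH (v := v) (by simpa [hv] using hGK v)
      (by simpa [hv] using hsum v) t hs
    refine ⟨D.update v hab, hD.trans (hle.trans_eq ?_)⟩
    rw [arcWeight_update, piecewise_insert, Function.update_self]
    congr 1
    funext u
    rcases eq_or_ne u v with rfl | h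
    · simp
    · by_cases hu : u ∈ S <;> simp [h, hu]

end LinearOrderedRing

/-- The factor that a vertex contributes to the bound on path weights, depending on which of the
targets of its two arcs are available: both, only the heavy one, only the light one, or none, in
which case the factor is `1`. -/
structure ArcValues where
  both : ℝ
  heavy : ℝ
  light : ℝ
  one_le_heavy : 1 ≤ heavy
  one_le_light : 1 ≤ light
  heavy_le_both : heavy ≤ both
  light_le_both : light ≤ both

namespace ArcValues

variable (w : ArcValues) (D : TwoArcs V)

/-- The value of the arcs out of `v` when the vertices of `S` are available. -/
noncomputable def rowValue (v : V) (S : Finset V) : ℝ :=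
  if D.heavy v ∈ S then if D.light v ∈ S then w.both else w.heavy
  else if D.light v ∈ S then w.light else 1

/-- The value of the vertex `v`: a path at `v` can no longer use `v` as a target. -/
noncomputable def vertexValue (S : Finset V) (v : V) : ℝ :=
  w.rowValue D v (S.erase v)

/-- The product of the values of the vertices in `Y`, which bounds path weights. -/
noncomputable def potential (S Y : Finset V) : ℝ :=
  ∏ v ∈ Y, w.vertexValue D S v

variable {D} {v a : V} {S S' Y L : Finset V} {q : ℝ}

theorem one_le_both : 1 ≤ w.both := w.one_le_heavy.trans w.heavy_le_both

theorem one_le_rowValue : 1 ≤ w.rowValue D v S := by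
  unfold rowValue
  split_ifs
  exacts [w.one_le_both, w.one_le_heavy, w.one_le_light, le_rfl]

theorem rowValue_le_both : w.rowValue D v S ≤ w.both := by
  unfold rowValue
  split_ifs
  exacts [le_rfl, w.heavy_le_both, w.light_le_both, w.one_le_both]

theorem rowValue_of_mem_of_mem (hh : D.heavy v ∈ S) (hl : D.light v ∈ S) :
    w.rowValue D v S = w.both := by
  simp [rowValue, hh, hl]

theorem rowValue_of_mem_of_notMem (hh : D.heavy v ∈ S) (hl : D.light v ∉ S) :
    w.rowValue D v S = w.heavy := by
  simp [rowValue, hh, hl]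

theorem rowValue_of_notMem_of_mem (hh : D.heavy v ∉ S) (hl : D.light v ∈ S) :
    w.rowValue D v S = w.light := by
  simp [rowValue, hh, hl]

theorem rowValue_of_notMem_of_notMem (hh : D.heavy v ∉ S) (hl : D.light v ∉ S) :
    w.rowValue D v S = 1 := by
  simp [rowValue, hh, hl]

theorem rowValue_mono (hS : S' ⊆ S) : w.rowValue D v S' ≤ w.rowValue D v S := by
  by_cases hh : D.heavy v ∈ S' <;> by_cases hl : D.light v ∈ S'
  · rw [w.rowValue_of_mem_of_mem (hS hh) (hS hl)]
    exact w.rowValue_le_both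
  · rw [w.rowValue_of_mem_of_notMem hh hl]
    simp only [rowValue, hS hh, if_true]
    split_ifs
    exacts [w.heavy_le_both, le_rfl]
  · rw [w.rowValue_of_notMem_of_mem hh hl]
    simp only [rowValue, hS hl, if_true]
    split_ifs
    exacts [w.light_le_both, le_rfl]
  · rw [w.rowValue_of_notMem_of_notMem hh hl]
    exact w.one_le_rowValue

theorem rowValue_le_heavy (hl : D.light v ∉ S) : w.rowValue D v S ≤ w.heavy := by
  rw [rowValue, if_neg hl, if_neg hl]
  split_ifs
  exacts [le_rfl, w.one_le_heavy]

theorem rowValue_redirect_self : w.rowValue (D.redirect v a) v S = w.rowValue D a S := by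
  simp [rowValue, TwoArcs.redirect, TwoArcs.update]

theorem vertexValue_redirect_of_ne {x : V} (hvx : v ≠ x) :
    w.vertexValue (D.redirect x a) S v = w.vertexValue D S v := by
  simp [vertexValue, rowValue, TwoArcs.redirect, TwoArcs.update, hvx]

theorem one_le_vertexValue : 1 ≤ w.vertexValue D S v := w.one_le_rowValue

theorem vertexValue_nonneg : 0 ≤ w.vertexValue D S v := zero_le_one.trans w.one_le_vertexValue

theorem vertexValue_le_both : w.vertexValue D S v ≤ w.both := w.rowValue_le_both

theorem vertexValue_mono (hS : S' ⊆ S) : w.vertexValue D S' v ≤ w.vertexValue D S v :=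
  w.rowValue_mono (erase_subset_erase v hS)

theorem vertexValue_of_notMem (hv : v ∉ S) : w.vertexValue D S v = w.rowValue D v S := by
  rw [vertexValue, erase_eq_of_notMem hv]

theorem one_le_potential : 1 ≤ w.potential D S Y :=
  prod_const_one.symm.trans_le
    (prod_le_prod (fun _ _ => zero_le_one) fun _ _ => w.one_le_vertexValue)

theorem potential_nonneg : 0 ≤ w.potential D S Y := zero_le_one.trans w.one_le_potential

theorem potential_le_pow : w.potential D S Y ≤ w.both ^ #Y :=
  (prod_le_prod (fun _ _ => w.vertexValue_nonneg) fun _ _ => w.vertexValue_le_both).trans_eq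
    (prod_const _)

theorem vertexValue_mul_potential_erase (hv : v ∈ Y) :
    w.vertexValue D S v * w.potential D S (Y.erase v) = w.potential D S Y :=
  mul_prod_erase Y _ hv

theorem potential_mono (hS : S' ⊆ S) : w.potential D S' Y ≤ w.potential D S Y :=
  prod_le_prod (fun _ _ => w.vertexValue_nonneg) fun _ _ => w.vertexValue_mono hS

theorem potential_le_pow_mul (hS : S' ⊆ S) (hL : L ⊆ Y)
    (hq : ∀ v ∈ L, w.vertexValue D S' v ≤ q * w.vertexValue D S v) :
    w.potential D S' Y ≤ q ^ #L * w.potential D S Y := by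
  have hpow : q ^ #L = ∏ v ∈ Y, if v ∈ L then q else 1 := by
    rw [prod_ite_mem, inter_eq_right.2 hL, prod_const]
  rw [hpow, potential, potential, ← prod_mul_distrib]
  refine prod_le_prod (fun _ _ => w.vertexValue_nonneg) fun v _ => ?_
  split_ifs with hv
  · exact hq v hv
  · simpa using w.vertexValue_mono hS

theorem potential_le_mul (hS : S' ⊆ S) (hv : v ∈ Y)
    (hq : w.vertexValue D S' v ≤ q * w.vertexValue D S v) :
    w.potential D S' Y ≤ q * w.potential D S Y := by
  simpa using w.potential_le_pow_mul hS (singleton_subset_iff.2 hv) (q := q)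
    (fun u hu => by rwa [mem_singleton.1 hu])

/-- The loss of one of its available targets multiplies the value of a vertex by at most `q`. -/
structure IsLossRate (q : ℝ) : Prop where
  heavy_le : w.heavy ≤ q * w.both
  light_le : w.light ≤ q * w.both
  one_le_mul_heavy : 1 ≤ q * w.heavy
  one_le_mul_light : 1 ≤ q * w.light

theorem rowValue_le_mul_of_heavy_lost (hS : S' ⊆ S) (hh : D.heavy v ∈ S) (hh' : D.heavy v ∉ S')
    (hlight : w.light ≤ q * w.both) (hone : 1 ≤ q * w.heavy) :
    w.rowValue D v S' ≤ q * w.rowValue D v S := by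
  by_cases hl : D.light v ∈ S
  · rw [w.rowValue_of_mem_of_mem hh hl]
    simp only [rowValue, hh', if_false]
    split_ifs
    exacts [hlight, w.one_le_light.trans hlight]
  · rwa [w.rowValue_of_mem_of_notMem hh hl,
      w.rowValue_of_notMem_of_notMem hh' fun hl' => hl (hS hl')]

theorem rowValue_le_mul_of_light_lost (hS : S' ⊆ S) (hh : D.heavy v ∉ S) (hl : D.light v ∈ S)
    (hl' : D.light v ∉ S') (hone : 1 ≤ q * w.light) :
    w.rowValue D v S' ≤ q * w.rowValue D v S := by
  rwa [w.rowValue_of_notMem_of_mem hh hl,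
    w.rowValue_of_notMem_of_notMem (fun hh' => hh (hS hh')) hl']

variable {w} in
theorem IsLossRate.rowValue_le (hq : w.IsLossRate q) (hS : S' ⊆ S) (ha : a ∈ S) (ha' : a ∉ S')
    (hva : D.Adj v a) : w.rowValue D v S' ≤ q * w.rowValue D v S := by
  by_cases hh : D.heavy v ∈ S <;> by_cases hh' : D.heavy v ∈ S'
  · obtain rfl : D.light v = a := hva.resolve_left fun h => ha' (h ▸ hh')
    rw [w.rowValue_of_mem_of_mem hh ha, w.rowValue_of_mem_of_notMem hh' ha']
    exact hq.heavy_le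
  · exact w.rowValue_le_mul_of_heavy_lost hS hh hh' hq.light_le hq.one_le_mul_heavy
  · exact absurd (hS hh') hh
  · obtain rfl : D.light v = a := hva.resolve_left fun h => hh (h ▸ ha)
    exact w.rowValue_le_mul_of_light_lost hS hh ha ha' hq.one_le_mul_light

variable {w} in
theorem IsLossRate.vertexValue_le (hq : w.IsLossRate q) (hS : S' ⊆ S) (ha : a ∈ S) (ha' : a ∉ S')
    (hne : v ≠ a) (hva : D.Adj v a) : w.vertexValue D S' v ≤ q * w.vertexValue D S v :=
  hq.rowValue_le (erase_subset_erase v hS) (mem_erase.2 ⟨hne.symm, ha⟩)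
    (fun h => ha' (mem_of_mem_erase h)) hva

end ArcValues

/-- With heavy weight `K`, the weight of the paths to `t` with interior in `Y` is at most `c` times
the potential, whatever the choice of arcs and the start. -/
def PathBound (K c : ℝ) (w : ArcValues) (t : V) (Y : Finset V) : Prop :=
  ∀ (D : TwoArcs V), ∀ s ∉ Y, s ≠ t →
    pathWeight (D.arcWeight K) t Y s ≤ c * w.potential D (insert t Y) (insert s Y)

/-- The induction hypothesis for `PathBound K c w t X`. -/
structure PathBoundBelow (K c : ℝ) (w : ArcValues) (t : V) (X : Finset V) : Prop where
  zero_le : 0 ≤ K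
  one_le : 1 ≤ c
  notMem : t ∉ X
  bound : ∀ Y ⊂ X, PathBound K c w t Y

namespace PathBoundBelow

variable {K c : ℝ} {w : ArcValues} {t a b : V} {X : Finset V} {D : TwoArcs V}
  (hB : PathBoundBelow K c w t X)

include hB

theorem zero_le_const : 0 ≤ c := zero_le_one.trans hB.one_le

theorem ne (ha : a ∈ X) : t ≠ a := (ne_of_mem_of_not_mem ha hB.notMem).symm

theorem erase (ha : a ∈ X) : PathBoundBelow K c w t (X.erase a) where
  zero_le := hB.zero_le
  one_le := hB.one_le
  notMem h := hB.notMem (mem_of_mem_erase h)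
  bound _ hY := hB.bound _ (hY.trans (erase_ssubset ha))

theorem entryWeight_eq (ha : a ∈ X) :
    entryWeight (D.arcWeight K) t X a = pathWeight (D.arcWeight K) t (X.erase a) a :=
  entryWeight_of_ne (hB.ne ha).symm ha

theorem entryWeight_le_erase (ha : a ∈ X) :
    entryWeight (D.arcWeight K) t X a ≤ c * w.potential D ((insert t X).erase a) X := by
  have h := hB.bound _ (erase_ssubset ha) D a (notMem_erase a X) (hB.ne ha).symm
  rwa [insert_erase ha, ← erase_insert_of_ne (hB.ne ha), ← hB.entryWeight_eq ha] at h

theorem entryWeight_le (y : V) :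
    entryWeight (D.arcWeight K) t X y ≤ c * w.potential D (insert t X) X := by
  have hpot : 1 ≤ c * w.potential D (insert t X) X :=
    one_le_mul_of_one_le_of_one_le hB.one_le w.one_le_potential
  by_cases hy : y ∈ insert t X
  · rcases mem_insert.1 hy with rfl | hy
    · rwa [entryWeight_self _ hB.notMem]
    · exact (hB.entryWeight_le_erase hy).trans
        (mul_le_mul_of_nonneg_left (w.potential_mono (erase_subset _ _)) hB.zero_le_const)
  · rw [entryWeight_eq_zero _ hy]
    exact zero_le_one.trans hpot

theorem entryWeight_erase_le (ha : a ∈ X) (y : V) :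
    entryWeight (D.arcWeight K) t (X.erase a) y ≤
      c * w.potential D ((insert t X).erase a) (X.erase a) := by
  rw [erase_insert_of_ne (hB.ne ha)]
  exact (hB.erase ha).entryWeight_le y

theorem entryWeight_erase_eq_zero (ha : a ∈ X) {y : V} (hy : y ∉ (insert t X).erase a) :
    entryWeight (D.arcWeight K) t (X.erase a) y = 0 :=
  entryWeight_eq_zero _ (by rwa [← erase_insert_of_ne (hB.ne ha)])

theorem entryWeight_le_of_heavy_notMem (ha : a ∈ X) (hh : D.heavy a ∉ (insert t X).erase a) :
    entryWeight (D.arcWeight K) t X a ≤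
      c * w.potential D ((insert t X).erase a) (X.erase a) := by
  rw [hB.entryWeight_eq ha, pathWeight_arcWeight, hB.entryWeight_erase_eq_zero ha hh, mul_zero,
    zero_add]
  exact hB.entryWeight_erase_le ha _

theorem entryWeight_le_of_light_notMem (ha : a ∈ X) (hl : D.light a ∉ (insert t X).erase a) :
    entryWeight (D.arcWeight K) t X a ≤
      K * (c * w.potential D ((insert t X).erase a) (X.erase a)) := by
  rw [hB.entryWeight_eq ha, pathWeight_arcWeight, hB.entryWeight_erase_eq_zero ha hl, add_zero]
  exact mul_le_mul_of_nonneg_left (hB.entryWeight_erase_le ha _) hB.zero_le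

theorem entryWeight_eq_zero_of_notMem (ha : a ∈ X) (hh : D.heavy a ∉ (insert t X).erase a)
    (hl : D.light a ∉ (insert t X).erase a) : entryWeight (D.arcWeight K) t X a = 0 := by
  rw [hB.entryWeight_eq ha, pathWeight_arcWeight, hB.entryWeight_erase_eq_zero ha hh,
    hB.entryWeight_erase_eq_zero ha hl, mul_zero, add_zero]

theorem entryWeight_le_mul_of_vertexValue_le {x : V} {q : ℝ} (ha : a ∈ X) (hx : x ∈ X)
    (hq : w.vertexValue D ((insert t X).erase a) x ≤ q * w.vertexValue D (insert t X) x) :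
    entryWeight (D.arcWeight K) t X a ≤ q * (c * w.potential D (insert t X) X) := by
  rw [mul_left_comm]
  exact (hB.entryWeight_le_erase ha).trans
    (mul_le_mul_of_nonneg_left (w.potential_le_mul (erase_subset _ _) hx hq) hB.zero_le_const)

theorem potential_erase_le_mul {q : ℝ} (ha : a ∈ X)
    (hq : 1 ≤ q * w.vertexValue D (insert t X) a) {S : Finset V} (hS : S ⊆ insert t X) :
    c * w.potential D S (X.erase a) ≤ q * (c * w.potential D (insert t X) X) := by
  have hpot := w.potential_nonneg (D := D) (S := insert t X) (Y := X.erase a)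
  calc c * w.potential D S (X.erase a) ≤ c * w.potential D (insert t X) (X.erase a) :=
        mul_le_mul_of_nonneg_left (w.potential_mono hS) hB.zero_le_const
    _ ≤ c * (q * w.vertexValue D (insert t X) a * w.potential D (insert t X) (X.erase a)) :=
        mul_le_mul_of_nonneg_left (le_mul_of_one_le_left hpot hq) hB.zero_le_const
    _ = q * (c * w.potential D (insert t X) X) := by
        rw [mul_assoc, w.vertexValue_mul_potential_erase ha, mul_left_comm]

theorem entryWeight_le_mul_of_heavy_notMem {q : ℝ} (ha : a ∈ X)
    (hh : D.heavy a ∉ (insert t X).erase a) (hq : 1 ≤ q * w.light) :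
    entryWeight (D.arcWeight K) t X a ≤ q * (c * w.potential D (insert t X) X) := by
  by_cases hl : D.light a ∈ (insert t X).erase a
  · refine (hB.entryWeight_le_of_heavy_notMem ha hh).trans
      (hB.potential_erase_le_mul ha ?_ (erase_subset _ _))
    rwa [ArcValues.vertexValue, w.rowValue_of_notMem_of_mem hh hl]
  · rw [hB.entryWeight_eq_zero_of_notMem ha hh hl]
    have hq' : 0 ≤ q := (pos_of_mul_pos_left (zero_lt_one.trans_le hq)
      (zero_le_one.trans w.one_le_light)).le
    exact mul_nonneg hq' (mul_nonneg hB.zero_le_const w.potential_nonneg)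

theorem entryWeight_le_merge (ha : a ∈ X) (hb : b ∈ X) (hab : a ≠ b) :
    entryWeight (D.arcWeight K) t X b ≤
      c * (w.potential D (((insert t X).erase b).erase a) (X.erase a) +
        ∑ x ∈ X.erase a, D.arcWeight K x a *
          (w.rowValue D a ((((insert t X).erase b).erase a).erase x) *
            w.potential D (((insert t X).erase b).erase a) ((X.erase a).erase x))) := by
  have hvertices : insert b ((X.erase b).erase a) = X.erase a := by
    rw [erase_right_comm, insert_erase (mem_erase.2 ⟨hab.symm, hb⟩)]
  have havailable : insert t ((X.erase b).erase a) = ((insert t X).erase b).erase a := by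
    rw [erase_insert_of_ne (hB.ne hb), erase_insert_of_ne (hB.ne ha)]
  have bound (D' : TwoArcs V) : pathWeight (D'.arcWeight K) t ((X.erase b).erase a) b ≤
      c * w.potential D' (((insert t X).erase b).erase a) (X.erase a) := by
    have h := hB.bound ((X.erase b).erase a)
      ((erase_subset _ _).trans_ssubset (erase_ssubset hb)) D' b
      (by simp) (hB.ne hb).symm
    rwa [hvertices, havailable] at h
  have hmerge := pathWeight_le_add_sum_update (arcWeight_nonneg D hB.zero_le) t
    (notMem_erase b X) (mem_erase.2 ⟨hab, ha⟩)
  rw [hvertices, ← hB.entryWeight_eq hb] at hmerge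
  refine hmerge.trans ?_
  rw [mul_add, mul_sum]
  refine add_le_add (bound D) (sum_le_sum fun x hx => ?_)
  rw [mul_left_comm, ← arcWeight_redirect]
  refine mul_le_mul_of_nonneg_left ((bound _).trans_eq ?_) (arcWeight_nonneg D hB.zero_le x a)
  rw [← w.vertexValue_mul_potential_erase hx, ArcValues.vertexValue, w.rowValue_redirect_self]
  congr 2
  exact prod_congr rfl fun v hv => w.vertexValue_redirect_of_ne (ne_of_mem_erase hv)

theorem entryWeight_le_of_forall_not_adj (ha : a ∈ X) (hb : b ∈ X) (hab : a ≠ b)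
    (hin : ∀ x ∈ X.erase a, ¬ D.Adj x a) :
    entryWeight (D.arcWeight K) t X b ≤ c * w.potential D (insert t X) (X.erase a) := by
  refine (hB.entryWeight_le_merge ha hb hab).trans
    (mul_le_mul_of_nonneg_left ?_ hB.zero_le_const)
  rw [sum_eq_zero fun x hx => by rw [arcWeight_eq_zero K D (hin x hx), zero_mul], add_zero]
  exact w.potential_mono ((erase_subset _ _).trans (erase_subset _ _))

theorem entryWeight_le_mul_of_forall_not_adj {q : ℝ} (ha : a ∈ X) (hb : b ∈ X) (hab : a ≠ b)
    (hin : ∀ x ∈ X.erase a, ¬ D.Adj x a) (hq : 1 ≤ q * w.vertexValue D (insert t X) a) :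
    entryWeight (D.arcWeight K) t X b ≤ q * (c * w.potential D (insert t X) X) :=
  (hB.entryWeight_le_of_forall_not_adj ha hb hab hin).trans
    (hB.potential_erase_le_mul ha hq Subset.rfl)

end PathBoundBelow

/-- It suffices to bound the sum of the entry weights of two distinct available targets: if one of
the two arcs out of the start has an unavailable target, the other one is easily bounded. -/
theorem pathBound_of_forall_pair {K c : ℝ} {w : ArcValues} {t : V} (hK : 0 ≤ K)
    (hKw : K ≤ w.heavy) (hc : 1 ≤ c)
    (hpair : ∀ (X : Finset V) (D : TwoArcs V), PathBoundBelow K c w t X →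
      ∀ a ∈ insert t X, ∀ b ∈ insert t X, a ≠ b →
        K * entryWeight (D.arcWeight K) t X a + entryWeight (D.arcWeight K) t X b ≤
          w.both * (c * w.potential D (insert t X) X)) {X : Finset V} (ht : t ∉ X) :
    PathBound K c w t X := by
  induction X using Finset.strongInduction with
  | H X ih =>
  have hB : PathBoundBelow K c w t X := ⟨hK, hc, ht, fun Y hY => ih Y hY fun h => ht (hY.1 h)⟩
  intro D s hs hst
  have hs' : s ∉ insert t X := by simp [hst, hs]
  have hpot : 0 ≤ c * w.potential D (insert t X) X :=
    mul_nonneg hB.zero_le_const w.potential_nonneg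
  have hle := hB.entryWeight_le (D := D)
  rw [pathWeight_arcWeight, ← w.vertexValue_mul_potential_erase (mem_insert_self s X),
    erase_insert hs, w.vertexValue_of_notMem hs', mul_left_comm]
  by_cases hh : D.heavy s ∈ insert t X <;> by_cases hl : D.light s ∈ insert t X
  · rw [w.rowValue_of_mem_of_mem hh hl]
    exact hpair X D hB _ hh _ hl (D.heavy_ne_light s)
  · rw [w.rowValue_of_mem_of_notMem hh hl, entryWeight_eq_zero _ hl, add_zero]
    exact mul_le_mul hKw (hle _)
      (entryWeight_nonneg (arcWeight_nonneg D hK) t X _) (hK.trans hKw)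
  · rw [w.rowValue_of_notMem_of_mem hh hl, entryWeight_eq_zero _ hh, mul_zero, zero_add]
    exact (hle _).trans (le_mul_of_one_le_left hpot w.one_le_light)
  · rw [w.rowValue_of_notMem_of_notMem hh hl, entryWeight_eq_zero _ hh, entryWeight_eq_zero _ hl,
      mul_zero, add_zero, one_mul]
    exact hpot

theorem pathWeight_le_of_pathBound [Fintype V] [Nontrivial V] {K c : ℝ} {w : ArcValues}
    (hK : 0 ≤ K) (hc : 0 ≤ c) {G : V → V → ℝ} (hG : ∀ u v, 0 ≤ G u v) (hGK : ∀ u v, G u v ≤ K)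
    (hsum : ∀ u, ∑ v, G u v ≤ K + 1) {t s : V} {X : Finset V} (hs : s ∉ X) (hst : s ≠ t)
    (hX : PathBound K c w t X) : pathWeight G t X s ≤ c * w.both ^ (#X + 1) := by
  obtain ⟨D, hD⟩ := exists_pathWeight_le_arcWeight hK hG hGK hsum t hs
  calc pathWeight G t X s ≤ pathWeight (D.arcWeight K) t X s := hD
    _ ≤ c * w.potential D (insert t X) (insert s X) := hX D s hs hst
    _ ≤ c * w.both ^ #(insert s X) := by gcongr; exact w.potential_le_pow
    _ = c * w.both ^ (#X + 1) := by rw [card_insert_of_notMem hs]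

section Golden

open scoped goldenRatio

/-- The values with which path weights of heavy weight `1` are bounded. They grow like the powers
of the golden ratio. -/
noncomputable def goldenValues : ArcValues where
  both := φ
  heavy := 2 / φ
  light := 2 / φ
  one_le_heavy := (one_le_div₀ Real.goldenRatio_pos).2 Real.goldenRatio_lt_two.le
  one_le_light := (one_le_div₀ Real.goldenRatio_pos).2 Real.goldenRatio_lt_two.le
  heavy_le_both := (div_le_iff₀ Real.goldenRatio_pos).2 (by
    nlinarith [Real.goldenRatio_sq, Real.one_lt_goldenRatio])
  light_le_both := (div_le_iff₀ Real.goldenRatio_pos).2 (by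
    nlinarith [Real.goldenRatio_sq, Real.one_lt_goldenRatio])

theorem goldenRatio_mul_two_div : φ * (2 / φ) = 2 :=
  mul_div_cancel₀ 2 Real.goldenRatio_ne_zero

theorem goldenValues_isLossRate : goldenValues.IsLossRate (φ / 2) := by
  have hle : 2 / φ ≤ φ / 2 * φ := by
    rw [div_le_iff₀ Real.goldenRatio_pos]
    nlinarith [Real.goldenRatio_sq, Real.one_lt_goldenRatio]
  have hone : 1 ≤ φ / 2 * (2 / φ) := by linarith [goldenRatio_mul_two_div]
  exact ⟨hle, hle, hone, hone⟩

theorem goldenRatio_sub_one_mul_self : (φ - 1) * φ = 1 := by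
  linear_combination Real.goldenRatio_sq

variable {t a b : V} {X : Finset V} {D : TwoArcs V} (hB : PathBoundBelow 1 1 goldenValues t X)
include hB

theorem golden_entryWeight_le_of_notMem (ha : a ∈ X)
    (hne : D.heavy a ∉ (insert t X).erase a ∨ D.light a ∉ (insert t X).erase a) :
    entryWeight (D.arcWeight 1) t X a ≤
      φ / 2 * (1 * goldenValues.potential D (insert t X) X) := by
  by_cases hh : D.heavy a ∈ (insert t X).erase a
  · have hl := hne.resolve_left (not_not.2 hh)
    refine (hB.entryWeight_le_of_light_notMem ha hl).trans ?_
    rw [one_mul (_ * _)]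
    refine hB.potential_erase_le_mul ha ?_ (erase_subset _ _)
    rw [ArcValues.vertexValue, goldenValues.rowValue_of_mem_of_notMem hh hl]
    exact goldenValues_isLossRate.one_le_mul_heavy
  · exact hB.entryWeight_le_mul_of_heavy_notMem ha hh goldenValues_isLossRate.one_le_mul_light

theorem golden_entryWeight_le_or (ha : a ∈ X) :
    entryWeight (D.arcWeight 1) t X a ≤
        φ / 2 * (1 * goldenValues.potential D (insert t X) X) ∨
      ∀ b ∈ X, a ≠ b → entryWeight (D.arcWeight 1) t X b ≤
        (φ - 1) * (1 * goldenValues.potential D (insert t X) X) := by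
  by_cases hne : D.heavy a ∉ (insert t X).erase a ∨ D.light a ∉ (insert t X).erase a
  · exact Or.inl (golden_entryWeight_le_of_notMem hB ha hne)
  by_cases hin : ∃ x ∈ X.erase a, D.Adj x a
  · obtain ⟨x, hx, hxa⟩ := hin
    refine Or.inl (hB.entryWeight_le_mul_of_vertexValue_le ha (mem_of_mem_erase hx) ?_)
    exact goldenValues_isLossRate.vertexValue_le (erase_subset _ _) (mem_insert_of_mem ha)
      (notMem_erase _ _) (ne_of_mem_erase hx) hxa
  · push Not at hne hin
    refine Or.inr fun b hb hab => hB.entryWeight_le_mul_of_forall_not_adj ha hb hab hin ?_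
    rw [ArcValues.vertexValue, goldenValues.rowValue_of_mem_of_mem hne.1 hne.2]
    exact goldenRatio_sub_one_mul_self.ge

theorem golden_one_add_entryWeight_le (hb : b ∈ X) :
    1 + entryWeight (D.arcWeight 1) t X b ≤
      φ * (1 * goldenValues.potential D (insert t X) X) := by
  have hone {q : ℝ} (hq : 1 ≤ q * goldenValues.vertexValue D (insert t X) b) :
      1 ≤ q * (1 * goldenValues.potential D (insert t X) X) :=
    (goldenValues.one_le_potential.trans_eq (one_mul _).symm).trans
      (hB.potential_erase_le_mul hb hq Subset.rfl)
  by_cases hh : D.heavy b ∈ (insert t X).erase b <;> by_cases hl : D.light b ∈ (insert t X).erase b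
  · have h1 := hone (q := φ - 1) <| by
      rw [ArcValues.vertexValue, goldenValues.rowValue_of_mem_of_mem hh hl]
      exact goldenRatio_sub_one_mul_self.ge
    linarith [hB.entryWeight_le (D := D) b]
  · have h1 := hone (q := φ / 2) <| by
      rw [ArcValues.vertexValue, goldenValues.rowValue_of_mem_of_notMem hh hl]
      exact goldenValues_isLossRate.one_le_mul_heavy
    linarith [golden_entryWeight_le_of_notMem hB hb (Or.inr hl)]
  · have h1 := hone (q := φ / 2) <| by
      rw [ArcValues.vertexValue, goldenValues.rowValue_of_notMem_of_mem hh hl]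
      exact goldenValues_isLossRate.one_le_mul_light
    linarith [golden_entryWeight_le_of_notMem hB hb (Or.inl hh)]
  · rw [hB.entryWeight_eq_zero_of_notMem hb hh hl, add_zero, one_mul]
    exact one_le_mul_of_one_le_of_one_le Real.one_lt_goldenRatio.le goldenValues.one_le_potential

theorem golden_add_entryWeight_le (ha : a ∈ insert t X) (hb : b ∈ insert t X) (hab : a ≠ b) :
    1 * entryWeight (D.arcWeight 1) t X a + entryWeight (D.arcWeight 1) t X b ≤
      φ * (1 * goldenValues.potential D (insert t X) X) := by
  have hle := hB.entryWeight_le (D := D)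
  rw [one_mul (entryWeight _ _ _ _)]
  by_cases hat : a = t
  · rw [hat, entryWeight_self _ hB.notMem]
    exact golden_one_add_entryWeight_le hB (mem_of_mem_insert_of_ne hb (hat ▸ hab.symm))
  by_cases hbt : b = t
  · rw [hbt, entryWeight_self _ hB.notMem, add_comm]
    exact golden_one_add_entryWeight_le hB (mem_of_mem_insert_of_ne ha hat)
  have haX := mem_of_mem_insert_of_ne ha hat
  have hbX := mem_of_mem_insert_of_ne hb hbt
  rcases golden_entryWeight_le_or hB (D := D) haX with ha' | hb'
  · rcases golden_entryWeight_le_or hB (D := D) hbX with hb' | ha'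
    · linarith
    · linarith [ha' a haX hab.symm, hle b]
  · linarith [hb' b hbX hab, hle a]

omit hB in
theorem pathBound_golden (ht : t ∉ X) : PathBound 1 1 goldenValues t X :=
  pathBound_of_forall_pair zero_le_one goldenValues.one_le_heavy le_rfl
    (fun _ _ hB _ ha _ hb hab => golden_add_entryWeight_le hB ha hb hab) ht

end Golden

theorem one_sub_add_sq_pow_mul_le {d : ℝ} (hd0 : 0 ≤ d) (hd : d ≤ 25 / 144) (m : ℕ) :
    (1 - d + d ^ 2) ^ (m + 1) * (1 + (m + 1) * d - d ^ 2 + d ^ 3) ≤ 1 := by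
  induction m with
  | zero =>
    have hquadratic : 0 ≤ d ^ 2 * ((1 - d) ^ 2 - d) := mul_nonneg (sq_nonneg d) (by nlinarith)
    have hquintic : 0 ≤ d ^ 4 * (1 - d) := mul_nonneg (pow_nonneg hd0 4) (by linarith)
    push_cast
    linarith
  | succ m ih =>
    refine le_trans ?_ ih
    rw [pow_succ _ (m + 1), mul_assoc]
    refine mul_le_mul_of_nonneg_left ?_ (pow_nonneg (by nlinarith) _)
    have hcubic : 0 ≤ d ^ 2 * (1 - 3 * d + 2 * d ^ 2 - d ^ 3) :=
      mul_nonneg (sq_nonneg d) (by nlinarith)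
    have hlinear : 0 ≤ (m : ℝ) * d ^ 2 * (1 - d) :=
      mul_nonneg (mul_nonneg (Nat.cast_nonneg m) (sq_nonneg d)) (by linarith)
    push_cast
    linarith

/-- The inverse `u` of the mean `α` with `α ^ 2 = K * α + 1`, for a heavy weight `K ≥ 2`. The other
constants are functions of `u`. -/
structure MetallicParams where
  u : ℝ
  u_pos : 0 < u
  u_sq_add_le : u ^ 2 + 2 * u ≤ 1

namespace MetallicParams

variable (p : MetallicParams)

/-- The growth rate of the path weights. -/
noncomputable def mean : ℝ := p.u⁻¹

/-- The heavy weight. -/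
noncomputable def K : ℝ := p.mean - p.u

/-- The loss factor when the light target of a vertex becomes unavailable. It is determined by
`K ^ 2 + 1 = mean * (ρ * mean)`. -/
noncomputable def ρ : ℝ := 1 - p.u ^ 2 + p.u ^ 4

/-- The loss factor when the heavy target of a vertex becomes unavailable. It is determined by
`K * r + 1 = mean`. -/
noncomputable def r : ℝ := (1 + p.u)⁻¹

theorem mean_mul_u : p.mean * p.u = 1 := inv_mul_cancel₀ p.u_pos.ne'

theorem u_mul_mean : p.u * p.mean = 1 := mul_inv_cancel₀ p.u_pos.ne'

theorem u_lt : p.u < 5 / 12 := by nlinarith [p.u_pos, p.u_sq_add_le]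

theorem u_sq_le : p.u ^ 2 ≤ 25 / 144 := by nlinarith [p.u_pos, p.u_lt]

theorem mean_pos : 0 < p.mean := inv_pos.2 p.u_pos

theorem two_add_u_le_mean : 2 + p.u ≤ p.mean := by
  rw [mean, le_inv_comm₀ (by linarith [p.u_pos]) p.u_pos, ← one_div,
    le_div_iff₀ (by linarith [p.u_pos])]
  linarith [p.u_sq_add_le]

theorem K_pos : 0 < p.K := by linarith [p.two_add_u_le_mean, show p.K = p.mean - p.u from rfl]

theorem ρ_le_one : p.ρ ≤ 1 := by
  rw [ρ]
  nlinarith [p.u_sq_le, sq_nonneg p.u]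

theorem le_ρ : 119 / 144 ≤ p.ρ := by
  rw [ρ]
  linarith [p.u_sq_le, pow_pos p.u_pos 4]

theorem ρ_pos : 0 < p.ρ := by linarith [p.le_ρ]

theorem r_mul : p.r * (1 + p.u) = 1 := inv_mul_cancel₀ (by linarith [p.u_pos])

theorem r_le_one : p.r ≤ 1 := inv_le_one_of_one_le₀ (by linarith [p.u_pos])

theorem K_mul_mean : p.K * p.mean + 1 = p.mean ^ 2 := by
  rw [K]
  linear_combination -p.mean_mul_u

theorem K_mul_r : p.K * p.r + 1 = p.mean := by
  have h : p.mean = p.mean * p.r + p.r := by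
    linear_combination -p.mean * p.r_mul + p.r * p.mean_mul_u
  rw [K]
  linear_combination -h - p.r_mul

theorem K_sq : p.K ^ 2 + 1 = p.mean * (p.ρ * p.mean) := by
  rw [K, ρ]
  linear_combination
    (-1 + p.mean * p.u - p.mean * p.u ^ 3 - p.u ^ 2) * p.mean_mul_u

theorem u_mul_one_add_le_r : p.u * (1 + p.u) ≤ p.r := by
  rw [r, ← one_div, le_div_iff₀ (by linarith [p.u_pos])]
  nlinarith [p.u_pos, p.u_lt, mul_pos p.u_pos p.u_pos]

theorem u_le_r : p.u ≤ p.r := by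
  nlinarith [p.u_mul_one_add_le_r, p.u_pos]

theorem one_le_one_add_mul_ρ_sq : 1 ≤ (1 + p.u) * p.ρ ^ 2 := by
  have hu := p.u_pos
  have hcubic : 0 ≤ 1 - 2 * p.u - 2 * p.u ^ 2 + 3 * p.u ^ 3 := by
    nlinarith [mul_nonneg hu.le (sq_nonneg (p.u - 5 / 12)), p.u_sq_add_le]
  have hquadratic : 0 ≤ 3 - 2 * p.u - 2 * p.u ^ 2 := by linarith [p.u_sq_le, p.u_lt]
  have hρ : (1 + p.u) * p.ρ ^ 2 = 1 + p.u * (1 - 2 * p.u - 2 * p.u ^ 2 + 3 * p.u ^ 3 +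
      p.u ^ 4 * (3 - 2 * p.u - 2 * p.u ^ 2) + p.u ^ 7 + p.u ^ 8) := by
    rw [ρ]
    ring
  rw [hρ]
  exact le_add_of_nonneg_right (by positivity)

theorem r_le_ρ_sq : p.r ≤ p.ρ ^ 2 := by
  nlinarith [p.one_le_one_add_mul_ρ_sq, p.r_mul, p.u_pos]

theorem ρ_sq_le_ρ : p.ρ ^ 2 ≤ p.ρ := by
  nlinarith [p.ρ_pos, p.ρ_le_one]

theorem r_le_ρ : p.r ≤ p.ρ := p.r_le_ρ_sq.trans p.ρ_sq_le_ρ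

theorem one_le_one_add_mul_ρ : 1 ≤ (1 + p.u) * p.ρ :=
  p.one_le_one_add_mul_ρ_sq.trans
    (mul_le_mul_of_nonneg_left p.ρ_sq_le_ρ (by linarith [p.u_pos]))

theorem one_le_r_mul {x : ℝ} (hx : 0 ≤ x) (h : 1 ≤ p.u * (1 + p.u) * x) : 1 ≤ p.r * x :=
  h.trans (mul_le_mul_of_nonneg_right p.u_mul_one_add_le_r hx)

theorem one_le_r_mul_mean : 1 ≤ p.r * p.mean :=
  p.u_mul_mean.symm.trans_le (mul_le_mul_of_nonneg_right p.u_le_r p.mean_pos.le)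

/-- The values with which path weights of heavy weight `K` are bounded. -/
noncomputable def values : ArcValues where
  both := p.mean
  heavy := p.ρ * p.mean
  light := p.r * p.mean
  one_le_heavy := p.one_le_r_mul_mean.trans
    (mul_le_mul_of_nonneg_right p.r_le_ρ p.mean_pos.le)
  one_le_light := p.one_le_r_mul_mean
  heavy_le_both := mul_le_of_le_one_left p.mean_pos.le p.ρ_le_one
  light_le_both := mul_le_of_le_one_left p.mean_pos.le p.r_le_one

theorem K_le_values_heavy : p.K ≤ p.values.heavy := by
  have h : p.values.heavy = p.K + p.u ^ 4 * p.mean := by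
    change p.ρ * p.mean = _
    rw [ρ, K]
    linear_combination -p.u * p.mean_mul_u
  rw [h]
  exact le_add_of_nonneg_right (mul_pos (pow_pos p.u_pos 4) p.mean_pos).le

theorem u_mul_values_heavy : p.u * p.values.heavy = p.ρ := by
  change p.u * (p.ρ * p.mean) = p.ρ
  linear_combination p.ρ * p.u_mul_mean

theorem u_mul_values_light : p.u * p.values.light = p.r := by
  change p.u * (p.r * p.mean) = p.r
  linear_combination p.r * p.u_mul_mean

theorem one_le_mul_values_heavy : 1 ≤ p.u * (1 + p.u) * p.values.heavy := by
  rw [mul_right_comm, p.u_mul_values_heavy, mul_comm]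
  exact p.one_le_one_add_mul_ρ

theorem one_le_mul_values_light : 1 ≤ p.u * (1 + p.u) * p.values.light := by
  rw [mul_right_comm, p.u_mul_values_light, p.r_mul]

theorem one_le_r_mul_values_heavy : 1 ≤ p.r * p.values.heavy :=
  p.one_le_r_mul (zero_le_one.trans p.values.one_le_heavy) p.one_le_mul_values_heavy

theorem one_le_r_mul_values_light : 1 ≤ p.r * p.values.light :=
  p.one_le_r_mul (zero_le_one.trans p.values.one_le_light) p.one_le_mul_values_light

theorem isLossRate_ρ : p.values.IsLossRate p.ρ where
  heavy_le := le_rfl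
  light_le := mul_le_mul_of_nonneg_right p.r_le_ρ p.mean_pos.le
  one_le_mul_heavy := p.one_le_r_mul_values_heavy.trans
    (mul_le_mul_of_nonneg_right p.r_le_ρ (zero_le_one.trans p.values.one_le_heavy))
  one_le_mul_light := p.one_le_r_mul_values_light.trans
    (mul_le_mul_of_nonneg_right p.r_le_ρ (zero_le_one.trans p.values.one_le_light))

variable {p} {D : TwoArcs V} {S : Finset V} {v : V}

theorem u_mul_vertexValue_le : p.u * p.values.vertexValue D S v ≤ 1 :=
  (mul_le_mul_of_nonneg_left p.values.vertexValue_le_both p.u_pos.le).trans_eq p.u_mul_mean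

theorem one_le_mul_vertexValue
    (hv : D.heavy v ∈ S.erase v ∨ D.light v ∈ S.erase v) :
    1 ≤ p.u * (1 + p.u) * p.values.vertexValue D S v := by
  rw [ArcValues.vertexValue]
  by_cases hh : D.heavy v ∈ S.erase v <;> by_cases hl : D.light v ∈ S.erase v
  · rw [p.values.rowValue_of_mem_of_mem hh hl, mul_right_comm,
      show p.u * p.values.both = 1 from p.u_mul_mean, one_mul]
    exact le_add_of_nonneg_right p.u_pos.le
  · rw [p.values.rowValue_of_mem_of_notMem hh hl]
    exact p.one_le_mul_values_heavy
  · rw [p.values.rowValue_of_notMem_of_mem hh hl]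
    exact p.one_le_mul_values_light
  · exact absurd hv (not_or.2 ⟨hh, hl⟩)

theorem one_le_r_mul_vertexValue (hv : D.heavy v ∈ S.erase v ∨ D.light v ∈ S.erase v) :
    1 ≤ p.r * p.values.vertexValue D S v :=
  p.one_le_r_mul p.values.vertexValue_nonneg (one_le_mul_vertexValue hv)

theorem rowValue_le_r_mul_of_heavy_lost {S' : Finset V} (hS : S' ⊆ S) (hh : D.heavy v ∈ S)
    (hh' : D.heavy v ∉ S') : p.values.rowValue D v S' ≤ p.r * p.values.rowValue D v S :=
  p.values.rowValue_le_mul_of_heavy_lost hS hh hh' le_rfl p.one_le_r_mul_values_heavy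

variable (p)

theorem ρ_pow_mul_K_mul_mean_add_le (m : ℕ) :
    p.ρ ^ (m + 1) * (p.K * p.mean + (p.ρ + (m + 1))) ≤ p.mean ^ 2 := by
  have h := mul_le_mul_of_nonneg_left
    (one_sub_add_sq_pow_mul_le (sq_nonneg p.u) p.u_sq_le m) (sq_nonneg p.mean)
  have hρ : p.ρ = 1 - p.u ^ 2 + (p.u ^ 2) ^ 2 := by
    rw [ρ]
    ring
  have hu : p.mean ^ 2 * p.u ^ 2 = 1 := by rw [← mul_pow, p.mean_mul_u, one_pow]
  rw [← hρ, mul_one] at h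
  refine le_trans (le_of_eq ?_) h
  linear_combination p.ρ ^ (m + 1) * (p.K_mul_mean + hρ -
    ((m + 1) - p.u ^ 2 + (p.u ^ 2) ^ 2) * hu)

theorem ρ_pow_mul_K_sq_add_le (m : ℕ) :
    p.ρ ^ (m + 1) * (p.K ^ 2 + (p.ρ + (m + 1) * p.ρ)) ≤ p.mean * (p.ρ * p.mean) := by
  have hdiff : p.ρ * (p.K * p.mean + p.ρ) - (p.K ^ 2 + p.ρ) = (1 - p.ρ) ^ 2 := by
    linear_combination p.ρ * p.K_mul_mean - p.K_sq
  calc p.ρ ^ (m + 1) * (p.K ^ 2 + (p.ρ + (m + 1) * p.ρ)) ≤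
      p.ρ ^ (m + 1) * (p.ρ * (p.K * p.mean + (p.ρ + (m + 1)))) := by
        refine mul_le_mul_of_nonneg_left ?_ (pow_pos p.ρ_pos _).le
        linarith [sq_nonneg (1 - p.ρ)]
    _ = p.ρ * (p.ρ ^ (m + 1) * (p.K * p.mean + (p.ρ + (m + 1)))) := mul_left_comm _ _ _
    _ ≤ p.ρ * p.mean ^ 2 :=
        mul_le_mul_of_nonneg_left (p.ρ_pow_mul_K_mul_mean_add_le m) p.ρ_pos.le
    _ = p.mean * (p.ρ * p.mean) := by ring

theorem K_mul_add_one_le : p.K * (p.ρ * (1 + p.u) + 1) + 1 ≤ p.K * p.mean + p.ρ := by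
  have hu := p.u_pos
  have hscaled : p.u * (p.ρ * (1 + p.u) + 1) ≤ 1 - p.u ^ 4 := by
    have hcubic : 0 ≤ p.u ^ 3 * (1 - p.u ^ 2 - p.u ^ 3) :=
      mul_nonneg (pow_pos hu 3).le (by nlinarith [p.u_sq_le, p.u_lt])
    rw [ρ]
    linarith [p.u_sq_add_le]
  have hle : p.ρ * (1 + p.u) + 1 ≤ p.mean * (1 - p.u ^ 4) := by
    have h := mul_le_mul_of_nonneg_left hscaled p.mean_pos.le
    rwa [← mul_assoc, p.mean_mul_u, one_mul] at h
  have hK : p.K * (p.mean * (1 - p.u ^ 4)) + 1 = p.K * p.mean + p.ρ := by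
    rw [K, ρ]
    linear_combination (p.u ^ 4 - p.u ^ 2 - p.mean * p.u ^ 3) * p.mean_mul_u
  linarith [mul_le_mul_of_nonneg_left hle p.K_pos.le]

theorem ρ_pow_mul_K_mul_add_le (m : ℕ) :
    p.ρ ^ (m + 1) * (p.K * (p.ρ * (1 + p.u) + 1) + (1 + (m + 1))) ≤ p.mean ^ 2 := by
  refine le_trans ?_ (p.ρ_pow_mul_K_mul_mean_add_le m)
  refine mul_le_mul_of_nonneg_left ?_ (pow_pos p.ρ_pos _).le
  linarith [p.K_mul_add_one_le]

end MetallicParams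

theorem card_erase_of_mem_of_card_eq {A : Finset V} {x : V} {m : ℕ} (hx : x ∈ A)
    (hm : #A = m + 1) : #(A.erase x) = m := by
  rw [card_erase_of_mem hx, hm, Nat.add_sub_cancel]

namespace ArcValues

variable (w : ArcValues) {D : TwoArcs V} {S S' L Y : Finset V} {z : V} {q q' : ℝ}

theorem potential_le_mul_pow_mul (hS : S' ⊆ S) (hL : L ⊆ Y) (hz : z ∈ Y) (hzL : z ∉ L)
    (hq : ∀ v ∈ L, w.vertexValue D S' v ≤ q * w.vertexValue D S v)
    (hq' : w.vertexValue D S' z ≤ q' * w.vertexValue D S z) :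
    w.potential D S' Y ≤ q' * q ^ #L * w.potential D S Y := by
  have hLz : L ⊆ Y.erase z := subset_erase.2 ⟨hL, hzL⟩
  have hq'0 : 0 ≤ q' * w.vertexValue D S z := w.vertexValue_nonneg.trans hq'
  calc w.potential D S' Y = w.vertexValue D S' z * w.potential D S' (Y.erase z) :=
        (w.vertexValue_mul_potential_erase hz).symm
    _ ≤ q' * w.vertexValue D S z * (q ^ #L * w.potential D S (Y.erase z)) :=
        mul_le_mul hq' (w.potential_le_pow_mul hS hLz hq) w.potential_nonneg hq'0
    _ = q' * q ^ #L * w.potential D S Y := by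
        rw [← w.vertexValue_mul_potential_erase hz]
        ring

end ArcValues

namespace TwoArcs

/-- The vertices of `X` other than `a` whose light arc leads to `a`. -/
def lightPreds (D : TwoArcs V) (X : Finset V) (a : V) : Finset V :=
  {x ∈ X.erase a | D.light x = a}

/-- Among `X`, only light arcs lead to `a`, and those start at vertices whose heavy target is
available, as is the heavy target of `a`. These are the targets `a` for which the entry weight can
be large. -/
structure IsLightTarget (D : TwoArcs V) (t : V) (X : Finset V) (a : V) : Prop where
  heavy_mem : D.heavy a ∈ (insert t X).erase a
  heavy_ne : ∀ x ∈ X.erase a, D.heavy x ≠ a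
  heavy_mem_of_light_eq : ∀ x ∈ X.erase a, D.light x = a → D.heavy x ∈ (insert t X).erase x

variable {D : TwoArcs V} {t a x : V} {X : Finset V}

theorem mem_lightPreds : x ∈ D.lightPreds X a ↔ x ∈ X.erase a ∧ D.light x = a :=
  mem_filter

theorem lightPreds_subset : D.lightPreds X a ⊆ X.erase a :=
  filter_subset _ _

theorem IsLightTarget.light_eq_of_adj (hT : D.IsLightTarget t X a) (hx : x ∈ X.erase a)
    (hxa : D.Adj x a) : D.light x = a :=
  hxa.resolve_left (hT.heavy_ne x hx)

theorem light_mem_of_mem_lightPreds (ha : a ∈ X) (hx : x ∈ D.lightPreds X a) :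
    D.light x ∈ (insert t X).erase x := by
  obtain ⟨hxX, rfl⟩ := mem_lightPreds.1 hx
  exact mem_erase.2 ⟨(ne_of_mem_erase hxX).symm, mem_insert_of_mem ha⟩

theorem IsLightTarget.vertexValue_eq (hT : D.IsLightTarget t X a) (ha : a ∈ X)
    (hx : x ∈ D.lightPreds X a) (w : ArcValues) : w.vertexValue D (insert t X) x = w.both :=
  w.rowValue_of_mem_of_mem
    (hT.heavy_mem_of_light_eq x (mem_lightPreds.1 hx).1 (mem_lightPreds.1 hx).2)
    (light_mem_of_mem_lightPreds ha hx)

end TwoArcs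

namespace PathBoundBelow

variable {K c : ℝ} {w : ArcValues} {t a b : V} {X : Finset V} {D : TwoArcs V}
  (hB : PathBoundBelow K c w t X)

include hB

theorem entryWeight_le_merge_lightPreds (ha : a ∈ X) (hb : b ∈ X) (hab : a ≠ b)
    (hheavy : ∀ x ∈ X.erase a, D.heavy x ≠ a) :
    entryWeight (D.arcWeight K) t X b ≤
      c * (w.potential D (((insert t X).erase b).erase a) (X.erase a) +
        w.rowValue D a (((insert t X).erase b).erase a) * ∑ x ∈ D.lightPreds X a,
          w.potential D (((insert t X).erase b).erase a) ((X.erase a).erase x)) := by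
  refine (hB.entryWeight_le_merge ha hb hab).trans
    (mul_le_mul_of_nonneg_left (add_le_add_right ?_ _) hB.zero_le_const)
  rw [TwoArcs.lightPreds, sum_filter, mul_sum]
  refine sum_le_sum fun x hx => ?_
  split_ifs with hxa
  · have hweight : D.arcWeight K x a = 1 := by
      simp [TwoArcs.arcWeight, arcRow, hxa, (hheavy x hx).symm]
    rw [hweight, one_mul]
    exact mul_le_mul_of_nonneg_right (w.rowValue_mono (erase_subset _ _)) w.potential_nonneg
  · rw [arcWeight_eq_zero K D (not_or.2 ⟨hheavy x hx, hxa⟩), zero_mul, mul_zero]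

theorem entryWeight_le_of_potential_le (ha : a ∈ X) (hb : b ∈ X) (hab : a ≠ b)
    (hheavy : ∀ x ∈ X.erase a, D.heavy x ≠ a) {v P₀ P₁ : ℝ}
    (hv : w.rowValue D a (((insert t X).erase b).erase a) ≤ v)
    (h₀ : w.potential D (((insert t X).erase b).erase a) (X.erase a) ≤ P₀)
    (h₁ : ∀ x ∈ D.lightPreds X a,
      w.potential D (((insert t X).erase b).erase a) ((X.erase a).erase x) ≤ P₁) :
    entryWeight (D.arcWeight K) t X b ≤ c * (P₀ + v * (#(D.lightPreds X a) * P₁)) := by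
  refine (hB.entryWeight_le_merge_lightPreds ha hb hab hheavy).trans
    (mul_le_mul_of_nonneg_left (add_le_add h₀ (mul_le_mul hv ?_ ?_ ?_)) hB.zero_le_const)
  · exact (sum_le_card_nsmul _ _ _ h₁).trans_eq (nsmul_eq_mul _ _)
  · exact sum_nonneg fun _ _ => w.potential_nonneg
  · exact zero_le_one.trans (w.one_le_rowValue.trans hv)

theorem entryWeight_le_of_light_eq_of_forall_not_adj (ha : a ∈ X) (hb : b ∈ X) (hab : a ≠ b)
    (hl : D.light a = b) (hin : ∀ x ∈ X.erase b, x ≠ a → ¬ D.Adj x b) :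
    entryWeight (D.arcWeight K) t X a ≤
      c * (w.rowValue D a (((insert t X).erase b).erase a) *
        w.potential D (((insert t X).erase b).erase a) ((X.erase a).erase b) +
          w.potential D (((insert t X).erase b).erase a) (X.erase a)) := by
  have hweight : D.arcWeight K a b = 1 := by
    have hne : b ≠ D.heavy a := fun h => D.heavy_ne_light a (h.symm.trans hl.symm)
    simp [TwoArcs.arcWeight, arcRow, hl, hne]
  have hab' : a ∈ X.erase b := mem_erase.2 ⟨hab, ha⟩
  have hba : b ∈ X.erase a := mem_erase.2 ⟨hab.symm, hb⟩
  have h := hB.entryWeight_le_merge (D := D) hb ha hab.symm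
  rw [sum_eq_single_of_mem a hab' fun x hx hxa => by
      rw [arcWeight_eq_zero K D (hin x hx hxa), zero_mul],
    hweight, one_mul, ← w.vertexValue_mul_potential_erase hab', erase_right_comm (a := b) (s := X),
    erase_right_comm (a := a) (b := b), erase_idem] at h
  rwa [← w.vertexValue_mul_potential_erase (v := b) hba, w.vertexValue_of_notMem (v := b) (by simp),
    ← w.vertexValue_of_notMem (v := a) (notMem_erase _ _)]

end PathBoundBelow

namespace MetallicParams

variable {p : MetallicParams} {D : TwoArcs V} {S S' X : Finset V} {t a b x z : V} {m : ℕ}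

section Potential

theorem vertexValue_le_of_mem_lightPreds (hS : S' ⊆ S) (ha : a ∈ S) (ha' : a ∉ S')
    (hx : x ∈ D.lightPreds X a) : p.values.vertexValue D S' x ≤ p.ρ * p.values.vertexValue D S x :=
  p.isLossRate_ρ.vertexValue_le hS ha ha' (ne_of_mem_erase (TwoArcs.mem_lightPreds.1 hx).1)
    (Or.inr (TwoArcs.mem_lightPreds.1 hx).2)

theorem potential_erase_le_ρ_pow_mul (hS : S' ⊆ S) (ha : a ∈ S) (ha' : a ∉ S') :
    p.values.potential D S' (X.erase a) ≤
      p.ρ ^ #(D.lightPreds X a) * p.values.potential D S (X.erase a) :=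
  p.values.potential_le_pow_mul hS TwoArcs.lightPreds_subset
    fun _ hv => vertexValue_le_of_mem_lightPreds hS ha ha' hv

theorem potential_erase_erase_eq (hT : D.IsLightTarget t X a) (ha : a ∈ X)
    (hx : x ∈ D.lightPreds X a) : p.values.potential D (insert t X) ((X.erase a).erase x) =
      p.u * p.values.potential D (insert t X) (X.erase a) := by
  rw [← p.values.vertexValue_mul_potential_erase (TwoArcs.lightPreds_subset hx),
    hT.vertexValue_eq ha hx, ← mul_assoc, show p.u * p.values.both = 1 from p.u_mul_mean, one_mul]

variable (hT : D.IsLightTarget t X a) (ha : a ∈ X) (hS : S' ⊆ insert t X) (ha' : a ∉ S')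
  (hm : #(D.lightPreds X a) = m + 1)

include hT ha hS ha' hm

theorem potential_erase_erase_le_ρ_pow_mul (hx : x ∈ D.lightPreds X a) :
    p.values.potential D S' ((X.erase a).erase x) ≤
      p.ρ ^ m * (p.u * p.values.potential D (insert t X) (X.erase a)) := by
  rw [← potential_erase_erase_eq hT ha hx, ← card_erase_of_mem_of_card_eq hx hm]
  exact p.values.potential_le_pow_mul hS (erase_subset_erase _ TwoArcs.lightPreds_subset)
    fun v hv => vertexValue_le_of_mem_lightPreds hS (mem_insert_of_mem ha) ha'
      (mem_of_mem_erase hv)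

theorem potential_erase_erase_le_mul_ρ_pow_mul {q : ℝ} (hz : z ∈ X.erase a)
    (hza : D.light z ≠ a)
    (hq : p.values.vertexValue D S' z ≤ q * p.values.vertexValue D (insert t X) z)
    (hx : x ∈ D.lightPreds X a) :
    p.values.potential D S' ((X.erase a).erase x) ≤
      q * p.ρ ^ m * (p.u * p.values.potential D (insert t X) (X.erase a)) := by
  have hzpreds : z ∉ D.lightPreds X a := fun h => hza (TwoArcs.mem_lightPreds.1 h).2
  rw [← potential_erase_erase_eq hT ha hx, ← card_erase_of_mem_of_card_eq hx hm]
  exact p.values.potential_le_mul_pow_mul hS (erase_subset_erase _ TwoArcs.lightPreds_subset)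
    (mem_erase.2 ⟨(ne_of_mem_of_not_mem hx hzpreds).symm, hz⟩)
    (fun h => hzpreds (mem_of_mem_erase h))
    (fun v hv => vertexValue_le_of_mem_lightPreds hS (mem_insert_of_mem ha) ha'
      (mem_of_mem_erase hv)) hq

section DeadPred

variable (hz : z ∈ D.lightPreds X a) (hhz : D.heavy z ∉ S')

include hz hhz

omit hS hm in
theorem vertexValue_le_u_mul :
    p.values.vertexValue D S' z ≤ p.u * p.values.vertexValue D (insert t X) z := by
  have hlz : D.light z ∉ S' := (TwoArcs.mem_lightPreds.1 hz).2.symm ▸ ha'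
  rw [hT.vertexValue_eq ha hz, show p.u * p.values.both = 1 from p.u_mul_mean,
    ArcValues.vertexValue, p.values.rowValue_of_notMem_of_notMem
      (fun h => hhz (mem_of_mem_erase h)) fun h => hlz (mem_of_mem_erase h)]

theorem potential_erase_le_u_mul :
    p.values.potential D S' (X.erase a) ≤
      p.u * p.ρ ^ m * p.values.potential D (insert t X) (X.erase a) := by
  rw [← card_erase_of_mem_of_card_eq hz hm]
  exact p.values.potential_le_mul_pow_mul hS ((erase_subset _ _).trans TwoArcs.lightPreds_subset)
    (TwoArcs.lightPreds_subset hz) (notMem_erase _ _)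
    (fun v hv => vertexValue_le_of_mem_lightPreds hS (mem_insert_of_mem ha) ha'
      (mem_of_mem_erase hv)) (vertexValue_le_u_mul hT ha ha' hz hhz)

theorem potential_erase_erase_le_u_mul (hx : x ∈ (D.lightPreds X a).erase z) :
    p.values.potential D S' ((X.erase a).erase x) ≤
      p.ρ ^ (m + 1) * (p.u * p.values.potential D (insert t X) (X.erase a)) := by
  obtain ⟨hxz, hxa⟩ := mem_erase.1 hx
  have hcardz := card_erase_of_mem_of_card_eq hz hm
  obtain ⟨k, rfl⟩ : ∃ k, m = k + 1 :=
    Nat.exists_eq_succ_of_ne_zero (hcardz ▸ (card_pos.2 ⟨x, hx⟩).ne')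
  rw [← potential_erase_erase_eq hT ha hxa]
  calc p.values.potential D S' ((X.erase a).erase x) ≤
        p.u * p.ρ ^ k * p.values.potential D (insert t X) ((X.erase a).erase x) := by
        rw [← card_erase_of_mem_of_card_eq hx hcardz]
        exact p.values.potential_le_mul_pow_mul hS
          (erase_subset_erase x ((erase_subset z _).trans TwoArcs.lightPreds_subset))
          (mem_erase.2 ⟨hxz.symm, TwoArcs.lightPreds_subset hz⟩) (by simp)
          (fun v hv => vertexValue_le_of_mem_lightPreds hS (mem_insert_of_mem ha) ha'
            (mem_of_mem_erase (mem_of_mem_erase hv))) (vertexValue_le_u_mul hT ha ha' hz hhz)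
    _ ≤ p.ρ ^ 2 * p.ρ ^ k * p.values.potential D (insert t X) ((X.erase a).erase x) := by
        have hρ := p.ρ_pos
        have hpot := p.values.potential_nonneg (D := D) (S := insert t X) (Y := (X.erase a).erase x)
        gcongr
        exact p.u_le_r.trans p.r_le_ρ_sq
    _ = p.ρ ^ (k + 1 + 1) * p.values.potential D (insert t X) ((X.erase a).erase x) := by
        ring

theorem sum_potential_erase_erase_le :
    ∑ x ∈ D.lightPreds X a, p.values.potential D S' ((X.erase a).erase x) ≤
      p.ρ ^ m * (p.u * p.values.potential D (insert t X) (X.erase a)) +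
        m * (p.ρ ^ (m + 1) * (p.u * p.values.potential D (insert t X) (X.erase a))) := by
  have hsum := sum_le_card_nsmul _ _ _ fun x hx =>
    potential_erase_erase_le_u_mul (p := p) hT ha hS ha' hm hz hhz (x := x) hx
  rw [card_erase_of_mem_of_card_eq hz hm, nsmul_eq_mul] at hsum
  rw [← add_sum_erase _ _ hz]
  exact add_le_add (potential_erase_erase_le_ρ_pow_mul hT ha hS ha' hm hz) hsum

end DeadPred

end Potential

section Values

theorem ρ_add_u_mul_rowValue_le (hS : S' ⊆ S) (hh : D.heavy x ∈ S) (hh' : D.heavy x ∉ S') :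
    p.ρ + p.u * p.values.rowValue D x S' ≤
      p.ρ ^ 2 + p.ρ * (p.u * p.values.rowValue D x S) := by
  by_cases hl : D.light x ∈ S
  · have hle : p.u * p.values.rowValue D x S' ≤ p.r := by
      refine (mul_le_mul_of_nonneg_left (rowValue_le_r_mul_of_heavy_lost hS hh hh')
        p.u_pos.le).trans_eq ?_
      rw [p.values.rowValue_of_mem_of_mem hh hl, mul_left_comm,
        show p.u * p.values.both = 1 from p.u_mul_mean, mul_one]
    rw [p.values.rowValue_of_mem_of_mem hh hl,
      show p.u * p.values.both = 1 from p.u_mul_mean]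
    linarith [p.r_le_ρ_sq]
  · rw [p.values.rowValue_of_notMem_of_notMem hh' fun hl' => hl (hS hl'),
      p.values.rowValue_of_mem_of_notMem hh hl, p.u_mul_values_heavy]
    nlinarith [p.le_ρ, p.u_lt]

theorem ρ_pow_mul_vertexValue_add_le (hh : D.heavy x ∈ S.erase x) (m : ℕ) :
    p.ρ ^ (m + 1) * (p.mean * p.values.vertexValue D S x - 1 +
      (p.ρ + (m + 1) * (p.u * p.values.vertexValue D S x))) ≤
      p.mean * p.values.vertexValue D S x := by
  rw [ArcValues.vertexValue]
  by_cases hl : D.light x ∈ S.erase x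
  · rw [p.values.rowValue_of_mem_of_mem hh hl, show p.values.both = p.mean from rfl, p.u_mul_mean,
      mul_one, ← pow_two, ← p.K_mul_mean, add_sub_cancel_right, p.K_mul_mean]
    exact p.ρ_pow_mul_K_mul_mean_add_le m
  · rw [p.values.rowValue_of_mem_of_notMem hh hl, p.u_mul_values_heavy,
      show p.values.heavy = p.ρ * p.mean from rfl, ← p.K_sq, add_sub_cancel_right, p.K_sq]
    exact p.ρ_pow_mul_K_sq_add_le m

end Values

end MetallicParams

namespace MetallicParams

section EntryWeight

variable {p : MetallicParams} {c : ℝ} {D : TwoArcs V} {X : Finset V} {t a b z : V} {m : ℕ}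
  (hB : PathBoundBelow p.K c p.values t X)

include hB

theorem entryWeight_le_r_mul_of_not_isLightTarget (ha : a ∈ X) (hT : ¬ D.IsLightTarget t X a) :
    entryWeight (D.arcWeight p.K) t X a ≤ p.r * (c * p.values.potential D (insert t X) X) := by
  by_cases hh : D.heavy a ∈ (insert t X).erase a
  · obtain ⟨x, hx, hxa⟩ : ∃ x ∈ X.erase a,
        D.heavy x = a ∨ D.light x = a ∧ D.heavy x ∉ (insert t X).erase x := by
      by_contra! hcon
      exact hT ⟨hh, fun x hx => (hcon x hx).1, fun x hx => (hcon x hx).2⟩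
    have hmem : a ∈ (insert t X).erase x :=
      mem_erase.2 ⟨(ne_of_mem_erase hx).symm, mem_insert_of_mem ha⟩
    have hnot : a ∉ ((insert t X).erase a).erase x := by simp
    have hsub := erase_subset_erase x (erase_subset a (insert t X))
    refine hB.entryWeight_le_mul_of_vertexValue_le ha (mem_of_mem_erase hx) ?_
    rcases hxa with rfl | ⟨rfl, hxh⟩
    · exact rowValue_le_r_mul_of_heavy_lost hsub hmem hnot
    · exact p.values.rowValue_le_mul_of_light_lost hsub hxh hmem hnot p.one_le_r_mul_values_light
  · exact hB.entryWeight_le_mul_of_heavy_notMem ha hh p.one_le_r_mul_values_light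

theorem K_mul_entryWeight_le (ha : a ∈ X) (hh : D.heavy a ∈ (insert t X).erase a) :
    p.K * entryWeight (D.arcWeight p.K) t X a ≤ p.ρ ^ #(D.lightPreds X a) *
      (p.mean * p.values.vertexValue D (insert t X) a - 1) *
      (c * p.values.potential D (insert t X) (X.erase a)) := by
  have hlost : c * p.values.potential D ((insert t X).erase a) (X.erase a) ≤
      c * (p.ρ ^ #(D.lightPreds X a) * p.values.potential D (insert t X) (X.erase a)) :=
    mul_le_mul_of_nonneg_left (potential_erase_le_ρ_pow_mul (erase_subset _ _)
      (mem_insert_of_mem ha) (notMem_erase _ _)) hB.zero_le_const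
  have hK := p.K_pos.le
  have hmean := p.mean_pos.le
  rw [ArcValues.vertexValue]
  by_cases hl : D.light a ∈ (insert t X).erase a
  · rw [p.values.rowValue_of_mem_of_mem hh hl, show p.values.both = p.mean from rfl, ← pow_two,
      ← p.K_mul_mean, add_sub_cancel_right]
    calc p.K * entryWeight (D.arcWeight p.K) t X a ≤
          p.K * (c * p.values.potential D ((insert t X).erase a) X) := by
          gcongr
          exact hB.entryWeight_le_erase ha
      _ ≤ p.K * (p.mean * (c * p.values.potential D ((insert t X).erase a) (X.erase a))) := by
          rw [← p.values.vertexValue_mul_potential_erase ha, mul_left_comm c]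
          have hpot := mul_nonneg hB.zero_le_const
            (p.values.potential_nonneg (D := D) (S := (insert t X).erase a) (Y := X.erase a))
          gcongr
          exact p.values.vertexValue_le_both
      _ ≤ p.K * (p.mean * (c * (p.ρ ^ #(D.lightPreds X a) *
            p.values.potential D (insert t X) (X.erase a)))) := by gcongr
      _ = _ := by ring
  · rw [p.values.rowValue_of_mem_of_notMem hh hl, show p.values.heavy = p.ρ * p.mean from rfl,
      ← p.K_sq, add_sub_cancel_right]
    calc p.K * entryWeight (D.arcWeight p.K) t X a ≤
          p.K * (p.K * (c * p.values.potential D ((insert t X).erase a) (X.erase a))) := by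
          gcongr
          exact hB.entryWeight_le_of_light_notMem ha hl
      _ ≤ p.K * (p.K * (c * (p.ρ ^ #(D.lightPreds X a) *
            p.values.potential D (insert t X) (X.erase a)))) := by gcongr
      _ = _ := by ring

section LightTarget

variable (hT : D.IsLightTarget t X a) (ha : a ∈ X) (hb : b ∈ X) (hab : a ≠ b)
  (hm : #(D.lightPreds X a) = m + 1)

include hT ha hb hab hm

theorem entryWeight_le_of_rowValue_le {v : ℝ}
    (hv : p.values.rowValue D a (((insert t X).erase b).erase a) ≤ v) :
    entryWeight (D.arcWeight p.K) t X b ≤ p.ρ ^ m * (p.ρ + (m + 1) * (p.u * v)) *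
      (c * p.values.potential D (insert t X) (X.erase a)) := by
  have hS : ((insert t X).erase b).erase a ⊆ insert t X :=
    (erase_subset _ _).trans (erase_subset _ _)
  have h := hB.entryWeight_le_of_potential_le ha hb hab hT.heavy_ne hv
    (potential_erase_le_ρ_pow_mul hS (mem_insert_of_mem ha) (notMem_erase _ _))
    fun _ hx => potential_erase_erase_le_ρ_pow_mul hT ha hS (notMem_erase _ _) hm hx
  rw [hm] at h
  refine h.trans_eq ?_
  push_cast
  ring

theorem entryWeight_le_of_heavy_eq (hh : D.heavy a = b) :
    entryWeight (D.arcWeight p.K) t X b ≤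
      p.ρ ^ (m + 1) * (p.ρ + (m + 1) * (p.u * p.values.vertexValue D (insert t X) a)) *
        (c * p.values.potential D (insert t X) (X.erase a)) := by
  have hpot := mul_nonneg hB.zero_le_const
    (p.values.potential_nonneg (D := D) (S := insert t X) (Y := X.erase a))
  have hlost : p.ρ + p.u * p.values.rowValue D a (((insert t X).erase b).erase a) ≤
      p.ρ ^ 2 + p.ρ * (p.u * p.values.vertexValue D (insert t X) a) :=
    ρ_add_u_mul_rowValue_le (erase_subset_erase _ (erase_subset _ _)) hT.heavy_mem (by simp [hh])
  refine (entryWeight_le_of_rowValue_le hB hT ha hb hab hm le_rfl).trans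
    (mul_le_mul_of_nonneg_right ?_ hpot)
  rw [pow_succ, mul_assoc]
  refine mul_le_mul_of_nonneg_left ?_ (pow_pos p.ρ_pos m).le
  nlinarith [mul_nonneg (Nat.cast_nonneg (α := ℝ) m) (sub_nonneg.2 hlost),
    mul_nonneg (Nat.cast_nonneg (α := ℝ) m) (sub_nonneg.2 p.ρ_sq_le_ρ)]

theorem entryWeight_le_of_adj_of_light_ne (hz : z ∈ X.erase a) (hzb : z ≠ b) (hza : D.light z ≠ a)
    (hadj : D.Adj z b) :
    entryWeight (D.arcWeight p.K) t X b ≤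
      p.ρ ^ (m + 1) * (p.ρ + (m + 1) * (p.u * p.values.vertexValue D (insert t X) a)) *
        (c * p.values.potential D (insert t X) (X.erase a)) := by
  have hS : ((insert t X).erase b).erase a ⊆ insert t X :=
    (erase_subset _ _).trans (erase_subset _ _)
  have hzlost : p.values.vertexValue D (((insert t X).erase b).erase a) z ≤
      p.ρ * p.values.vertexValue D (insert t X) z :=
    p.isLossRate_ρ.vertexValue_le hS (mem_insert_of_mem hb) (by simp) hzb hadj
  have h := hB.entryWeight_le_of_potential_le ha hb hab hT.heavy_ne
    (p.values.rowValue_mono (erase_subset_erase _ (erase_subset _ _)))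
    (p.values.potential_le_mul_pow_mul hS TwoArcs.lightPreds_subset hz
      (fun h => hza (TwoArcs.mem_lightPreds.1 h).2)
      (fun _ hv => vertexValue_le_of_mem_lightPreds hS (mem_insert_of_mem ha) (notMem_erase _ _) hv)
      hzlost)
    fun _ hx => potential_erase_erase_le_mul_ρ_pow_mul hT ha hS (notMem_erase _ _) hm hz hza hzlost
      hx
  rw [hm] at h
  refine h.trans_eq ?_
  rw [ArcValues.vertexValue]
  push_cast
  ring

theorem entryWeight_le_of_heavy_eq_of_mem_lightPreds (hz : z ∈ D.lightPreds X a)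
    (hzb : D.heavy z = b) :
    entryWeight (D.arcWeight p.K) t X b ≤
      p.ρ ^ (m + 1) * (p.ρ + (m + 1) * (p.u * p.values.vertexValue D (insert t X) a)) *
        (c * p.values.potential D (insert t X) (X.erase a)) := by
  have hS : ((insert t X).erase b).erase a ⊆ insert t X :=
    (erase_subset _ _).trans (erase_subset _ _)
  have hhz : D.heavy z ∉ ((insert t X).erase b).erase a := by simp [hzb]
  have hA : p.values.rowValue D a (((insert t X).erase b).erase a) ≤
      p.values.vertexValue D (insert t X) a :=
    p.values.rowValue_mono (erase_subset_erase _ (erase_subset _ _))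
  have hpot := mul_nonneg hB.zero_le_const
    (p.values.potential_nonneg (D := D) (S := insert t X) (Y := X.erase a))
  have hsum := sum_potential_erase_erase_le (p := p) hT ha hS (notMem_erase _ _) hm hz hhz
  have hmerge := (hB.entryWeight_le_merge_lightPreds ha hb hab hT.heavy_ne).trans
    (mul_le_mul_of_nonneg_left (add_le_add
      (potential_erase_le_u_mul hT ha hS (notMem_erase _ _) hm hz hhz)
      (mul_le_mul hA hsum (sum_nonneg fun _ _ => p.values.potential_nonneg)
        p.values.vertexValue_nonneg)) hB.zero_le_const)
  set A := p.values.vertexValue D (insert t X) a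
  have hloss : p.u + p.u * A ≤ p.ρ ^ 2 + p.ρ * (p.u * A) := by
    nlinarith [p.le_ρ, p.ρ_le_one, p.u_lt, u_mul_vertexValue_le (p := p) (D := D)
      (S := insert t X) (v := a)]
  refine hmerge.trans ?_
  calc _ = p.ρ ^ m * (p.u + p.u * A + m * p.ρ * (p.u * A)) *
        (c * p.values.potential D (insert t X) (X.erase a)) := by ring
    _ ≤ p.ρ ^ m * (p.ρ ^ 2 + p.ρ * (p.u * A) + m * p.ρ * (p.u * A)) *
        (c * p.values.potential D (insert t X) (X.erase a)) := by
        have hρ := p.ρ_pos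
        gcongr
    _ = _ := by ring

theorem entryWeight_le_of_light_eq (hl : D.light a = b) :
    entryWeight (D.arcWeight p.K) t X b ≤ p.ρ ^ (m + 1) * (1 + (m + 1)) *
      (c * p.values.potential D (insert t X) (X.erase a)) := by
  refine (entryWeight_le_of_rowValue_le hB hT ha hb hab hm
    (p.values.rowValue_le_heavy (by simp [hl]))).trans_eq ?_
  rw [p.u_mul_values_heavy]
  ring

omit hB in
theorem potential_erase_erase_le_of_live
    (hlive : D.heavy b ∈ (insert t X).erase b ∨ D.light b ∈ (insert t X).erase b) :
    p.values.potential D (((insert t X).erase b).erase a) ((X.erase a).erase b) ≤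
      p.ρ ^ (m + 1) * (p.u * (1 + p.u)) * p.values.potential D (insert t X) (X.erase a) := by
  have hS : ((insert t X).erase b).erase a ⊆ insert t X :=
    (erase_subset _ _).trans (erase_subset _ _)
  have hρ := p.ρ_pos
  have hu := p.u_pos
  have hpot := p.values.potential_nonneg (D := D) (S := insert t X) (Y := X.erase a)
  by_cases hbpred : b ∈ D.lightPreds X a
  · calc _ ≤ p.ρ ^ m * (p.u * p.values.potential D (insert t X) (X.erase a)) * 1 :=
          (potential_erase_erase_le_ρ_pow_mul hT ha hS (notMem_erase _ _) hm hbpred).trans_eq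
            (mul_one _).symm
      _ ≤ p.ρ ^ m * (p.u * p.values.potential D (insert t X) (X.erase a)) *
            ((1 + p.u) * p.ρ) := by
          gcongr
          exact p.one_le_one_add_mul_ρ
      _ = _ := by ring
  · have hba : b ∈ X.erase a := mem_erase.2 ⟨hab.symm, hb⟩
    have hlost := p.values.potential_le_pow_mul hS
      (subset_erase.2 ⟨TwoArcs.lightPreds_subset, hbpred⟩)
      fun _ hv => vertexValue_le_of_mem_lightPreds hS (mem_insert_of_mem ha) (notMem_erase _ _) hv
    rw [hm] at hlost
    refine hlost.trans ?_
    rw [mul_assoc, ← p.values.vertexValue_mul_potential_erase hba, ← mul_assoc (p.u * _)]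
    gcongr
    exact le_mul_of_one_le_left p.values.potential_nonneg (one_le_mul_vertexValue hlive)

theorem entryWeight_self_le_of_light_eq (hl : D.light a = b)
    (hlive : D.heavy b ∈ (insert t X).erase b ∨ D.light b ∈ (insert t X).erase b)
    (hin : ∀ x ∈ X.erase b, x ≠ a → ¬ D.Adj x b) :
    entryWeight (D.arcWeight p.K) t X a ≤ p.ρ ^ (m + 1) * (p.ρ * (1 + p.u) + 1) *
      (c * p.values.potential D (insert t X) (X.erase a)) := by
  have hpow := potential_erase_le_ρ_pow_mul (p := p) (D := D) (X := X)
    ((erase_subset a _).trans (erase_subset b (insert t X))) (mem_insert_of_mem ha)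
    (notMem_erase _ _)
  rw [hm] at hpow
  have hvalue : p.values.rowValue D a (((insert t X).erase b).erase a) ≤ p.values.heavy :=
    p.values.rowValue_le_heavy (by simp [hl])
  refine ((hB.entryWeight_le_of_light_eq_of_forall_not_adj ha hb hab hl hin).trans
    (mul_le_mul_of_nonneg_left (add_le_add (mul_le_mul hvalue
      (potential_erase_erase_le_of_live hT ha hb hab hm hlive) p.values.potential_nonneg
      (zero_le_one.trans p.values.one_le_heavy)) hpow) hB.zero_le_const)).trans_eq ?_
  linear_combination p.ρ ^ (m + 1) * (1 + p.u) *
    (c * p.values.potential D (insert t X) (X.erase a)) * p.u_mul_values_heavy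

end LightTarget

end EntryWeight

section Pair

variable {p : MetallicParams} {c : ℝ} {D : TwoArcs V} {X : Finset V} {t a b : V}
  (hB : PathBoundBelow p.K c p.values t X)

include hB

theorem mul_add_entryWeight_le_of_le_r_mul
    (hr : entryWeight (D.arcWeight p.K) t X a ≤
      p.r * (c * p.values.potential D (insert t X) X)) :
    p.K * entryWeight (D.arcWeight p.K) t X a + entryWeight (D.arcWeight p.K) t X b ≤
      p.mean * (c * p.values.potential D (insert t X) X) :=
  calc _ ≤ p.K * (p.r * (c * p.values.potential D (insert t X) X)) +
        c * p.values.potential D (insert t X) X :=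
        add_le_add (mul_le_mul_of_nonneg_left hr p.K_pos.le) (hB.entryWeight_le b)
    _ = p.mean * (c * p.values.potential D (insert t X) X) := by
        rw [← p.K_mul_r]
        ring

theorem mul_add_entryWeight_le_of_le_potential_erase (ha : a ∈ X)
    (hh : D.heavy a ∈ (insert t X).erase a)
    (hle : entryWeight (D.arcWeight p.K) t X b ≤
      c * p.values.potential D (insert t X) (X.erase a)) :
    p.K * entryWeight (D.arcWeight p.K) t X a + entryWeight (D.arcWeight p.K) t X b ≤
      p.mean * (c * p.values.potential D (insert t X) X) := by
  have hpot := mul_nonneg hB.zero_le_const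
    (p.values.potential_nonneg (D := D) (S := insert t X) (Y := X.erase a))
  have hA : 0 ≤ p.mean * p.values.vertexValue D (insert t X) a - 1 :=
    sub_nonneg.2 (one_le_mul_of_one_le_of_one_le p.values.one_le_both p.values.one_le_vertexValue)
  have hρ : p.ρ ^ #(D.lightPreds X a) ≤ 1 := pow_le_one₀ p.ρ_pos.le p.ρ_le_one
  calc _ ≤ 1 * (p.mean * p.values.vertexValue D (insert t X) a - 1) *
          (c * p.values.potential D (insert t X) (X.erase a)) +
        c * p.values.potential D (insert t X) (X.erase a) :=
        add_le_add ((K_mul_entryWeight_le hB ha hh).trans (by gcongr)) hle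
    _ = p.mean * (c * p.values.potential D (insert t X) X) := by
        rw [← p.values.vertexValue_mul_potential_erase ha]
        ring

section LightTarget

variable (hT : D.IsLightTarget t X a) (ha : a ∈ X) (hb : b ∈ X) (hab : a ≠ b) {m : ℕ}
  (hm : #(D.lightPreds X a) = m + 1)

include hT ha hb hab hm

theorem mul_add_entryWeight_le_of_heavy_eq_or_exists_adj
    (hadj : D.heavy a = b ∨ ∃ z ∈ X.erase b, z ≠ a ∧ D.Adj z b) :
    p.K * entryWeight (D.arcWeight p.K) t X a + entryWeight (D.arcWeight p.K) t X b ≤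
      p.mean * (c * p.values.potential D (insert t X) X) := by
  have hpot := mul_nonneg hB.zero_le_const
    (p.values.potential_nonneg (D := D) (S := insert t X) (Y := X.erase a))
  have hE : entryWeight (D.arcWeight p.K) t X b ≤
      p.ρ ^ (m + 1) * (p.ρ + (m + 1) * (p.u * p.values.vertexValue D (insert t X) a)) *
        (c * p.values.potential D (insert t X) (X.erase a)) := by
    rcases hadj with hh | ⟨z, hz, hza, hzb⟩
    · exact entryWeight_le_of_heavy_eq hB hT ha hb hab hm hh
    · have hz' : z ∈ X.erase a := mem_erase.2 ⟨hza, mem_of_mem_erase hz⟩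
      by_cases hl : D.light z = a
      · exact entryWeight_le_of_heavy_eq_of_mem_lightPreds hB hT ha hb hab hm
          (TwoArcs.mem_lightPreds.2 ⟨hz', hl⟩) (hzb.resolve_right fun h => hab (hl.symm.trans h))
      · exact entryWeight_le_of_adj_of_light_ne hB hT ha hb hab hm hz' (ne_of_mem_erase hz) hl hzb
  have hK := K_mul_entryWeight_le hB ha hT.heavy_mem
  rw [hm] at hK
  calc _ ≤ _ := add_le_add hK hE
    _ = p.ρ ^ (m + 1) * (p.mean * p.values.vertexValue D (insert t X) a - 1 +
          (p.ρ + (m + 1) * (p.u * p.values.vertexValue D (insert t X) a))) *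
        (c * p.values.potential D (insert t X) (X.erase a)) := by ring
    _ ≤ p.mean * p.values.vertexValue D (insert t X) a *
        (c * p.values.potential D (insert t X) (X.erase a)) :=
        mul_le_mul_of_nonneg_right (ρ_pow_mul_vertexValue_add_le hT.heavy_mem m) hpot
    _ = p.mean * (c * p.values.potential D (insert t X) X) := by
        rw [← p.values.vertexValue_mul_potential_erase ha]
        ring

theorem mul_add_entryWeight_le_of_light_eq (hl : D.light a = b)
    (hlive : D.heavy b ∈ (insert t X).erase b ∨ D.light b ∈ (insert t X).erase b)
    (hin : ∀ x ∈ X.erase b, x ≠ a → ¬ D.Adj x b) :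
    p.K * entryWeight (D.arcWeight p.K) t X a + entryWeight (D.arcWeight p.K) t X b ≤
      p.mean * (c * p.values.potential D (insert t X) X) := by
  have hpot := mul_nonneg hB.zero_le_const
    (p.values.potential_nonneg (D := D) (S := insert t X) (Y := X.erase a))
  have hA : p.values.vertexValue D (insert t X) a = p.mean :=
    p.values.rowValue_of_mem_of_mem hT.heavy_mem
      (hl ▸ mem_erase.2 ⟨hab.symm, mem_insert_of_mem hb⟩)
  calc _ ≤ p.K * (p.ρ ^ (m + 1) * (p.ρ * (1 + p.u) + 1) *
          (c * p.values.potential D (insert t X) (X.erase a))) +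
        p.ρ ^ (m + 1) * (1 + (m + 1)) *
          (c * p.values.potential D (insert t X) (X.erase a)) :=
        add_le_add (mul_le_mul_of_nonneg_left
          (entryWeight_self_le_of_light_eq hB hT ha hb hab hm hl hlive hin) p.K_pos.le)
          (entryWeight_le_of_light_eq hB hT ha hb hab hm hl)
    _ = p.ρ ^ (m + 1) * (p.K * (p.ρ * (1 + p.u) + 1) + (1 + (m + 1))) *
        (c * p.values.potential D (insert t X) (X.erase a)) := by ring
    _ ≤ p.mean ^ 2 * (c * p.values.potential D (insert t X) (X.erase a)) :=
        mul_le_mul_of_nonneg_right (p.ρ_pow_mul_K_mul_add_le m) hpot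
    _ = p.mean * (c * p.values.potential D (insert t X) X) := by
        rw [← p.values.vertexValue_mul_potential_erase ha, hA]
        ring

end LightTarget

theorem mul_add_entryWeight_le_of_mem (ha : a ∈ X) (hb : b ∈ X) (hab : a ≠ b) :
    p.K * entryWeight (D.arcWeight p.K) t X a + entryWeight (D.arcWeight p.K) t X b ≤
      p.mean * (c * p.values.potential D (insert t X) X) := by
  by_cases hT : D.IsLightTarget t X a
  swap
  · exact mul_add_entryWeight_le_of_le_r_mul hB
      (entryWeight_le_r_mul_of_not_isLightTarget hB ha hT)
  by_cases hlive : D.heavy b ∈ (insert t X).erase b ∨ D.light b ∈ (insert t X).erase b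
  swap
  · obtain ⟨hh, hl⟩ := not_or.1 hlive
    refine mul_add_entryWeight_le_of_le_potential_erase hB ha hT.heavy_mem ?_
    rw [hB.entryWeight_eq_zero_of_notMem hb hh hl]
    exact mul_nonneg hB.zero_le_const p.values.potential_nonneg
  rcases hm : #(D.lightPreds X a) with _ | m
  · refine mul_add_entryWeight_le_of_le_potential_erase hB ha hT.heavy_mem
      (hB.entryWeight_le_of_forall_not_adj ha hb hab fun x hx hxa => ?_)
    exact notMem_empty x (card_eq_zero.1 hm ▸
      TwoArcs.mem_lightPreds.2 ⟨hx, hT.light_eq_of_adj hx hxa⟩)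
  by_cases hadj : D.heavy a = b ∨ ∃ z ∈ X.erase b, z ≠ a ∧ D.Adj z b
  · exact mul_add_entryWeight_le_of_heavy_eq_or_exists_adj hB hT ha hb hab hm hadj
  · obtain ⟨hh, hin⟩ := not_or.1 hadj
    have hin' : ∀ x ∈ X.erase b, x ≠ a → ¬ D.Adj x b := fun x hx hxa h => hin ⟨x, hx, hxa, h⟩
    by_cases hl : D.light a = b
    · exact mul_add_entryWeight_le_of_light_eq hB hT ha hb hab hm hl hlive hin'
    · refine mul_add_entryWeight_le_of_le_r_mul hB (hB.entryWeight_le_mul_of_forall_not_adj hb ha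
        hab.symm (fun x hx => ?_) (one_le_r_mul_vertexValue hlive))
      rcases eq_or_ne x a with rfl | hxa
      exacts [not_or.2 ⟨hh, hl⟩, hin' x hx hxa]

theorem mul_add_entryWeight_le (hcK : p.K ≤ (p.mean - 1) * c) (ha : a ∈ insert t X)
    (hb : b ∈ insert t X) (hab : a ≠ b) :
    p.K * entryWeight (D.arcWeight p.K) t X a + entryWeight (D.arcWeight p.K) t X b ≤
      p.mean * (c * p.values.potential D (insert t X) X) := by
  rcases mem_insert.1 ha with rfl | haX
  · have hle := hB.entryWeight_le (D := D) b
    have hmean : 0 ≤ (p.mean - 1) * c := p.K_pos.le.trans hcK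
    have hpot := le_mul_of_one_le_right hmean
      (p.values.one_le_potential (D := D) (S := insert a X) (Y := X))
    rw [entryWeight_self _ hB.notMem]
    linarith
  rcases mem_insert.1 hb with rfl | hbX
  · by_cases hh : D.heavy a ∈ (insert b X).erase a
    · refine mul_add_entryWeight_le_of_le_potential_erase hB haX hh ?_
      rw [entryWeight_self _ hB.notMem]
      exact one_le_mul_of_one_le_of_one_le hB.one_le p.values.one_le_potential
    · exact mul_add_entryWeight_le_of_le_r_mul hB
        (hB.entryWeight_le_mul_of_heavy_notMem haX hh p.one_le_r_mul_values_light)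
  · exact mul_add_entryWeight_le_of_mem hB haX hbX hab

end Pair

theorem pathBound (p : MetallicParams) {c : ℝ} (hc : 1 ≤ c) (hcK : p.K ≤ (p.mean - 1) * c) {t : V}
    {X : Finset V} (ht : t ∉ X) : PathBound p.K c p.values t X :=
  pathBound_of_forall_pair p.K_pos.le p.K_le_values_heavy hc
    (fun _ _ hB _ ha _ hb hab => mul_add_entryWeight_le hB hcK ha hb hab) ht

end MetallicParams

section Cycles

open Equiv Equiv.Perm

variable [Fintype V]

theorem support_mul_swap_apply {σ : Perm V} {r : V} (hr : σ (σ r) ≠ r) :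
    (σ * swap r (σ r)).support = σ.support.erase (σ r) := by
  rw [mul_swap_eq_swap_mul, support_swap_mul_eq σ (σ r) fun h => hr (σ.injective h),
    sdiff_singleton_eq_erase]

/-- The cycles through `r` with all other vertices in `X`, as cyclic permutations. -/
noncomputable def cyclesThrough (r : V) (X : Finset V) : Finset (Perm V) :=
  {σ | σ.IsCycle ∧ r ∈ σ.support ∧ σ.support ⊆ insert r X}

variable {r : V} {X : Finset V} {σ : Perm V}

theorem mem_cyclesThrough :
    σ ∈ cyclesThrough r X ↔ σ.IsCycle ∧ r ∈ σ.support ∧ σ.support ⊆ insert r X := by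
  simp [cyclesThrough]

theorem apply_mem_of_mem_cyclesThrough (hσ : σ ∈ cyclesThrough r X) : σ r ∈ X := by
  obtain ⟨-, hr, hX⟩ := mem_cyclesThrough.1 hσ
  exact (mem_insert.1 (hX (apply_mem_support.2 hr))).resolve_left (mem_support.1 hr)

theorem apply_apply_ne_of_mem_cyclesThrough (hσ : σ ∈ cyclesThrough r X)
    (hne : σ ≠ swap r (σ r)) : σ (σ r) ≠ r := fun h => by
  obtain ⟨hc, hr, -⟩ := mem_cyclesThrough.1 hσ
  exact hne (hc.eq_swap_of_apply_apply_eq_self (mem_support.1 hr) h)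

theorem mul_swap_mem_cyclesThrough (hσ : σ ∈ cyclesThrough r X) (hne : σ ≠ swap r (σ r)) :
    σ * swap r (σ r) ∈ cyclesThrough r (X.erase (σ r)) := by
  have hrr := apply_apply_ne_of_mem_cyclesThrough hσ hne
  obtain ⟨hc, hr, hX⟩ := mem_cyclesThrough.1 hσ
  have hσr := mem_support.1 hr
  rw [mem_cyclesThrough, support_mul_swap_apply hrr, ← erase_insert_of_ne hσr.symm]
  refine ⟨?_, mem_erase.2 ⟨hσr.symm, hr⟩, erase_subset_erase _ hX⟩
  rw [mul_swap_eq_swap_mul]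
  exact hc.swap_mul (fun h => hσr (σ.injective h)) fun h => hrr (σ.injective h)

section Semiring

variable {𝕜 : Type*} [CommSemiring 𝕜]

/-- The total weight of the cycles through `r` with all other vertices in `X`, where the arcs
leaving `r` have the weights `w` instead of `G r`. -/
noncomputable def cycleWeight (G : V → V → 𝕜) (w : V → 𝕜) (r : V) (X : Finset V) : 𝕜 :=
  ∑ σ ∈ cyclesThrough r X, w (σ r) * ∏ v ∈ σ.support.erase r, G v (σ v)

theorem prod_support_erase_swap (G : V → V → 𝕜) {y : V} (hry : r ≠ y) :
    ∏ v ∈ (swap r y).support.erase r, G v (swap r y v) = G y r := by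
  rw [support_swap hry, erase_insert (by simpa using hry), prod_singleton, swap_apply_right]

theorem prod_support_erase_eq_mul (G : V → V → 𝕜) (hrr : σ (σ r) ≠ r) :
    ∏ v ∈ σ.support.erase r, G v (σ v) =
      G (σ r) ((σ * swap r (σ r)) r) *
        ∏ v ∈ (σ * swap r (σ r)).support.erase r, G v ((σ * swap r (σ r)) v) := by
  have hσr : σ r ≠ r := fun h => hrr (by rw [h, h])
  rw [support_mul_swap_apply hrr, erase_right_comm, ← mul_prod_erase (σ.support.erase r) _
    (mem_erase.2 ⟨hσr, apply_mem_support.2 (mem_support.2 hσr)⟩), mul_apply, swap_apply_left]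
  congr 1
  refine prod_congr rfl fun v hv => ?_
  rw [mul_apply, swap_apply_of_ne_of_ne (ne_of_mem_erase (mem_of_mem_erase hv))
    (ne_of_mem_erase hv)]

end Semiring

section OrderedSemiring

variable {𝕜 : Type*} [CommSemiring 𝕜] [PartialOrder 𝕜] [IsOrderedRing 𝕜] {G : V → V → 𝕜}

theorem sum_cyclesThrough_apply_eq_le (hG : ∀ u v, 0 ≤ G u v) {y : V} (hry : r ≠ y) :
    ∑ σ ∈ cyclesThrough r X with σ r = y, ∏ v ∈ σ.support.erase r, G v (σ v) ≤
      G y r + cycleWeight G (G y) r (X.erase y) := by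
  set P : Perm V → 𝕜 := fun σ => ∏ v ∈ σ.support.erase r, G v (σ v)
  have hP : ∀ σ, 0 ≤ P σ := fun σ => prod_nonneg fun _ _ => hG _ _
  set F : Finset (Perm V) := {σ ∈ cyclesThrough r X | σ r = y}
  have shorten : ∀ σ ∈ F.erase (swap r y), σ * swap r y ∈ cyclesThrough r (X.erase y) ∧
      P σ = G y ((σ * swap r y) r) * P (σ * swap r y) := by
    intro σ hσ
    obtain ⟨hne, hσF⟩ := mem_erase.1 hσ
    obtain ⟨hσX, rfl⟩ := mem_filter.1 hσF
    exact ⟨mul_swap_mem_cyclesThrough hσX hne,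
      prod_support_erase_eq_mul G (apply_apply_ne_of_mem_cyclesThrough hσX hne)⟩
  calc ∑ σ ∈ F, P σ ≤ ∑ σ ∈ insert (swap r y) (F.erase (swap r y)), P σ :=
        sum_le_sum_of_subset_of_nonneg (subset_insert_iff.2 subset_rfl) fun σ _ _ => hP σ
    _ = G y r + ∑ σ ∈ F.erase (swap r y), G y ((σ * swap r y) r) * P (σ * swap r y) := by
        rw [sum_insert (notMem_erase _ _), sum_congr rfl fun σ hσ => (shorten σ hσ).2]
        exact congrArg (· + _) (prod_support_erase_swap G hry)
    _ = G y r + ∑ τ ∈ (F.erase (swap r y)).image (· * swap r y), G y (τ r) * P τ := by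
        rw [sum_image fun σ _ τ _ h => mul_right_cancel h]
    _ ≤ G y r + cycleWeight G (G y) r (X.erase y) :=
        add_le_add le_rfl (sum_le_sum_of_subset_of_nonneg
          (image_subset_iff.2 fun σ hσ => (shorten σ hσ).1)
          fun τ _ _ => mul_nonneg (hG _ _) (hP τ))

variable {w : V → 𝕜} (hG : ∀ u v, 0 ≤ G u v) (hw : ∀ v, 0 ≤ w v) (hr : r ∉ X)

include hG hw hr

theorem cycleWeight_le_sum :
    cycleWeight G w r X ≤ ∑ y ∈ X, w y * (G y r + cycleWeight G (G y) r (X.erase y)) := by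
  rw [cycleWeight, ← sum_fiberwise_of_maps_to fun σ hσ => apply_mem_of_mem_cyclesThrough hσ]
  refine sum_le_sum fun y hy => ?_
  calc ∑ σ ∈ cyclesThrough r X with σ r = y, w (σ r) * ∏ v ∈ σ.support.erase r, G v (σ v)
      = w y * ∑ σ ∈ cyclesThrough r X with σ r = y, ∏ v ∈ σ.support.erase r, G v (σ v) := by
        rw [mul_sum]
        exact sum_congr rfl fun σ hσ => by rw [(mem_filter.1 hσ).2]
    _ ≤ w y * (G y r + cycleWeight G (G y) r (X.erase y)) :=
        mul_le_mul_of_nonneg_left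
          (sum_cyclesThrough_apply_eq_le hG (ne_of_mem_of_not_mem hy hr).symm) (hw y)

theorem cycleWeight_le_sum_pathWeight :
    cycleWeight G w r X ≤ ∑ y ∈ X, w y * pathWeight G r (X.erase y) y := by
  induction X using Finset.strongInduction generalizing w with
  | H X ih =>
    refine (cycleWeight_le_sum hG hw hr).trans
      (sum_le_sum fun y hy => mul_le_mul_of_nonneg_left ?_ (hw y))
    rw [pathWeight_eq]
    exact add_le_add le_rfl
      (ih _ (erase_ssubset hy) (hG y) fun h => hr (mem_of_mem_erase h))

end OrderedSemiring

section LinearOrder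

variable {W : Type*} [Fintype W] [LinearOrder W] [LocallyFiniteOrderBot W]

theorem exists_mem_cyclesThrough_Iio {σ : Perm W} (hσ : σ.IsCycle) :
    ∃ r, σ ∈ cyclesThrough r (Iio r) := by
  have hne : σ.support.Nonempty := hσ.nonempty_support
  refine ⟨σ.support.max' hne, mem_cyclesThrough.2 ⟨hσ, max'_mem _ _, ?_⟩⟩
  rw [Iio_insert]
  exact fun v hv => mem_Iic.2 (le_max' _ v hv)

theorem pairwiseDisjoint_cyclesThrough_Iio :
    Set.univ.PairwiseDisjoint fun r : W => cyclesThrough r (Iio r) := by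
  have le_of_mem : ∀ {r r' : W} {σ : Perm W}, σ ∈ cyclesThrough r (Iio r) →
      σ ∈ cyclesThrough r' (Iio r') → r ≤ r' := fun {r r' σ} h h' => by
    have hr := (mem_cyclesThrough.1 h').2.2 (mem_cyclesThrough.1 h).2.1
    rwa [Iio_insert, mem_Iic] at hr
  exact fun r _ r' _ hrr' => disjoint_left.2 fun σ h h' =>
    hrr' ((le_of_mem h h').antisymm (le_of_mem h' h))

theorem sum_isCycle_le {𝕜 : Type*} [CommSemiring 𝕜] [PartialOrder 𝕜] [IsOrderedRing 𝕜]
    {G : W → W → 𝕜} (hG : ∀ u v, 0 ≤ G u v) :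
    ∑ σ : Perm W with σ.IsCycle, ∏ v ∈ σ.support, G v (σ v) ≤
      ∑ r, cycleWeight G (G r) r (Iio r) := by
  have hP : ∀ σ : Perm W, 0 ≤ ∏ v ∈ σ.support, G v (σ v) :=
    fun σ => prod_nonneg fun _ _ => hG _ _
  have hsub : ({σ | σ.IsCycle} : Finset (Perm W)) ⊆
      univ.biUnion fun r => cyclesThrough r (Iio r) := fun σ hσ => by
    obtain ⟨r, hr⟩ := exists_mem_cyclesThrough_Iio (mem_filter.1 hσ).2
    exact mem_biUnion.2 ⟨r, mem_univ r, hr⟩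
  calc ∑ σ : Perm W with σ.IsCycle, ∏ v ∈ σ.support, G v (σ v)
      ≤ ∑ σ ∈ univ.biUnion fun r : W => cyclesThrough r (Iio r), ∏ v ∈ σ.support, G v (σ v) :=
        sum_le_sum_of_subset_of_nonneg hsub fun σ _ _ => hP σ
    _ = ∑ r, ∑ σ ∈ cyclesThrough r (Iio r), ∏ v ∈ σ.support, G v (σ v) :=
        sum_biUnion (pairwiseDisjoint_cyclesThrough_Iio.subset (Set.subset_univ _))
    _ = ∑ r, cycleWeight G (G r) r (Iio r) :=
        sum_congr rfl fun r _ => sum_congr rfl fun σ hσ =>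
          (mul_prod_erase _ (fun v => G v (σ v)) (mem_cyclesThrough.1 hσ).2.1).symm

end LinearOrder

end Cycles

section DegreeBound

open scoped goldenRatio

theorem alphaK_pos (k : ℕ) : 0 < alphaK k := by
  have h : |(k : ℝ) - 1| < √(((k : ℝ) - 1) ^ 2 + 4) :=
    Real.lt_sqrt_of_sq_lt (by rw [sq_abs]; linarith)
  have := neg_abs_le ((k : ℝ) - 1)
  unfold alphaK
  linarith

theorem alphaK_sq (k : ℕ) : alphaK k ^ 2 = ((k : ℝ) - 1) * alphaK k + 1 := by
  have := Real.sq_sqrt (show 0 ≤ ((k : ℝ) - 1) ^ 2 + 4 by positivity)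
  unfold alphaK
  linear_combination this / 4

theorem alphaK_two : alphaK 2 = φ := by
  norm_num [alphaK, Real.goldenRatio]

variable {k : ℕ}

theorem one_lt_alphaK (hk : 2 ≤ k) : 1 < alphaK k := by
  have hk' : (2 : ℝ) ≤ k := mod_cast hk
  nlinarith [alphaK_pos k, alphaK_sq k, hk']

theorem seven_thirds_le_alphaK (hk : 3 ≤ k) : 7 / 3 ≤ alphaK k := by
  have hk' : (3 : ℝ) ≤ k := mod_cast hk
  nlinarith [alphaK_pos k, alphaK_sq k]

theorem alphaK_sub_inv (k : ℕ) : alphaK k - (alphaK k)⁻¹ = k - 1 := by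
  have := (alphaK_pos k).ne'
  field_simp
  linear_combination alphaK_sq k

/-- The metallic parameters with mean `alphaK k`. -/
noncomputable def MetallicParams.ofOutdegree (k : ℕ) (hk : 3 ≤ k) : MetallicParams where
  u := (alphaK k)⁻¹
  u_pos := inv_pos.2 (alphaK_pos k)
  u_sq_add_le := by
    have hk' : (3 : ℝ) ≤ k := mod_cast hk
    have hu := inv_pos.2 (alphaK_pos k)
    nlinarith [alphaK_sub_inv k, mul_inv_cancel₀ (alphaK_pos k).ne']

theorem MetallicParams.ofOutdegree_mean (hk : 3 ≤ k) : (ofOutdegree k hk).mean = alphaK k :=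
  inv_inv _

theorem MetallicParams.ofOutdegree_K (hk : 3 ≤ k) : (ofOutdegree k hk).K = k - 1 := by
  rw [K, ofOutdegree_mean, ofOutdegree, alphaK_sub_inv]

/-- The factor in the bound for path weights in digraphs of outdegree `k`. For `k = 2` the bound
`5 * alphaK k ^ n` for cycles leaves no room for the factor `2`. -/
noncomputable def pathConst (k : ℕ) : ℝ := if k = 2 then 1 else 2

theorem one_le_pathConst (k : ℕ) : 1 ≤ pathConst k := by
  unfold pathConst
  split_ifs <;> norm_num

theorem mul_pathConst_le (hk : 2 ≤ k) : k * pathConst k ≤ 5 * (alphaK k - 1) := by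
  rcases hk.eq_or_lt with rfl | hk3
  · rw [pathConst, if_pos rfl, alphaK_two]
    push_cast
    nlinarith [Real.goldenRatio_sq, Real.goldenRatio_pos]
  · rw [pathConst, if_neg (by lia)]
    linarith [seven_thirds_le_alphaK hk3, inv_pos.2 (alphaK_pos k), alphaK_sub_inv k]

theorem pathWeight_le_pathConst_mul_pow [Fintype V] [Nontrivial V] (hk : 2 ≤ k) {G : V → V → ℝ}
    (hG : ∀ u v, 0 ≤ G u v) (hGK : ∀ u v, G u v ≤ k - 1) (hsum : ∀ u, ∑ v, G u v ≤ k) {t s : V}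
    {X : Finset V} (ht : t ∉ X) (hs : s ∉ X) (hst : s ≠ t) :
    pathWeight G t X s ≤ pathConst k * alphaK k ^ (#X + 1) := by
  rcases hk.eq_or_lt with rfl | hk3
  · rw [pathConst, if_pos rfl, alphaK_two]
    exact pathWeight_le_of_pathBound zero_le_one zero_le_one hG
      (fun u v => (hGK u v).trans (by norm_num)) (fun u => (hsum u).trans (by norm_num)) hs hst
      (pathBound_golden ht)
  · rw [pathConst, if_neg (by lia)]
    set p := MetallicParams.ofOutdegree k hk3
    have hK : p.K = k - 1 := MetallicParams.ofOutdegree_K hk3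
    have hmean : p.mean = alphaK k := MetallicParams.ofOutdegree_mean hk3
    have hKmean : p.K ≤ (p.mean - 1) * 2 := by
      rw [MetallicParams.K]
      linarith [p.two_add_u_le_mean, p.u_pos]
    rw [← hmean]
    exact pathWeight_le_of_pathBound p.K_pos.le zero_le_two hG
      (fun u v => (hGK u v).trans_eq hK.symm) (fun u => (hsum u).trans_eq (by rw [hK]; ring))
      hs hst (p.pathBound one_le_two hKmean ht)

/-- The arc weights of the digraph with multiplicities `G` after its self-loops are removed. -/
noncomputable def looplessWeight (G : V → V → ℕ) (u v : V) : ℝ :=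
  if u = v then 0 else G u v

variable {G : V → V → ℕ}

theorem looplessWeight_of_ne {u v : V} (h : u ≠ v) : looplessWeight G u v = G u v :=
  if_neg h

theorem looplessWeight_nonneg (u v : V) : 0 ≤ looplessWeight G u v := by
  unfold looplessWeight
  split_ifs <;> simp

theorem looplessWeight_le (u v : V) : looplessWeight G u v ≤ G u v := by
  unfold looplessWeight
  split_ifs <;> simp

theorem looplessWeight_le_sub_one (hk : 1 ≤ k) (hGK : ∀ u v, u ≠ v → G u v ≤ k - 1) (u v : V) :
    looplessWeight G u v ≤ k - 1 := by
  rw [← Nat.cast_pred hk]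
  rcases eq_or_ne u v with rfl | h
  · simp [looplessWeight]
  · rw [looplessWeight_of_ne h]
    exact mod_cast hGK u v h

section Outdegree

variable [Fintype V] (hk : 2 ≤ k) (hG : ∀ v, ∑ u, G v u ≤ k)
  (hGK : ∀ u v, u ≠ v → G u v ≤ k - 1)

include hk hG hGK

theorem add_cycleWeight_le {r : V} {X : Finset V} (hr : r ∉ X) :
    G r r + cycleWeight (looplessWeight G) (looplessWeight G r) r X ≤
      k * pathConst k * alphaK k ^ #X := by
  have hGr : ∀ v, ∑ u, (G v u : ℝ) ≤ k := fun v => mod_cast hG v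
  have hpath : ∀ y ∈ X, pathWeight (looplessWeight G) r (X.erase y) y ≤
      pathConst k * alphaK k ^ #X := fun y hy => by
    have hyr := ne_of_mem_of_not_mem hy hr
    have : Nontrivial V := ⟨y, r, hyr⟩
    rw [← card_erase_add_one hy]
    exact pathWeight_le_pathConst_mul_pow hk looplessWeight_nonneg
      (looplessWeight_le_sub_one (one_le_two.trans hk) hGK)
      (fun u => (sum_le_sum fun v _ => looplessWeight_le u v).trans (hGr u))
      (fun h => hr (mem_of_mem_erase h)) (notMem_erase _ _) hyr
  have hone : 1 ≤ pathConst k * alphaK k ^ #X :=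
    one_le_mul_of_one_le_of_one_le (one_le_pathConst k) (one_le_pow₀ (one_lt_alphaK hk).le)
  calc (G r r : ℝ) + cycleWeight (looplessWeight G) (looplessWeight G r) r X
      ≤ G r r * (pathConst k * alphaK k ^ #X) +
        ∑ y ∈ X, G r y * (pathConst k * alphaK k ^ #X) := by
        refine add_le_add (le_mul_of_one_le_right (Nat.cast_nonneg _) hone)
          ((cycleWeight_le_sum_pathWeight looplessWeight_nonneg (looplessWeight_nonneg r) hr).trans
            (sum_le_sum fun y hy => ?_))
        exact mul_le_mul (looplessWeight_le r y) (hpath y hy)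
          (pathWeight_nonneg looplessWeight_nonneg _ _ _) (Nat.cast_nonneg _)
    _ = (∑ y ∈ insert r X, (G r y : ℝ)) * (pathConst k * alphaK k ^ #X) := by
        rw [sum_insert hr, add_mul, sum_mul]
    _ ≤ k * (pathConst k * alphaK k ^ #X) := by
        refine mul_le_mul_of_nonneg_right (le_trans ?_ (hGr r)) (zero_le_one.trans hone)
        exact sum_le_sum_of_subset_of_nonneg (subset_univ _) fun _ _ _ => Nat.cast_nonneg _
    _ = k * pathConst k * alphaK k ^ #X := (mul_assoc _ _ _).symm

end Outdegree

theorem cycleCount_eq {n : ℕ} (G : Fin n → Fin n → ℕ) :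
    (cycleCount n G : ℝ) = ∑ v, (G v v : ℝ) +
      ∑ σ : Equiv.Perm (Fin n) with σ.IsCycle, ∏ v ∈ σ.support, looplessWeight G v (σ v) := by
  rw [cycleCount, ← sum_filter]
  push_cast
  congr 1
  refine sum_congr rfl fun σ _ => prod_congr rfl fun v hv => ?_
  rw [looplessWeight_of_ne (Equiv.Perm.mem_support.1 hv).symm]

theorem cycleCount_le {n : ℕ} {G : Fin n → Fin n → ℕ} (hk : 2 ≤ k) (hG : ∀ v, ∑ u, G v u ≤ k)
    (hGK : ∀ u v, u ≠ v → G u v ≤ k - 1) : (cycleCount n G : ℝ) ≤ 5 * alphaK k ^ n := by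
  calc (cycleCount n G : ℝ)
      ≤ ∑ r : Fin n,
          (G r r + cycleWeight (looplessWeight G) (looplessWeight G r) r (Iio r)) := by
        rw [cycleCount_eq, sum_add_distrib]
        exact add_le_add le_rfl (sum_isCycle_le looplessWeight_nonneg)
    _ ≤ ∑ r : Fin n, k * pathConst k * alphaK k ^ (r : ℕ) := sum_le_sum fun r _ => by
        simpa only [Fin.card_Iio] using add_cycleWeight_le hk hG hGK (notMem_Iio_self (b := r))
    _ = k * pathConst k * ∑ i ∈ range n, alphaK k ^ i := by
        rw [← mul_sum, Fin.sum_univ_eq_sum_range fun i => alphaK k ^ i]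
    _ ≤ 5 * (alphaK k - 1) * ∑ i ∈ range n, alphaK k ^ i :=
        mul_le_mul_of_nonneg_right (mul_pathConst_le hk)
          (sum_nonneg fun _ _ => pow_nonneg (alphaK_pos k).le _)
    _ = 5 * (alphaK k ^ n - 1) := by rw [mul_assoc, mul_geom_sum]
    _ ≤ 5 * alphaK k ^ n := by simp [mul_sub]

end DegreeBound

end PathWeight

theorem stmt_5 (n k : ℕ) (hk : 2 ≤ k) :
    (Fk k n : ℝ) ≤ 5 * alphaK k ^ n ∧
    ∀ G : Fin n → Fin n → ℕ,
      (∀ v : Fin n, (∑ u, G v u) = k) →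
      (∀ u v : Fin n, u ≠ v → G u v ≤ k - 1) →
      (cycleCount n G : ℝ) ≤ 5 * alphaK k ^ n := by
  have bound : ∀ G : Fin n → Fin n → ℕ, (∀ v, ∑ u, G v u = k) →
      (∀ u v, u ≠ v → G u v ≤ k - 1) → (cycleCount n G : ℝ) ≤ 5 * alphaK k ^ n :=
    fun G hG hGK => PathWeight.cycleCount_le hk (fun v => (hG v).le) hGK
  have hα : 0 ≤ 5 * alphaK k ^ n :=
    mul_nonneg (by norm_num) (pow_nonneg (PathWeight.alphaK_pos k).le n)
  refine ⟨(Nat.cast_le.2 (csSup_le' ?_)).trans (Nat.floor_le hα), bound⟩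
  rintro _ ⟨G, hG, hGK, rfl⟩
  exact Nat.le_floor (bound G hG hGK)
end
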